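/- Let f, g ∈ ℤ[x] be nonconstant polynomials such that g ∘ f^n is separable over ℚ for all n ≥ 0, and let a₀ ∈ ℤ. For each N ≥ 0, let L_N be the splitting field of g ∘ f^N over ℚ and let r_N = #{σ ∈ Gal(L_N/ℚ) : σ fixes at least one root of g ∘ f^N in L_N} / #Gal(L_N/ℚ). Then the upper natural density of the set of primes dividing some nonzero term of the sequence (g(f^n(a₀)))_{n≥0} is at most liminf_{N→∞} r_N; that is, limsup_{x→∞} #{p ∈ P(g,f,a₀) : p ≤ x}/π(x) ≤ liminf_{N→∞} r_N, where π(x) is the number of primes up to x. -/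

import Mathlib

open Polynomial Filter

/-- The `n`-th iterate of a polynomial, with `f^0 = X`. -/
noncomputable def polyIter (f : Polynomial ℤ) : ℕ → Polynomial ℤ
  | 0 => X
  | n + 1 => f.comp (polyIter f n)

open scoped Classical in
/-- The number of elements of `S` that are at most `x`. -/
noncomputable def primeCount (S : Set ℕ) (x : ℕ) : ℕ :=
  ((Finset.range (x + 1)).filter (fun p => p ∈ S)).card

/-- `P(g, f, a₀)`: the set of primes dividing some nonzero term of the sequence
`(g(f^n(a₀)))_{n ≥ 0}`. -/
def transOrbitPrimes (g f : Polynomial ℤ) (a₀ : ℤ) : Set ℕ :=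
  {p | p.Prime ∧ ∃ n : ℕ, Polynomial.eval ((fun x => Polynomial.eval x f)^[n] a₀) g ≠ 0 ∧
    (p : ℤ) ∣ Polynomial.eval ((fun x => Polynomial.eval x f)^[n] a₀) g}

/-- The splitting field `L_N` of `g ∘ f^N` over `ℚ`. -/
noncomputable def splittingFieldIter (f g : Polynomial ℤ) (N : ℕ) : Type :=
  ((g.comp (polyIter f N)).map (Int.castRingHom ℚ)).SplittingField

noncomputable instance (f g : Polynomial ℤ) (N : ℕ) : Field (splittingFieldIter f g N) :=
  inferInstanceAs (Field ((g.comp (polyIter f N)).map (Int.castRingHom ℚ)).SplittingField)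

noncomputable instance (f g : Polynomial ℤ) (N : ℕ) : Algebra ℚ (splittingFieldIter f g N) :=
  inferInstanceAs (Algebra ℚ ((g.comp (polyIter f N)).map (Int.castRingHom ℚ)).SplittingField)

/-- `r_N`: the proportion of elements of `Gal(L_N/ℚ)` fixing at least one root of
`g ∘ f^N` in `L_N`. -/
noncomputable def fixedRootProportion (f g : Polynomial ℤ) (N : ℕ) : ℝ :=
  (Nat.card {σ : splittingFieldIter f g N ≃ₐ[ℚ] splittingFieldIter f g N //
      ∃ α : splittingFieldIter f g N,
        Polynomial.aeval α ((g.comp (polyIter f N)).map (Int.castRingHom ℚ)) = 0 ∧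
          σ α = α} : ℝ) /
    (Nat.card (splittingFieldIter f g N ≃ₐ[ℚ] splittingFieldIter f g N) : ℝ)

/-!
If a prime `p` divides `g (f^n (a₀))` with `n ≥ N`, then `f^(n - N) (a₀)` is a root modulo `p` of
`h = g ∘ f^N`. Away from finitely many `p`, a Frobenius element at `p` then fixes a root of `h` in
the splitting field `L_N`. The terms with `n < N` that do not vanish have only finitely many prime
divisors, so Frobenius's density theorem bounds the upper density by `r_N`, for every `N`.

The set of automorphisms fixing a root is stable under conjugation and under passing to another
generator of the same cyclic group, so that, by Möbius inversion over the subgroups, it suffices to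
treat the class functions induced from the indicators of subgroups `H`. The mean value of such a
function over the primes is the mean number of primes of degree one above `p` in the fixed field `K`
of `H`, which is `1` by the prime ideal theorem. The latter follows from the Wiener–Ikehara theorem:
counting lattice points gives the number of ideals of `K` of norm at most `x` with a power-saving
error, hence a continuation of `(s - 1) * ζ_K s` to a neighbourhood of `re s = 1`, as in Beurling's
theory of generalised primes.
-/

section FejerKernel

open MeasureTheory Topology

/-- The Fejér kernel of the real line, `(sin (v / 2) / (v / 2)) ^ 2`: the Fourier transform of the
triangle function `t ↦ 1 - |t|` on `[-1, 1]`. -/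
noncomputable def fejerKernel (v : ℝ) : ℝ := Real.sinc (v / 2) ^ 2

theorem fejerKernel_zero : fejerKernel 0 = 1 := by simp [fejerKernel]

theorem fejerKernel_nonneg (v : ℝ) : 0 ≤ fejerKernel v := sq_nonneg _

theorem sq_mul_fejerKernel (v : ℝ) : v ^ 2 * fejerKernel v = 2 * (1 - Real.cos v) := by
  have hsinc : v * Real.sinc (v / 2) = 2 * Real.sin (v / 2) := by
    rcases eq_or_ne v 0 with rfl | hv
    · simp
    · rw [Real.sinc_of_ne_zero (by positivity)]
      field_simp
  have hcos : Real.cos v = 1 - 2 * Real.sin (v / 2) ^ 2 := by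
    rw [Real.sin_sq_eq_half_sub, mul_div_cancel₀ v two_ne_zero]
    ring
  rw [fejerKernel, ← mul_pow, hsinc, hcos]
  ring

@[fun_prop]
theorem continuous_fejerKernel : Continuous fejerKernel :=
  (Real.continuous_sinc.comp (continuous_id.div_const 2)).pow 2

theorem fejerKernel_le (v : ℝ) : fejerKernel v ≤ 5 * (1 + v ^ 2)⁻¹ := by
  have hone : fejerKernel v ≤ 1 := by
    rw [fejerKernel, ← sq_abs]
    exact pow_le_one₀ (abs_nonneg _) (abs_le.2 ⟨Real.neg_one_le_sinc _, Real.sinc_le_one _⟩)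
  rw [← div_eq_mul_inv, le_div_iff₀ (by positivity)]
  linarith [sq_mul_fejerKernel v, Real.neg_one_le_cos v]

theorem integrable_fejerKernel : Integrable fejerKernel := by
  refine (integrable_inv_one_add_sq.const_mul 5).mono'
    continuous_fejerKernel.aestronglyMeasurable (.of_forall fun v ↦ ?_)
  rw [Real.norm_of_nonneg (fejerKernel_nonneg v)]
  exact fejerKernel_le v

theorem integral_fejerKernel_pos : 0 < ∫ v, fejerKernel v :=
  integral_pos_of_integrable_nonneg_nonzero continuous_fejerKernel integrable_fejerKernel
    fejerKernel_nonneg (x := 0) (by simp [fejerKernel_zero])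

theorem integrable_fejerKernel_mul_sub {l : ℝ} (hl : l ≠ 0) (x : ℝ) :
    Integrable fun u ↦ fejerKernel (l * (x - u)) :=
  (integrable_fejerKernel.comp_mul_left' hl).comp_sub_left x

theorem integral_one_sub_mul_cos (v : ℝ) :
    ∫ t in (0 : ℝ)..1, (1 - t) * Real.cos (t * v) = fejerKernel v / 2 := by
  rcases eq_or_ne v 0 with rfl | hv
  · have hone : ∫ t in (0 : ℝ)..1, (1 - t) = 1 / 2 := by
      rw [intervalIntegral.integral_sub (by simp) (by simp)]
      norm_num
    simpa [fejerKernel_zero] using hone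
  rw [intervalIntegral.integral_eq_sub_of_hasDerivAt
    (f := fun t ↦ (1 - t) * Real.sin (t * v) / v - Real.cos (t * v) / v ^ 2)]
  · field_simp
    simp only [sub_self, zero_mul, zero_sub, Real.cos_zero, Real.sin_zero, mul_zero]
    linarith [sq_mul_fejerKernel v]
  · intro t _
    have hlin : HasDerivAt (fun t : ℝ ↦ t * v) v t := by
      simpa using (hasDerivAt_id t).mul_const v
    refine (((((hasDerivAt_id' t).const_sub 1).mul hlin.sin).div_const v).sub
      (hlin.cos.div_const (v ^ 2))).congr_deriv ?_
    field_simp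
    ring
  · exact Continuous.intervalIntegrable (by fun_prop) _ _

theorem integral_triangle_mul_exp (v : ℝ) :
    ∫ t in (-1 : ℝ)..1, ((1 - |t| : ℝ) : ℂ) * Complex.exp (Complex.I * t * v) =
      fejerKernel v := by
  have hint (a b : ℝ) : IntervalIntegrable
      (fun t : ℝ ↦ ((1 - |t| : ℝ) : ℂ) * Complex.exp (Complex.I * t * v)) volume a b :=
    Continuous.intervalIntegrable (by fun_prop) _ _
  rw [← intervalIntegral.integral_add_adjacent_intervals (hint (-1) 0) (hint 0 1)]
  have hneg := intervalIntegral.integral_comp_neg (a := 0) (b := 1)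
    (fun t : ℝ ↦ ((1 - |t| : ℝ) : ℂ) * Complex.exp (Complex.I * t * v))
  rw [neg_zero] at hneg
  rw [← hneg, ← intervalIntegral.integral_add (Continuous.intervalIntegrable (by fun_prop) _ _)
    (hint 0 1)]
  calc _ = ∫ t in (0 : ℝ)..1, ((2 * ((1 - t) * Real.cos (t * v)) : ℝ) : ℂ) := by
        refine intervalIntegral.integral_congr fun t ht ↦ ?_
        rw [Set.uIcc_of_le zero_le_one] at ht
        simp only [abs_neg, abs_of_nonneg ht.1]
        push_cast [Complex.cos]
        ring_nf
    _ = fejerKernel v := by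
        rw [intervalIntegral.integral_ofReal, intervalIntegral.integral_const_mul,
          integral_one_sub_mul_cos, mul_div_cancel₀ _ two_ne_zero]

end FejerKernel

section FejerMeans

open MeasureTheory Topology

variable {A : ℝ → ℂ} {B : ℝ} {G : ℂ → ℂ}

theorem norm_triangle_le_one {t : ℝ} (ht : t ∈ Set.Ioc (-1 : ℝ) 1) : ‖((1 - |t| : ℝ) : ℂ)‖ ≤ 1 := by
  have : |t| ≤ 1 := abs_le.2 ⟨ht.1.le, ht.2⟩
  rw [Complex.norm_real, Real.norm_eq_abs, abs_le]
  constructor <;> linarith [abs_nonneg t]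

theorem norm_exp_I_mul (l t x : ℝ) : ‖Complex.exp (Complex.I * (l * t) * x)‖ = 1 := by
  rw [Complex.norm_exp]
  simp

theorem norm_exp_neg_mul (ε u : ℝ) : ‖Complex.exp (-ε * u)‖ = Real.exp (-(ε * u)) := by
  rw [Complex.norm_exp]
  simp

theorem integrable_triangle_mul_laplace (hA : Measurable A) (hB : ∀ u, ‖A u‖ ≤ B) {ε : ℝ}
    (hε : 0 < ε) (l x : ℝ) :
    Integrable (Function.uncurry fun t u : ℝ ↦
        ((1 - |t| : ℝ) : ℂ) * Complex.exp (Complex.I * (l * t) * x) *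
          (A u * Complex.exp (-(ε + Complex.I * (l * t)) * u)))
      ((volume.restrict (Set.Ioc (-1 : ℝ) 1)).prod (volume.restrict (Set.Ioi (0 : ℝ)))) := by
  have hdom : Integrable (fun z : ℝ × ℝ ↦ (1 : ℝ) * (B * Real.exp (-ε * z.2)))
      ((volume.restrict (Set.Ioc (-1 : ℝ) 1)).prod (volume.restrict (Set.Ioi (0 : ℝ)))) :=
    Integrable.mul_prod (f := fun _ ↦ (1 : ℝ)) (g := fun u ↦ B * Real.exp (-ε * u)) (by simp)
      ((exp_neg_integrableOn_Ioi 0 hε).const_mul _)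
  refine hdom.mono' (Measurable.aestronglyMeasurable (by unfold Function.uncurry; fun_prop)) ?_
  rw [Measure.prod_restrict]
  refine (ae_restrict_iff' (measurableSet_Ioc.prod measurableSet_Ioi)).2 (.of_forall ?_)
  rintro ⟨t, u⟩ ⟨ht, -⟩
  have hexp : ‖Complex.exp (-(ε + Complex.I * (l * t)) * u)‖ = Real.exp (-ε * u) := by
    rw [Complex.norm_exp]
    simp
  simp only [Function.uncurry_apply_pair, norm_mul, norm_exp_I_mul, mul_one, hexp]
  exact mul_le_mul (norm_triangle_le_one ht)
    (mul_le_mul_of_nonneg_right (hB u) (Real.exp_nonneg _)) (by positivity) zero_le_one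

-- Fubini, the inner integral over `t` being the Fourier transform of the triangle function.
theorem integral_triangle_mul_laplace (hA : Measurable A) (hB : ∀ u, ‖A u‖ ≤ B)
    (hG : ∀ z : ℂ, 0 < z.re → ∫ u in Set.Ioi (0 : ℝ), A u * Complex.exp (-z * u) = G z)
    {ε : ℝ} (hε : 0 < ε) (l x : ℝ) :
    ∫ t in (-1 : ℝ)..1, ((1 - |t| : ℝ) : ℂ) * G (ε + Complex.I * (l * t)) *
        Complex.exp (Complex.I * (l * t) * x) =
      ∫ u in Set.Ioi (0 : ℝ), A u * (Complex.exp (-ε * u) * fejerKernel (l * (x - u))) := by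
  have hlaplace (t : ℝ) : ((1 - |t| : ℝ) : ℂ) * G (ε + Complex.I * (l * t)) *
        Complex.exp (Complex.I * (l * t) * x) =
      ∫ u in Set.Ioi (0 : ℝ), ((1 - |t| : ℝ) : ℂ) * Complex.exp (Complex.I * (l * t) * x) *
        (A u * Complex.exp (-(ε + Complex.I * (l * t)) * u)) := by
    rw [integral_const_mul, hG _ (by simpa using hε)]
    ring
  simp_rw [intervalIntegral.integral_of_le (by norm_num : (-1 : ℝ) ≤ 1), hlaplace]
  rw [integral_integral_swap (integrable_triangle_mul_laplace hA hB hε l x)]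
  refine integral_congr_ae (.of_forall fun u ↦ ?_)
  beta_reduce
  rw [← integral_triangle_mul_exp, intervalIntegral.integral_of_le (by norm_num),
    ← integral_const_mul, ← integral_const_mul]
  refine integral_congr_ae (.of_forall fun t ↦ ?_)
  have hexp : Complex.exp (Complex.I * (l * t) * x) * Complex.exp (-(ε + Complex.I * (l * t)) * u) =
      Complex.exp (-ε * u) * Complex.exp (Complex.I * t * ((l * (x - u) : ℝ) : ℂ)) := by
    rw [← Complex.exp_add, ← Complex.exp_add]
    push_cast
    ring_nf
  linear_combination ((1 - |t| : ℝ) : ℂ) * A u * hexp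

theorem tendsto_integral_triangle_mul_nhdsGT_zero (hGc : ContinuousOn G {z | 0 ≤ z.re}) (l x : ℝ) :
    Tendsto (fun ε : ℝ ↦ ∫ t in (-1 : ℝ)..1, ((1 - |t| : ℝ) : ℂ) *
        G (ε + Complex.I * (l * t)) * Complex.exp (Complex.I * (l * t) * x)) (𝓝[>] 0)
      (𝓝 (∫ t in (-1 : ℝ)..1, ((1 - |t| : ℝ) : ℂ) * G (Complex.I * (l * t)) *
        Complex.exp (Complex.I * (l * t) * x))) := by
  have hcont : ContinuousOn (fun q : ℝ × ℝ ↦ G (q.1 + Complex.I * (l * q.2)))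
      (Set.Icc 0 1 ×ˢ Set.Icc (-1) 1) :=
    hGc.comp (by fun_prop) fun q hq ↦ by simpa using hq.1.1
  obtain ⟨C, hC⟩ := (isCompact_Icc.prod isCompact_Icc).exists_bound_of_continuousOn hcont
  have hunit : ∀ᶠ ε : ℝ in 𝓝[>] 0, ε ∈ Set.Ioc (0 : ℝ) 1 := Ioc_mem_nhdsGT zero_lt_one
  refine intervalIntegral.tendsto_integral_filter_of_dominated_convergence (fun _ ↦ C)
    ?_ ?_ (by simp) ?_
  · filter_upwards [hunit] with ε hε
    have : ContinuousOn (fun t : ℝ ↦ G (ε + Complex.I * (l * t))) (Set.uIoc (-1) 1) :=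
      hGc.comp (by fun_prop) fun t _ ↦ by simpa using hε.1.le
    exact ((ContinuousOn.mul (by fun_prop) this).mul (by fun_prop)).aestronglyMeasurable
      measurableSet_uIoc
  · filter_upwards [hunit] with ε hε
    refine .of_forall fun t ht ↦ ?_
    rw [Set.uIoc_of_le (by norm_num)] at ht
    rw [norm_mul, norm_mul, norm_exp_I_mul, mul_one, ← one_mul C]
    exact mul_le_mul (norm_triangle_le_one ht)
      (hC (ε, t) ⟨⟨hε.1.le, hε.2⟩, ⟨ht.1.le, ht.2⟩⟩) (norm_nonneg _) zero_le_one
  · refine .of_forall fun t _ ↦ .mul_const _ (.const_mul _ ?_)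
    have hG0 : ContinuousWithinAt G {z | 0 ≤ z.re} (Complex.I * (l * t)) := hGc _ (by simp)
    refine hG0.tendsto.comp (tendsto_nhdsWithin_iff.2 ⟨?_, ?_⟩)
    · have : Continuous fun ε : ℝ ↦ (ε : ℂ) + Complex.I * (l * t) := by fun_prop
      simpa using (this.tendsto 0).mono_left nhdsWithin_le_nhds
    · filter_upwards [hunit] with ε hε
      simpa using hε.1.le

theorem tendsto_integral_exp_mul_fejerKernel (hA : Measurable A) (hB : ∀ u, ‖A u‖ ≤ B) {l : ℝ}
    (hl : l ≠ 0) (x : ℝ) :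
    Tendsto (fun ε : ℝ ↦ ∫ u in Set.Ioi (0 : ℝ),
        A u * (Complex.exp (-ε * u) * fejerKernel (l * (x - u)))) (𝓝[>] 0)
      (𝓝 (∫ u in Set.Ioi (0 : ℝ), A u * fejerKernel (l * (x - u)))) := by
  refine tendsto_integral_filter_of_dominated_convergence
    (fun u ↦ B * fejerKernel (l * (x - u))) (.of_forall fun ε ↦ ?_) ?_
    ((integrable_fejerKernel_mul_sub hl x).const_mul _).integrableOn (.of_forall fun u ↦ ?_)
  · exact Measurable.aestronglyMeasurable (by fun_prop)
  · filter_upwards [self_mem_nhdsWithin] with ε (hε : 0 < ε)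
    refine (ae_restrict_iff' measurableSet_Ioi).2 (.of_forall fun u (hu : 0 < u) ↦ ?_)
    rw [norm_mul, norm_mul, norm_exp_neg_mul, Complex.norm_real,
      Real.norm_of_nonneg (fejerKernel_nonneg _)]
    have hexp : Real.exp (-(ε * u)) ≤ 1 := Real.exp_le_one_iff.2 (by nlinarith)
    exact mul_le_mul (hB u) (mul_le_of_le_one_left (fejerKernel_nonneg _) hexp)
      (mul_nonneg (Real.exp_nonneg _) (fejerKernel_nonneg _)) ((norm_nonneg _).trans (hB u))
  · have : Continuous fun ε : ℝ ↦ A u * (Complex.exp (-ε * u) * fejerKernel (l * (x - u))) := by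
      fun_prop
    simpa using (this.tendsto 0).mono_left nhdsWithin_le_nhds

theorem integral_triangle_mul_boundary (hA : Measurable A) (hB : ∀ u, ‖A u‖ ≤ B)
    (hGc : ContinuousOn G {z | 0 ≤ z.re})
    (hG : ∀ z : ℂ, 0 < z.re → ∫ u in Set.Ioi (0 : ℝ), A u * Complex.exp (-z * u) = G z)
    {l : ℝ} (hl : l ≠ 0) (x : ℝ) :
    ∫ t in (-1 : ℝ)..1, ((1 - |t| : ℝ) : ℂ) * G (Complex.I * (l * t)) *
        Complex.exp (Complex.I * (l * t) * x) =
      ∫ u in Set.Ioi (0 : ℝ), A u * fejerKernel (l * (x - u)) := by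
  refine tendsto_nhds_unique (tendsto_integral_triangle_mul_nhdsGT_zero hGc l x)
    ((tendsto_integral_exp_mul_fejerKernel hA hB hl x).congr' ?_)
  filter_upwards [self_mem_nhdsWithin] with ε hε
  exact (integral_triangle_mul_laplace hA hB hG hε l x).symm

theorem tendsto_intervalIntegral_mul_exp_atTop (F : ℝ → ℂ) {a b l : ℝ} (hab : a ≤ b) (hl : 0 < l) :
    Tendsto (fun x : ℝ ↦ ∫ t in a..b, F t * Complex.exp (Complex.I * (l * t) * x))
      atTop (𝓝 0) := by
  have hscale : Tendsto (fun x : ℝ ↦ -(l / (2 * Real.pi)) * x) atTop (cocompact ℝ) :=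
    (tendsto_id.const_mul_atTop_of_neg (neg_lt_zero.2 (by positivity))).mono_right
      atBot_le_cocompact
  refine ((Real.tendsto_integral_exp_smul_cocompact
    (Set.indicator (Set.Ioc a b) F)).comp hscale).congr fun x ↦ ?_
  rw [intervalIntegral.integral_of_le hab, ← integral_indicator measurableSet_Ioc]
  refine integral_congr_ae (.of_forall fun t ↦ ?_)
  by_cases ht : t ∈ Set.Ioc a b
  · simp only [Set.indicator_of_mem ht, Circle.smul_def, Real.fourierChar_apply, smul_eq_mul]
    rw [mul_comm]
    congr 2
    push_cast
    field_simp
  · simp only [Set.indicator_of_notMem ht, smul_zero]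

theorem tendsto_integral_mul_fejerKernel_of_laplace (hA : Measurable A) (hB : ∀ u, ‖A u‖ ≤ B)
    (hGc : ContinuousOn G {z | 0 ≤ z.re})
    (hG : ∀ z : ℂ, 0 < z.re → ∫ u in Set.Ioi (0 : ℝ), A u * Complex.exp (-z * u) = G z)
    {l : ℝ} (hl : 0 < l) :
    Tendsto (fun x : ℝ ↦ ∫ u in Set.Ioi (0 : ℝ), A u * fejerKernel (l * (x - u)))
      atTop (𝓝 0) :=
  (tendsto_intervalIntegral_mul_exp_atTop (fun t ↦ ((1 - |t| : ℝ) : ℂ) * G (Complex.I * (l * t)))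
    (by norm_num) hl).congr fun x ↦ integral_triangle_mul_boundary hA hB hGc hG hl.ne' x

end FejerMeans

section LaplaceTauberian

open MeasureTheory Topology

variable {S : ℝ → ℝ} {M l r x : ℝ}

/-- The Fejér mean of `S`, extended by `0` to the negative half-line, at scale `1 / l` about `x`. -/
noncomputable def fejerMean (l : ℝ) (S : ℝ → ℝ) (x : ℝ) : ℝ :=
  l * ∫ u in Set.Ioi (0 : ℝ), S u * fejerKernel (l * (x - u))

theorem tendsto_fejerMean_one (hl : 0 < l) :
    Tendsto (fejerMean l fun _ ↦ 1) atTop (𝓝 (∫ v, fejerKernel v)) := by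
  have h := ((aecover_Iio (μ := volume) tendsto_id).integral_tendsto_of_countably_generated
    (integrable_fejerKernel.comp_mul_left' hl.ne')).const_mul l
  rw [Measure.integral_comp_mul_left, abs_of_pos (inv_pos.2 hl), smul_eq_mul,
    mul_inv_cancel_left₀ hl.ne'] at h
  refine h.congr fun x ↦ ?_
  rw [fejerMean, ← integral_indicator measurableSet_Ioi, ← integral_indicator measurableSet_Iio,
    ← integral_sub_left_eq_self _ volume x]
  simp [Set.indicator]

theorem integrable_mul_fejerKernel (hS : Measurable S) (h0 : ∀ u, 0 ≤ S u) (hM : ∀ u, S u ≤ M)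
    (hl : l ≠ 0) (x : ℝ) : Integrable fun u ↦ S u * fejerKernel (l * (x - u)) := by
  refine ((integrable_fejerKernel_mul_sub hl x).const_mul M).mono'
    (Measurable.aestronglyMeasurable (by fun_prop)) (.of_forall fun u ↦ ?_)
  rw [Real.norm_of_nonneg (mul_nonneg (h0 u) (fejerKernel_nonneg _))]
  exact mul_le_mul_of_nonneg_right (hM u) (fejerKernel_nonneg _)

theorem tendsto_fejerMean (hS : Measurable S) (h0 : ∀ u, 0 ≤ S u) (hM : ∀ u, S u ≤ M)
    {G : ℂ → ℂ} (hGc : ContinuousOn G {z | 0 ≤ z.re})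
    (hG : ∀ z : ℂ, 0 < z.re →
      ∫ u in Set.Ioi (0 : ℝ), ((S u - 1 : ℝ) : ℂ) * Complex.exp (-z * u) = G z)
    (hl : 0 < l) :
    Tendsto (fejerMean l S) atTop (𝓝 (∫ v, fejerKernel v)) := by
  have hbound (u : ℝ) : ‖((S u - 1 : ℝ) : ℂ)‖ ≤ M + 1 := by
    rw [Complex.norm_real, Real.norm_eq_abs, abs_le]
    constructor <;> linarith [h0 u, hM u]
  have hcomplex := tendsto_integral_mul_fejerKernel_of_laplace (by fun_prop) hbound hGc hG hl
  have hreal : Tendsto (fun x ↦ ∫ u in Set.Ioi (0 : ℝ), (S u - 1) * fejerKernel (l * (x - u)))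
      atTop (𝓝 0) := by
    refine ((Complex.continuous_re.tendsto 0).comp hcomplex).congr fun x ↦ ?_
    simp only [Function.comp_apply, ← Complex.ofReal_mul]
    rw [integral_complex_ofReal, Complex.ofReal_re]
  have hsum := (hreal.const_mul l).add (tendsto_fejerMean_one hl)
  rw [mul_zero, zero_add] at hsum
  refine hsum.congr fun x ↦ ?_
  have hk : IntegrableOn (fun u ↦ 1 * fejerKernel (l * (x - u))) (Set.Ioi 0) :=
    ((integrable_fejerKernel_mul_sub hl.ne' x).const_mul 1).integrableOn
  have hSk := (integrable_mul_fejerKernel hS h0 hM hl.ne' x).integrableOn (s := Set.Ioi 0)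
  simp only [fejerMean, sub_mul]
  rw [integral_sub hSk hk]
  ring

theorem mul_integral_fejerKernel_window (l r y : ℝ) :
    l * ∫ u in (y - r)..(y + r), fejerKernel (l * (y - u)) =
      ∫ v in (-(l * r))..(l * r), fejerKernel v := by
  simp_rw [mul_sub]
  rw [intervalIntegral.mul_integral_comp_sub_mul]
  congr 1 <;> ring

theorem mul_exp_neg_le (hmono : Monotone fun u ↦ Real.exp u * S u) (h0 : 0 ≤ S x) {u d : ℝ}
    (hxu : x ≤ u) (hd : u ≤ x + d) : S x * Real.exp (-d) ≤ S u := by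
  have hle : Real.exp x * S x ≤ Real.exp u * S u := hmono hxu
  calc S x * Real.exp (-d) ≤ S x * Real.exp (x - u) := by gcongr; linarith
    _ = Real.exp (-u) * (Real.exp x * S x) := by rw [sub_eq_neg_add, Real.exp_add]; ring
    _ ≤ Real.exp (-u) * (Real.exp u * S u) := by gcongr
    _ = S u := by rw [← mul_assoc, ← Real.exp_add, neg_add_cancel, Real.exp_zero, one_mul]

theorem mul_window_le_fejerMean (hS : Measurable S) (h0 : ∀ u, 0 ≤ S u) (hM : ∀ u, S u ≤ M)
    (hmono : Monotone fun u ↦ Real.exp u * S u) (hl : 0 < l) (hr : 0 ≤ r) (hx : 0 ≤ x) :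
    S x * Real.exp (-(2 * r)) * ∫ v in (-(l * r))..(l * r), fejerKernel v ≤
      fejerMean l S (x + r) := by
  have hSk := integrable_mul_fejerKernel hS h0 hM hl.ne' (x + r)
  rw [← mul_integral_fejerKernel_window l r (x + r), mul_left_comm, fejerMean, add_sub_cancel_right,
    intervalIntegral.integral_of_le (by linarith), ← integral_const_mul]
  refine mul_le_mul_of_nonneg_left ?_ hl.le
  calc _ ≤ ∫ u in Set.Ioc x (x + r + r), S u * fejerKernel (l * (x + r - u)) := by
        refine setIntegral_mono_on
          ((integrable_fejerKernel_mul_sub hl.ne' _).const_mul _).integrableOn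
          hSk.integrableOn measurableSet_Ioc fun u hu ↦
            mul_le_mul_of_nonneg_right ?_ (fejerKernel_nonneg _)
        exact mul_exp_neg_le hmono (h0 x) hu.1.le (by linarith [hu.2])
    _ ≤ _ := setIntegral_mono_set hSk.integrableOn
        (.of_forall fun u ↦ mul_nonneg (h0 u) (fejerKernel_nonneg _))
        (.of_forall fun u hu ↦ hx.trans_lt hu.1)

theorem fejerMean_le (hS : Measurable S) (h0 : ∀ u, 0 ≤ S u) (hM : ∀ u, S u ≤ M)
    (hmono : Monotone fun u ↦ Real.exp u * S u) (hl : 0 < l) (hr : 0 ≤ r) (x : ℝ) :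
    fejerMean l S (x - r) ≤ S x * Real.exp (2 * r) * (∫ v, fejerKernel v) +
      M * ((∫ v, fejerKernel v) - ∫ v in (-(l * r))..(l * r), fejerKernel v) := by
  set k : ℝ → ℝ := fun u ↦ fejerKernel (l * (x - r - u)) with hk
  set W : Set ℝ := Set.Ioc (x - r - r) (x - r + r)
  have hk0 (u : ℝ) : 0 ≤ k u := fejerKernel_nonneg _
  have hkint : Integrable k := integrable_fejerKernel_mul_sub hl.ne' _
  have hwindow : ∫ v in (-(l * r))..(l * r), fejerKernel v = l * ∫ u in W, k u := by
    rw [← mul_integral_fejerKernel_window l r (x - r),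
      intervalIntegral.integral_of_le (by linarith)]
  have htotal : ∫ v, fejerKernel v = l * ∫ u, k u := by
    rw [hk, integral_sub_left_eq_self (fun u ↦ fejerKernel (l * u)) volume (x - r),
      Measure.integral_comp_mul_left, abs_of_pos (inv_pos.2 hl), smul_eq_mul,
      mul_inv_cancel_left₀ hl.ne']
  have hsplit (u : ℝ) : S u * k u ≤
      S x * Real.exp (2 * r) * k u + Wᶜ.indicator (fun u ↦ M * k u) u := by
    by_cases hu : u ∈ W
    · rw [Set.indicator_of_notMem (by simpa using hu), add_zero]
      refine mul_le_mul_of_nonneg_right ?_ (hk0 u)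
      have hle := mul_exp_neg_le (x := u) (u := x) (d := 2 * r) hmono (h0 u) (by linarith [hu.2])
        (by linarith [hu.1])
      rwa [Real.exp_neg, ← div_eq_mul_inv, div_le_iff₀ (Real.exp_pos _)] at hle
    · rw [Set.indicator_of_mem hu]
      have := mul_le_mul_of_nonneg_right (hM u) (hk0 u)
      have := mul_nonneg (mul_nonneg (h0 x) (Real.exp_nonneg (2 * r))) (hk0 u)
      linarith
  have hSk : Integrable fun u ↦ S u * k u := integrable_mul_fejerKernel hS h0 hM hl.ne' _
  have htail : Integrable (Wᶜ.indicator fun u ↦ M * k u) :=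
    (hkint.const_mul M).indicator measurableSet_Ioc.compl
  calc fejerMean l S (x - r) ≤ l * ∫ u, S u * k u :=
        mul_le_mul_of_nonneg_left (setIntegral_le_integral hSk
          (.of_forall fun u ↦ mul_nonneg (h0 u) (hk0 u))) hl.le
    _ ≤ l * ∫ u, (S x * Real.exp (2 * r) * k u + Wᶜ.indicator (fun u ↦ M * k u) u) :=
        mul_le_mul_of_nonneg_left
          (integral_mono hSk ((hkint.const_mul _).add htail) hsplit) hl.le
    _ = _ := by
        rw [integral_add (hkint.const_mul _) htail, integral_const_mul,
          integral_indicator measurableSet_Ioc.compl, integral_const_mul,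
          setIntegral_compl measurableSet_Ioc hkint, hwindow, htotal]
        ring

theorem eventually_lt_of_tendsto_fejerMean (hS : Measurable S) (h0 : ∀ u, 0 ≤ S u)
    (hM : ∀ u, S u ≤ M) (hmono : Monotone fun u ↦ Real.exp u * S u)
    (hmean : ∀ l, 0 < l → Tendsto (fejerMean l S) atTop (𝓝 (∫ v, fejerKernel v))) {b : ℝ}
    (hb : 1 < b) : ∀ᶠ x in atTop, S x < b := by
  set I := ∫ v, fejerKernel v
  have hI : 0 < I := integral_fejerKernel_pos
  set J : ℝ → ℝ := fun R ↦ ∫ v in (-R)..R, fejerKernel v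
  have hJ : Tendsto (fun r : ℝ ↦ J r⁻¹) (𝓝[>] 0) (𝓝 I) :=
    (intervalIntegral_tendsto_integral integrable_fejerKernel tendsto_neg_atTop_atBot
      tendsto_id).comp tendsto_inv_nhdsGT_zero
  have hid : Tendsto (fun r : ℝ ↦ r) (𝓝[>] 0) (𝓝 0) := tendsto_id.mono_left nhdsWithin_le_nhds
  have hlim : Tendsto (fun r : ℝ ↦ b * Real.exp (-(2 * r)) * J r⁻¹ - r) (𝓝[>] 0) (𝓝 (b * I)) := by
    simpa using (((hid.const_mul 2).neg.rexp.const_mul b).mul hJ).sub hid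
  obtain ⟨r, ⟨hr1, hJpos⟩, hr0 : 0 < r⟩ := (((hlim.eventually_const_lt
    (lt_mul_of_one_lt_left hI hb)).and (hJ.eventually_const_lt hI)).and self_mem_nhdsWithin).exists
  -- the scale `l = r⁻²` makes the window `[-r, r]` cover most of the mass of the kernel
  have hlr : (r ^ 2)⁻¹ * r = r⁻¹ := by field_simp
  have hev := ((hmean (r ^ 2)⁻¹ (by positivity)).comp
    (tendsto_atTop_add_const_right _ r tendsto_id)).eventually_lt_const (lt_add_of_pos_right I hr0)
  filter_upwards [hev, eventually_ge_atTop 0] with x hx hx0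
  have hle := mul_window_le_fejerMean hS h0 hM hmono (l := (r ^ 2)⁻¹) (by positivity) hr0.le hx0
  rw [hlr] at hle
  have hmul : S x * (Real.exp (-(2 * r)) * J r⁻¹) < b * (Real.exp (-(2 * r)) * J r⁻¹) := by
    simp only [Function.comp_apply, id] at hx
    linarith
  exact lt_of_mul_lt_mul_right hmul (by positivity)

theorem eventually_gt_of_tendsto_fejerMean (hS : Measurable S) (h0 : ∀ u, 0 ≤ S u)
    (hM : ∀ u, S u ≤ M) (hmono : Monotone fun u ↦ Real.exp u * S u)
    (hmean : ∀ l, 0 < l → Tendsto (fejerMean l S) atTop (𝓝 (∫ v, fejerKernel v))) {a : ℝ}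
    (ha : a < 1) : ∀ᶠ x in atTop, a < S x := by
  set I := ∫ v, fejerKernel v
  have hI : 0 < I := integral_fejerKernel_pos
  set J : ℝ → ℝ := fun R ↦ ∫ v in (-R)..R, fejerKernel v
  have hJ : Tendsto (fun r : ℝ ↦ J r⁻¹) (𝓝[>] 0) (𝓝 I) :=
    (intervalIntegral_tendsto_integral integrable_fejerKernel tendsto_neg_atTop_atBot
      tendsto_id).comp tendsto_inv_nhdsGT_zero
  have hid : Tendsto (fun r : ℝ ↦ r) (𝓝[>] 0) (𝓝 0) := tendsto_id.mono_left nhdsWithin_le_nhds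
  have hlim : Tendsto (fun r : ℝ ↦ a * Real.exp (2 * r) * I + M * (I - J r⁻¹) + r) (𝓝[>] 0)
      (𝓝 (a * I)) := by
    simpa using ((((hid.const_mul 2).rexp.const_mul a).mul_const I).add
      ((hJ.const_sub I).const_mul M)).add hid
  obtain ⟨r, hr1, hr0 : 0 < r⟩ := ((hlim.eventually_lt_const
    (mul_lt_of_lt_one_left hI ha)).and self_mem_nhdsWithin).exists
  have hlr : (r ^ 2)⁻¹ * r = r⁻¹ := by field_simp
  have hev := ((hmean (r ^ 2)⁻¹ (by positivity)).comp
    (tendsto_atTop_add_const_right _ (-r) tendsto_id)).eventually_const_lt (sub_lt_self I hr0)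
  filter_upwards [hev] with x hx
  have hle := fejerMean_le hS h0 hM hmono (l := (r ^ 2)⁻¹) (by positivity) hr0.le x
  rw [hlr] at hle
  have hmul : a * (Real.exp (2 * r) * I) < S x * (Real.exp (2 * r) * I) := by
    simp only [Function.comp_apply, id, ← sub_eq_add_neg] at hx
    linarith
  exact lt_of_mul_lt_mul_right hmul (by positivity)

theorem tendsto_one_of_laplace_continuousOn (hS : Measurable S) (h0 : ∀ u, 0 ≤ S u)
    (hM : ∀ u, S u ≤ M) (hmono : Monotone fun u ↦ Real.exp u * S u)
    {G : ℂ → ℂ} (hGc : ContinuousOn G {z | 0 ≤ z.re})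
    (hG : ∀ z : ℂ, 0 < z.re →
      ∫ u in Set.Ioi (0 : ℝ), ((S u - 1 : ℝ) : ℂ) * Complex.exp (-z * u) = G z) :
    Tendsto S atTop (𝓝 1) :=
  have hmean (l : ℝ) (hl : 0 < l) := tendsto_fejerMean hS h0 hM hGc hG hl
  tendsto_order.2 ⟨fun _ ↦ eventually_gt_of_tendsto_fejerMean hS h0 hM hmono hmean,
    fun _ ↦ eventually_lt_of_tendsto_fejerMean hS h0 hM hmono hmean⟩

end LaplaceTauberian

section WienerIkehara

open MeasureTheory Topology

variable {a : ℕ → ℝ} {C : ℝ}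

/-- The summatory function of `a` in the exponential variable, normalised as
`S(u) = e^{-u} ∑_{k ≤ e^u} a k`: the function to which the Laplace transform Tauberian theorem is
applied. -/
noncomputable def expMean (a : ℕ → ℝ) (u : ℝ) : ℝ :=
  (∑ k ∈ Finset.Icc 1 ⌊Real.exp u⌋₊, a k) * Real.exp (-u)

theorem monotone_sum_Icc_one (ha : ∀ n, 0 ≤ a n) : Monotone fun N ↦ ∑ k ∈ Finset.Icc 1 N, a k :=
  fun _ _ h ↦ Finset.sum_le_sum_of_subset_of_nonneg (Finset.Icc_subset_Icc_right h) fun k _ _ ↦ ha k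

theorem exp_mul_expMean (a : ℕ → ℝ) (u : ℝ) :
    Real.exp u * expMean a u = ∑ k ∈ Finset.Icc 1 ⌊Real.exp u⌋₊, a k := by
  rw [expMean, mul_left_comm, ← Real.exp_add, add_neg_cancel, Real.exp_zero, mul_one]

theorem monotone_exp_mul_expMean (ha : ∀ n, 0 ≤ a n) :
    Monotone fun u ↦ Real.exp u * expMean a u := by
  simp_rw [exp_mul_expMean]
  exact (monotone_sum_Icc_one ha).comp (Nat.floor_mono.comp Real.exp_monotone)

theorem measurable_expMean (a : ℕ → ℝ) : Measurable (expMean a) :=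
  ((measurable_from_nat (f := fun N ↦ ∑ k ∈ Finset.Icc 1 N, a k)).comp
    (Nat.measurable_floor.comp Real.measurable_exp)).mul (by fun_prop)

theorem expMean_nonneg (ha : ∀ n, 0 ≤ a n) (u : ℝ) : 0 ≤ expMean a u :=
  mul_nonneg (Finset.sum_nonneg fun k _ ↦ ha k) (Real.exp_nonneg _)

theorem expMean_le (ha : ∀ n, 0 ≤ a n) (hC : ∀ N : ℕ, ∑ k ∈ Finset.Icc 1 N, a k ≤ C * N) (u : ℝ) :
    expMean a u ≤ C := by
  have hC0 : 0 ≤ C := by simpa using (Finset.sum_nonneg fun k _ ↦ ha k).trans (hC 1)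
  refine le_of_mul_le_mul_left ?_ (Real.exp_pos u)
  calc _ = _ := exp_mul_expMean a u
    _ ≤ C * ⌊Real.exp u⌋₊ := hC _
    _ ≤ C * Real.exp u := mul_le_mul_of_nonneg_left (Nat.floor_le (Real.exp_nonneg _)) hC0
    _ = _ := mul_comm _ _

theorem one_add_ne_zero_of_re_nonneg {z : ℂ} (hz : 0 ≤ z.re) : 1 + z ≠ 0 := fun h ↦ by
  have := congrArg Complex.re h
  simp only [Complex.add_re, Complex.one_re, Complex.zero_re] at this
  linarith

theorem image_exp_Ioi_zero : Real.exp '' Set.Ioi 0 = Set.Ioi 1 := by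
  ext t
  exact ⟨fun ⟨u, hu, h⟩ ↦ h ▸ Real.one_lt_exp_iff.2 hu,
    fun ht ↦ ⟨Real.log t, Real.log_pos ht, Real.exp_log (one_pos.trans ht)⟩⟩

theorem isBigO_sum_of_sum_le (ha : ∀ n, 0 ≤ a n)
    (hC : ∀ N : ℕ, ∑ k ∈ Finset.Icc 1 N, a k ≤ C * N) :
    (fun N ↦ ∑ k ∈ Finset.Icc 1 N, a k) =O[atTop] fun N : ℕ ↦ (N : ℝ) ^ (1 : ℝ) := by
  refine .of_bound C (.of_forall fun N ↦ ?_)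
  rw [Real.norm_of_nonneg (Finset.sum_nonneg fun k _ ↦ ha k), Real.rpow_one, Real.norm_natCast]
  exact hC N

theorem LSeries_one_add_eq_mul_integral_expMean (ha : ∀ n, 0 ≤ a n)
    (hC : ∀ N : ℕ, ∑ k ∈ Finset.Icc 1 N, a k ≤ C * N) {z : ℂ} (hz : 0 < z.re) :
    LSeries (fun n ↦ (a n : ℂ)) (1 + z) =
      (1 + z) * ∫ u in Set.Ioi (0 : ℝ), (expMean a u : ℂ) * Complex.exp (-z * u) := by
  rw [LSeries_eq_mul_integral_of_nonneg a zero_le_one (by simpa using hz)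
    (isBigO_sum_of_sum_le ha hC) ha,
    ← image_exp_Ioi_zero, integral_image_eq_integral_abs_deriv_smul measurableSet_Ioi
      (fun x _ ↦ (Real.hasDerivAt_exp x).hasDerivWithinAt) Real.exp_injective.injOn]
  congr 2 with u
  rw [Complex.cpow_def_of_ne_zero (Complex.ofReal_ne_zero.2 (Real.exp_pos u).ne'),
    ← Complex.ofReal_log (Real.exp_nonneg u), Real.log_exp, abs_of_pos (Real.exp_pos u),
    Complex.real_smul, expMean, Complex.ofReal_mul, Complex.ofReal_sum, mul_left_comm, mul_assoc]
  congr 1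
  rw [Complex.ofReal_exp, Complex.ofReal_exp, ← Complex.exp_add, ← Complex.exp_add]
  push_cast
  ring_nf

theorem integral_expMean_sub_one_mul_exp (ha : ∀ n, 0 ≤ a n)
    (hC : ∀ N : ℕ, ∑ k ∈ Finset.Icc 1 N, a k ≤ C * N) {z : ℂ} (hz : 0 < z.re) :
    ∫ u in Set.Ioi (0 : ℝ), ((expMean a u - 1 : ℝ) : ℂ) * Complex.exp (-z * u) =
      LSeries (fun n ↦ (a n : ℂ)) (1 + z) / (1 + z) - 1 / z := by
  have hz' : (-z).re < 0 := by simpa using hz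
  have h1z := one_add_ne_zero_of_re_nonneg hz.le
  have hexp : IntegrableOn (fun u : ℝ ↦ Complex.exp (-z * u)) (Set.Ioi 0) :=
    integrableOn_exp_mul_complex_Ioi hz' 0
  have hmean : IntegrableOn (fun u : ℝ ↦ (expMean a u : ℂ) * Complex.exp (-z * u)) (Set.Ioi 0) := by
    refine hexp.bdd_mul (c := C) ?_ (.of_forall fun u ↦ ?_)
    · exact (Complex.measurable_ofReal.comp (measurable_expMean a)).aestronglyMeasurable
    · rw [Complex.norm_real, Real.norm_of_nonneg (expMean_nonneg ha u)]
      exact expMean_le ha hC u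
  simp_rw [Complex.ofReal_sub, Complex.ofReal_one, sub_mul, one_mul]
  rw [integral_sub hmean hexp, integral_exp_mul_complex_Ioi hz',
    LSeries_one_add_eq_mul_integral_expMean ha hC hz, mul_div_cancel_left₀ _ h1z]
  simp

/-- The **Wiener–Ikehara theorem**, for sequences satisfying a Chebyshev upper bound. -/
theorem tendsto_sum_div_of_LSeries_continuousOn (ha : ∀ n, 0 ≤ a n)
    (hC : ∀ N : ℕ, ∑ k ∈ Finset.Icc 1 N, a k ≤ C * N) {G : ℂ → ℂ}
    (hGc : ContinuousOn G {s | 1 ≤ s.re})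
    (hG : ∀ s : ℂ, 1 < s.re → LSeries (fun n ↦ (a n : ℂ)) s = 1 / (s - 1) + G s) :
    Tendsto (fun N : ℕ ↦ (∑ k ∈ Finset.Icc 1 N, a k) / N) atTop (𝓝 1) := by
  have hcont : ContinuousOn (fun z : ℂ ↦ (G (1 + z) - 1) / (1 + z)) {z | 0 ≤ z.re} :=
    ((hGc.comp (by fun_prop) fun z hz ↦ by simpa using hz).sub continuousOn_const).div
      (by fun_prop) fun z hz ↦ one_add_ne_zero_of_re_nonneg hz
  have htauber := tendsto_one_of_laplace_continuousOn (measurable_expMean a) (expMean_nonneg ha)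
    (expMean_le ha hC) (monotone_exp_mul_expMean ha) hcont fun z hz ↦ by
      have hz0 : z ≠ 0 := by rintro rfl; simp at hz
      have h1z := one_add_ne_zero_of_re_nonneg hz.le
      rw [integral_expMean_sub_one_mul_exp ha hC hz, hG _ (by simpa using hz),
        add_sub_cancel_left]
      field_simp
      ring
  refine (htauber.comp (Real.tendsto_log_atTop.comp tendsto_natCast_atTop_atTop)).congr' ?_
  filter_upwards [eventually_gt_atTop 0] with N hN
  simp [expMean, Real.exp_neg, Real.exp_log (Nat.cast_pos.2 hN), div_eq_mul_inv]

end WienerIkehara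

section ContinuationOfLSeries

open MeasureTheory Topology

variable {c : ℕ → ℝ} {κ δ C : ℝ}

/-- The error term `∑_{k ≤ t} c k - κ t` for `t > 1`, extended by zero. -/
noncomputable def sumError (c : ℕ → ℝ) (κ : ℝ) : ℝ → ℂ :=
  (Set.Ioi 1).indicator fun t ↦ (((∑ k ∈ Finset.Icc 1 ⌊t⌋₊, c k) - κ * t : ℝ) : ℂ)

theorem sumError_of_one_lt {t : ℝ} (ht : 1 < t) :
    sumError c κ t = (((∑ k ∈ Finset.Icc 1 ⌊t⌋₊, c k) - κ * t : ℝ) : ℂ) :=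
  Set.indicator_of_mem (Set.mem_Ioi.2 ht) _

theorem const_nonneg_of_abs_sum_sub_le
    (hC : ∀ N : ℕ, 1 ≤ N → |∑ k ∈ Finset.Icc 1 N, c k - κ * N| ≤ C * (N : ℝ) ^ (1 - δ)) :
    0 ≤ C := by
  simpa using (abs_nonneg _).trans (hC 1 le_rfl)

theorem norm_sumError_le (hδ : δ ≤ 1)
    (hC : ∀ N : ℕ, 1 ≤ N → |∑ k ∈ Finset.Icc 1 N, c k - κ * N| ≤ C * (N : ℝ) ^ (1 - δ))
    {t : ℝ} (ht : 1 < t) : ‖sumError c κ t‖ ≤ (C + |κ|) * t ^ (1 - δ) := by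
  have ht0 : 0 ≤ t := by linarith
  have hC0 := const_nonneg_of_abs_sum_sub_le hC
  have hfloor : |κ * (t - ⌊t⌋₊)| ≤ |κ| * t ^ (1 - δ) := by
    rw [abs_mul]
    gcongr
    calc |t - ⌊t⌋₊| ≤ 1 :=
          abs_le.2 ⟨by linarith [Nat.floor_le ht0], by linarith [Nat.lt_floor_add_one t]⟩
      _ ≤ _ := Real.one_le_rpow ht.le (by linarith)
  rw [sumError_of_one_lt ht, Complex.norm_real, Real.norm_eq_abs]
  calc |(∑ k ∈ Finset.Icc 1 ⌊t⌋₊, c k) - κ * t|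
      = |((∑ k ∈ Finset.Icc 1 ⌊t⌋₊, c k) - κ * ⌊t⌋₊) - κ * (t - ⌊t⌋₊)| := by ring_nf
    _ ≤ C * (⌊t⌋₊ : ℝ) ^ (1 - δ) + |κ| * t ^ (1 - δ) :=
        (abs_sub _ _).trans (add_le_add (hC _ ((Nat.one_le_floor_iff t).2 ht.le)) hfloor)
    _ ≤ C * t ^ (1 - δ) + |κ| * t ^ (1 - δ) := by
        gcongr
        exact Nat.floor_le ht0
    _ = _ := by ring

theorem locallyIntegrable_sumError (hc : ∀ n, 0 ≤ c n) (κ : ℝ) :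
    LocallyIntegrable (sumError c κ) := by
  have hsum : LocallyIntegrable fun t : ℝ ↦ ∑ k ∈ Finset.Icc 1 ⌊t⌋₊, c k :=
    ((monotone_sum_Icc_one hc).comp Nat.floor_mono).locallyIntegrable
  have hsub := hsum.sub (by fun_prop : Continuous fun t : ℝ ↦ κ * t).locallyIntegrable
  refine LocallyIntegrable.indicator (fun x ↦ ?_) measurableSet_Ioi
  obtain ⟨u, hu, hint⟩ := hsub x
  exact ⟨u, hu, hint.ofReal⟩

theorem isBigO_sumError_atTop (hδ : δ ≤ 1)
    (hC : ∀ N : ℕ, 1 ≤ N → |∑ k ∈ Finset.Icc 1 N, c k - κ * N| ≤ C * (N : ℝ) ^ (1 - δ)) :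
    sumError c κ =O[atTop] fun t ↦ t ^ (-(δ - 1)) := by
  refine .of_bound (C + |κ|) ?_
  filter_upwards [eventually_gt_atTop 1] with t ht
  rw [Real.norm_of_nonneg (Real.rpow_nonneg (by linarith) _), neg_sub]
  exact norm_sumError_le hδ hC ht

theorem isBigO_sumError_zero (c : ℕ → ℝ) (κ b : ℝ) :
    sumError c κ =O[𝓝[>] 0] fun t ↦ t ^ (-b) := by
  refine .of_bound 1 ?_
  filter_upwards [eventually_nhdsWithin_of_eventually_nhds (eventually_lt_nhds zero_lt_one)]
    with t ht
  rw [sumError, Set.indicator_of_notMem (by simpa using ht.le)]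
  simp

/-- The analytic continuation of `(s - 1) * LSeries c s` obtained from the Mellin transform of the
error term of the summatory function of `c`. -/
noncomputable def continuedNumerator (c : ℕ → ℝ) (κ : ℝ) (s : ℂ) : ℂ :=
  s * (s - 1) * mellin (sumError c κ) (-s) + κ * s

@[simp] theorem continuedNumerator_one (c : ℕ → ℝ) (κ : ℝ) : continuedNumerator c κ 1 = κ := by
  simp [continuedNumerator]

theorem isBigO_sum_of_abs_sum_sub_le (hc : ∀ n, 0 ≤ c n) (hδ : 0 ≤ δ)
    (hC : ∀ N : ℕ, 1 ≤ N → |∑ k ∈ Finset.Icc 1 N, c k - κ * N| ≤ C * (N : ℝ) ^ (1 - δ)) :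
    (fun N ↦ ∑ k ∈ Finset.Icc 1 N, c k) =O[atTop] fun N : ℕ ↦ (N : ℝ) ^ (1 : ℝ) := by
  refine .of_bound (C + κ) ?_
  filter_upwards [eventually_ge_atTop 1] with N hN
  have hpow : (N : ℝ) ^ (1 - δ) ≤ N := by
    simpa using Real.rpow_le_rpow_of_exponent_le (Nat.one_le_cast.2 hN) (sub_le_self 1 hδ)
  rw [Real.rpow_one, Real.norm_of_nonneg (Finset.sum_nonneg fun i _ ↦ hc i), Real.norm_natCast]
  have := mul_le_mul_of_nonneg_left hpow (const_nonneg_of_abs_sum_sub_le hC)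
  linarith [(abs_le.1 (hC N hN)).2]

theorem mellin_sumError_eq_setIntegral (c : ℕ → ℝ) (κ : ℝ) (s : ℂ) :
    mellin (sumError c κ) (-s) = ∫ t in Set.Ioi (1 : ℝ), (t : ℂ) ^ (-s - 1) • sumError c κ t := by
  rw [mellin, setIntegral_eq_of_subset_of_forall_sdiff_eq_zero measurableSet_Ioi
    (Set.Ioi_subset_Ioi zero_le_one)]
  intro t ht
  rw [sumError, Set.indicator_of_notMem ht.2, smul_zero]

variable (hc : ∀ n, 0 ≤ c n) (hδ1 : δ ≤ 1)
  (hC : ∀ N : ℕ, 1 ≤ N → |∑ k ∈ Finset.Icc 1 N, c k - κ * N| ≤ C * (N : ℝ) ^ (1 - δ))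

include hc hδ1 hC

theorem mellinConvergent_sumError {s : ℂ} (hs : 1 - δ < s.re) :
    MellinConvergent (sumError c κ) (-s) :=
  mellinConvergent_of_isBigO_rpow (b := -s.re - 1)
    ((locallyIntegrable_sumError hc κ).locallyIntegrableOn _) (isBigO_sumError_atTop hδ1 hC)
    (by rw [Complex.neg_re]; linarith) (isBigO_sumError_zero c κ _) (by simp)

theorem differentiableOn_continuedNumerator :
    DifferentiableOn ℂ (continuedNumerator c κ) {s | 1 - δ < s.re} := fun s hs ↦ by
  have hmellin := mellin_differentiableAt_of_isBigO_rpow (s := -s) (b := -s.re - 1)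
    ((locallyIntegrable_sumError hc κ).locallyIntegrableOn _) (isBigO_sumError_atTop hδ1 hC)
    (by rw [Complex.neg_re]; linarith [hs.out]) (isBigO_sumError_zero c κ _) (by simp)
  exact (((by fun_prop : DifferentiableAt ℂ (fun s : ℂ ↦ s * (s - 1)) s).mul
    (hmellin.comp s differentiable_neg.differentiableAt)).add (by fun_prop)).differentiableWithinAt

theorem sub_one_mul_LSeries_eq_continuedNumerator (hδ : 0 ≤ δ) {s : ℂ} (hs : 1 < s.re) :
    (s - 1) * LSeries (fun n ↦ (c n : ℂ)) s = continuedNumerator c κ s := by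
  have hs1 : s - 1 ≠ 0 := fun h ↦ by simp [sub_eq_zero.1 h] at hs
  have hpow : IntegrableOn (fun t : ℝ ↦ (t : ℂ) ^ (-s)) (Set.Ioi 1) :=
    integrableOn_Ioi_cpow_of_lt (by simpa using hs) one_pos
  have herr : IntegrableOn (fun t : ℝ ↦ (t : ℂ) ^ (-s - 1) • sumError c κ t) (Set.Ioi 1) :=
    IntegrableOn.mono_set (mellinConvergent_sumError hc hδ1 hC (by linarith))
      (Set.Ioi_subset_Ioi zero_le_one)
  have hsplit :
      ∫ t in Set.Ioi (1 : ℝ), (∑ k ∈ Finset.Icc 1 ⌊t⌋₊, (c k : ℂ)) * (t : ℂ) ^ (-(s + 1)) =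
      ∫ t in Set.Ioi (1 : ℝ), ((t : ℂ) ^ (-s - 1) • sumError c κ t + κ * (t : ℂ) ^ (-s)) := by
    refine setIntegral_congr_fun measurableSet_Ioi fun t (ht : 1 < t) ↦ ?_
    have ht0 : (t : ℂ) ≠ 0 := Complex.ofReal_ne_zero.2 (one_pos.trans ht).ne'
    have hshift : (t : ℂ) ^ (-s) = (t : ℂ) ^ (-s - 1) * t := by
      rw [Complex.cpow_sub _ _ ht0, Complex.cpow_one, div_mul_cancel₀ _ ht0]
    simp only [hshift, sumError_of_one_lt ht, neg_add', smul_eq_mul]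
    push_cast
    ring
  rw [LSeries_eq_mul_integral_of_nonneg c zero_le_one hs (isBigO_sum_of_abs_sum_sub_le hc hδ hC) hc,
    hsplit, integral_add herr (hpow.const_mul _), integral_const_mul,
    ← mellin_sumError_eq_setIntegral, integral_Ioi_cpow_of_lt (by simpa using hs) one_pos,
    Complex.ofReal_one, Complex.one_cpow, show -s + 1 = -(s - 1) by ring, continuedNumerator]
  field_simp

end ContinuationOfLSeries

section NonvanishingOnOneLine

open Topology

theorem tendsto_sub_mul_logDeriv {W : ℂ → ℂ} {s₀ : ℂ} (hW : AnalyticAt ℂ W s₀)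
    (hne : analyticOrderAt W s₀ ≠ ⊤) :
    Tendsto (fun z ↦ (z - s₀) * logDeriv W z) (𝓝[≠] s₀) (𝓝 (analyticOrderNatAt W s₀)) := by
  obtain ⟨g, hg, hg0, hWg⟩ := (hW.analyticOrderAt_ne_top).1 hne
  set m := analyticOrderNatAt W s₀
  have hlim : Tendsto (fun z ↦ m + (z - s₀) * logDeriv g z) (𝓝 s₀) (𝓝 m) := by
    have hcont : ContinuousAt (fun z ↦ m + (z - s₀) * logDeriv g z) s₀ :=
      continuousAt_const.add ((by fun_prop : ContinuousAt (fun z ↦ z - s₀) s₀).mul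
        (hg.deriv.continuousAt.div hg.continuousAt hg0))
    simpa using hcont.tendsto
  refine (hlim.mono_left nhdsWithin_le_nhds).congr' ?_
  filter_upwards [hWg.eventually_nhds.filter_mono nhdsWithin_le_nhds,
    (hg.continuousAt.eventually_ne hg0).filter_mono nhdsWithin_le_nhds,
    hg.eventually_analyticAt.filter_mono nhdsWithin_le_nhds, self_mem_nhdsWithin]
    with z hWz hgz hgan hz
  have hz0 : z - s₀ ≠ 0 := sub_ne_zero.2 hz
  have hdiff : DifferentiableAt ℂ (fun z ↦ z - s₀) z := by fun_prop
  rw [(logDeriv_congr_nhds (g := fun z ↦ (z - s₀) ^ m * g z) hWz).eq_of_nhds,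
    logDeriv_mul (f := fun z ↦ (z - s₀) ^ m) z (pow_ne_zero _ hz0) hgz (by fun_prop)
      hgan.differentiableAt,
    logDeriv_fun_pow hdiff, logDeriv_apply (fun z ↦ z - s₀), deriv_sub_const, deriv_id'']
  field_simp

theorem three_add_four_mul_cos_add_cos_two_mul_nonneg (θ : ℝ) :
    0 ≤ 3 + 4 * Real.cos θ + Real.cos (2 * θ) := by
  rw [Real.cos_two_mul]
  linarith [sq_nonneg (1 + Real.cos θ)]

theorem re_LSeries_term (Λ : ℕ → ℝ) (σ t : ℝ) (n : ℕ) :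
    (LSeries.term (fun n ↦ (Λ n : ℂ)) (σ + t * Complex.I) n).re =
      (LSeries.term (fun n ↦ (Λ n : ℂ)) σ n).re * Real.cos (t * Real.log n) := by
  rcases eq_or_ne n 0 with rfl | hn
  · simp
  have hn' : (n : ℂ) ≠ 0 := Nat.cast_ne_zero.2 hn
  have hosc : (n : ℂ) ^ (-(t * Complex.I)) =
      Complex.exp ((-(t * Real.log n) : ℝ) * Complex.I) := by
    rw [Complex.cpow_def_of_ne_zero hn', ← Complex.natCast_log]
    congr 1
    push_cast
    ring
  have hreal : (Λ n : ℂ) * (n : ℂ) ^ (-(σ : ℂ)) = ((Λ n * (n : ℝ) ^ (-σ) : ℝ) : ℂ) := by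
    rw [Complex.ofReal_mul, Complex.ofReal_cpow n.cast_nonneg]
    push_cast
    rfl
  rw [LSeries.term_of_ne_zero hn, LSeries.term_of_ne_zero hn, div_eq_mul_inv, div_eq_mul_inv,
    ← Complex.cpow_neg, ← Complex.cpow_neg, neg_add, Complex.cpow_add _ _ hn', ← mul_assoc, hreal,
    hosc, Complex.re_ofReal_mul, Complex.exp_ofReal_mul_I_re, Real.cos_neg, Complex.ofReal_re]

theorem three_add_four_mul_add_LSeries_re_nonneg {Λ : ℕ → ℝ} (hΛ : ∀ n, 0 ≤ Λ n) (σ t : ℝ)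
    (hs : ∀ s : ℂ, s.re = σ → LSeriesSummable (fun n ↦ (Λ n : ℂ)) s) :
    0 ≤ (3 * LSeries (fun n ↦ (Λ n : ℂ)) σ + 4 * LSeries (fun n ↦ (Λ n : ℂ)) (σ + t * Complex.I)
      + LSeries (fun n ↦ (Λ n : ℂ)) (σ + (2 * t : ℝ) * Complex.I)).re := by
  have hsum := Complex.hasSum_re ((((hs σ (by simp)).hasSum.mul_left 3).add
    ((hs (σ + t * Complex.I) (by simp)).hasSum.mul_left 4)).add
      (hs (σ + (2 * t : ℝ) * Complex.I) (by simp)).hasSum)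
  refine hsum.nonneg fun n ↦ ?_
  have hterm : 0 ≤ (LSeries.term (fun n ↦ (Λ n : ℂ)) σ n).re := by
    rcases eq_or_ne n 0 with rfl | hn
    · simp
    rw [LSeries.term_of_ne_zero hn, ← Complex.ofReal_natCast, ← Complex.ofReal_cpow n.cast_nonneg,
      ← Complex.ofReal_div, Complex.ofReal_re]
    have := hΛ n
    positivity
  rw [Complex.add_re, Complex.add_re, ← Complex.ofReal_ofNat 3, ← Complex.ofReal_ofNat 4,
    Complex.re_ofReal_mul, Complex.re_ofReal_mul, re_LSeries_term, re_LSeries_term, mul_assoc 2]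
  linarith [mul_nonneg hterm (three_add_four_mul_cos_add_cos_two_mul_nonneg (t * Real.log n))]

theorem tendsto_ofReal_nhdsGT_zero : Tendsto (fun ε : ℝ ↦ (ε : ℂ)) (𝓝[>] 0) (𝓝 0) :=
  (Complex.continuous_ofReal.tendsto' 0 0 Complex.ofReal_zero).mono_left nhdsWithin_le_nhds

theorem tendsto_add_ofReal_nhdsGT (s : ℂ) :
    Tendsto (fun ε : ℝ ↦ s + (ε : ℂ)) (𝓝[>] 0) (𝓝[≠] s) := by
  refine tendsto_nhdsWithin_iff.2
    ⟨by simpa using tendsto_ofReal_nhdsGT_zero.const_add s, ?_⟩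
  filter_upwards [self_mem_nhdsWithin] with ε hε
  simpa using (Set.mem_Ioi.1 hε).ne'

theorem continuousAt_one_div_sub_one {s : ℂ} (hs : s - 1 ≠ 0) :
    ContinuousAt (fun z : ℂ ↦ 1 / (z - 1)) s :=
  continuousAt_const.div (by fun_prop) hs

variable {W L : ℂ → ℂ} (hW : ∀ s : ℂ, 1 ≤ s.re → AnalyticAt ℂ W s)
  (hord : ∀ s : ℂ, 1 ≤ s.re → analyticOrderAt W s ≠ ⊤)
  (hWL : ∀ s : ℂ, 1 < s.re → deriv W s = W s * (1 / (s - 1) - L s))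

include hW hord hWL

theorem ne_zero_of_deriv_eq_mul (hL : ∀ s : ℂ, 1 < s.re → ContinuousAt L s) {s : ℂ}
    (hs : 1 < s.re) : W s ≠ 0 := by
  have hs1 : s - 1 ≠ 0 := fun h ↦ by simp [sub_eq_zero.1 h] at hs
  have hzero : Tendsto (fun z ↦ (z - s) * logDeriv W z) (𝓝[≠] s) (𝓝 0) := by
    have hcont : ContinuousAt (fun z ↦ (z - s) * (1 / (z - 1) - L z)) s :=
      (by fun_prop : ContinuousAt (fun z ↦ z - s) s).mul
        ((continuousAt_one_div_sub_one hs1).sub (hL s hs))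
    have hlim : Tendsto (fun z ↦ (z - s) * (1 / (z - 1) - L z)) (𝓝[≠] s) (𝓝 0) := by
      simpa using hcont.tendsto.mono_left nhdsWithin_le_nhds
    refine hlim.congr' ?_
    filter_upwards [((Complex.continuous_re.tendsto s).eventually_const_lt hs).filter_mono
      nhdsWithin_le_nhds, (hW s hs.le).eventually_eq_zero_or_eventually_ne_zero.resolve_left
        fun h ↦ hord s hs.le (analyticOrderAt_eq_top.2 h)] with z hz hWz
    rw [logDeriv_apply, hWL z hz, mul_div_cancel_left₀ _ hWz]
  have horder : analyticOrderNatAt W s = 0 := Nat.cast_eq_zero.1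
    (tendsto_nhds_unique (tendsto_sub_mul_logDeriv (hW s hs.le) (hord s hs.le)) hzero)
  refine (hW s hs.le).analyticOrderAt_eq_zero.1 ?_
  rw [← Nat.cast_analyticOrderNatAt (hord s hs.le), horder, Nat.cast_zero]

theorem tendsto_mul_sub_one_div_of_deriv_eq_mul (hL : ∀ s : ℂ, 1 < s.re → ContinuousAt L s) {s : ℂ}
    (hs : 1 ≤ s.re) :
    Tendsto (fun ε : ℝ ↦ (ε : ℂ) * (L (s + ε) - 1 / (s + ε - 1))) (𝓝[>] 0)
      (𝓝 (-(analyticOrderNatAt W s : ℂ))) := by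
  refine ((tendsto_sub_mul_logDeriv (hW s hs) (hord s hs)).comp
    (tendsto_add_ofReal_nhdsGT s)).neg.congr' ?_
  filter_upwards [self_mem_nhdsWithin] with ε (hε : 0 < ε)
  have hre : 1 < (s + ε).re := by
    rw [Complex.add_re, Complex.ofReal_re]
    linarith
  rw [Function.comp_apply, add_sub_cancel_left, logDeriv_apply, hWL _ hre,
    mul_div_cancel_left₀ _ (ne_zero_of_deriv_eq_mul hW hord hWL hL hre)]
  ring

theorem tendsto_mul_of_deriv_eq_mul (hL : ∀ s : ℂ, 1 < s.re → ContinuousAt L s) {s : ℂ}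
    (hs : 1 ≤ s.re) (hs1 : s ≠ 1) :
    Tendsto (fun ε : ℝ ↦ (ε : ℂ) * L (s + ε)) (𝓝[>] 0) (𝓝 (-(analyticOrderNatAt W s : ℂ))) := by
  have hpole : Tendsto (fun ε : ℝ ↦ (ε : ℂ) * (1 / (s + ε - 1))) (𝓝[>] 0) (𝓝 0) := by
    simpa using tendsto_ofReal_nhdsGT_zero.mul ((continuousAt_one_div_sub_one
      (sub_ne_zero.2 hs1)).tendsto.comp ((tendsto_add_ofReal_nhdsGT s).mono_right
        nhdsWithin_le_nhds))
  refine (add_zero (-(analyticOrderNatAt W s : ℂ)) ▸ (tendsto_mul_sub_one_div_of_deriv_eq_mul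
    hW hord hWL hL hs).add hpole).congr fun ε ↦ ?_
  ring

theorem tendsto_mul_one_add_of_deriv_eq_mul (hL : ∀ s : ℂ, 1 < s.re → ContinuousAt L s)
    (hW1 : W 1 ≠ 0) : Tendsto (fun ε : ℝ ↦ (ε : ℂ) * L (1 + ε)) (𝓝[>] 0) (𝓝 1) := by
  have horder : analyticOrderNatAt W 1 = 0 := by
    rw [analyticOrderNatAt, (hW 1 le_rfl).analyticOrderAt_eq_zero.2 hW1, ENat.toNat_zero]
  have hlim := (tendsto_mul_sub_one_div_of_deriv_eq_mul hW hord hWL hL (s := 1) le_rfl).add_const 1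
  rw [horder, Nat.cast_zero, neg_zero, zero_add] at hlim
  refine hlim.congr' ?_
  filter_upwards [self_mem_nhdsWithin] with ε (hε : 0 < ε)
  have hε0 : (ε : ℂ) ≠ 0 := Complex.ofReal_ne_zero.2 hε.ne'
  rw [add_sub_cancel_left, mul_sub, mul_one_div_cancel hε0, sub_add_cancel]

/-- The Hadamard–de la Vallée Poussin argument: by the inequality `3 + 4 cos θ + cos 2θ ≥ 0`, a zero
of order `m` at `1 + it` would force `3 - 4m ≥ 0`. -/
theorem ne_zero_of_three_add_four_mul_add_nonneg (hL : ∀ s : ℂ, 1 < s.re → ContinuousAt L s)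
    (hW1 : W 1 ≠ 0)
    (hpos : ∀ σ t : ℝ, 1 < σ →
      0 ≤ (3 * L σ + 4 * L (σ + t * Complex.I) + L (σ + (2 * t : ℝ) * Complex.I)).re)
    {s : ℂ} (hs : 1 ≤ s.re) : W s ≠ 0 := by
  rcases hs.lt_or_eq with hs' | hs'
  · exact ne_zero_of_deriv_eq_mul hW hord hWL hL hs'
  obtain ⟨t, rfl⟩ : ∃ t : ℝ, s = 1 + t * Complex.I := ⟨s.im, Complex.ext (by simp [hs']) (by simp)⟩
  rcases eq_or_ne t 0 with rfl | ht
  · simpa using hW1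
  have hlim {u : ℝ} (hu : u ≠ 0) := tendsto_mul_of_deriv_eq_mul hW hord hWL hL
    (s := 1 + u * Complex.I) (by simp) (by simpa using hu)
  have hcomb := (Complex.continuous_re.tendsto _).comp
    ((((tendsto_mul_one_add_of_deriv_eq_mul hW hord hWL hL hW1).const_mul 3).add
      ((hlim ht).const_mul 4)).add (hlim (u := 2 * t) (by simpa using ht)))
  have hnonneg := ge_of_tendsto (b := 0) hcomb (by
    filter_upwards [self_mem_nhdsWithin] with ε (hε : 0 < ε)
    convert mul_nonneg hε.le (hpos (1 + ε) t (by linarith)) using 1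
    rw [← Complex.re_ofReal_mul, Function.comp_apply]
    push_cast
    ring_nf)
  have horder : analyticOrderNatAt W (1 + t * Complex.I) = 0 := by
    have hle : (4 * analyticOrderNatAt W (1 + t * Complex.I) : ℝ) ≤ 3 := by
      simp only [mul_one, mul_neg, Complex.add_re, Complex.neg_re, Complex.re_ofNat,
        Complex.mul_re, Complex.natCast_re, Complex.natCast_im, mul_zero, sub_zero] at hnonneg
      have := (analyticOrderNatAt W (1 + (2 * t : ℝ) * Complex.I)).cast_nonneg (α := ℝ)
      linarith
    have : 4 * analyticOrderNatAt W (1 + t * Complex.I) ≤ 3 := by exact_mod_cast hle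
    omega
  refine (hW _ hs).analyticOrderAt_eq_zero.1 ?_
  rw [← Nat.cast_analyticOrderNatAt (hord _ hs), horder, Nat.cast_zero]

end NonvanishingOnOneLine

section BeurlingPrimeNumberTheorem

open Topology

theorem LSeriesSummable_of_isBigO_sum {a : ℕ → ℝ} (ha : ∀ n, 0 ≤ a n)
    (hO : (fun N ↦ ∑ k ∈ Finset.Icc 1 N, a k) =O[atTop] fun N : ℕ ↦ (N : ℝ) ^ (1 : ℝ))
    {s : ℂ} (hs : 1 < s.re) : LSeriesSummable (fun n ↦ (a n : ℂ)) s :=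
  LSeriesSummable_of_sum_norm_bigO_and_nonneg hO ha zero_le_one hs

theorem abscissaOfAbsConv_lt_of_isBigO_sum {a : ℕ → ℝ} (ha : ∀ n, 0 ≤ a n)
    (hO : (fun N ↦ ∑ k ∈ Finset.Icc 1 N, a k) =O[atTop] fun N : ℕ ↦ (N : ℝ) ^ (1 : ℝ))
    {s : ℂ} (hs : 1 < s.re) : LSeries.abscissaOfAbsConv (fun n ↦ (a n : ℂ)) < s.re :=
  (LSeries.abscissaOfAbsConv_le_of_forall_lt_LSeriesSummable (x := 1) fun y hy ↦
    LSeriesSummable_of_isBigO_sum ha hO (by simpa using hy)).trans_lt (by exact_mod_cast hs)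

theorem LSeries_hasDerivAt_of_mul_log_eq {c Λ : ℕ → ℝ} {s : ℂ}
    (hconv : ∀ n : ℕ, c n * Real.log n = ∑ p ∈ n.divisorsAntidiagonal, c p.1 * Λ p.2)
    (hc : LSeries.abscissaOfAbsConv (fun n ↦ (c n : ℂ)) < s.re)
    (hΛ : LSeriesSummable (fun n ↦ (Λ n : ℂ)) s) :
    HasDerivAt (LSeries fun n ↦ (c n : ℂ))
      (-(LSeries (fun n ↦ (c n : ℂ)) s * LSeries (fun n ↦ (Λ n : ℂ)) s)) s := by
  rw [← LSeries_convolution' (LSeriesSummable_of_abscissaOfAbsConv_lt_re hc) hΛ,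
    LSeries.convolution_def]
  convert LSeries_hasDerivAt hc using 3
  ext n
  rw [LSeries.logMul, ← Complex.natCast_log, mul_comm]
  exact_mod_cast (hconv n).symm

theorem deriv_continuedNumerator {c Λ : ℕ → ℝ} {κ δ C : ℝ} (hc : ∀ n, 0 ≤ c n) (hδ : 0 ≤ δ)
    (hδ1 : δ ≤ 1)
    (hC : ∀ N : ℕ, 1 ≤ N → |∑ k ∈ Finset.Icc 1 N, c k - κ * N| ≤ C * (N : ℝ) ^ (1 - δ))
    (hconv : ∀ n : ℕ, c n * Real.log n = ∑ p ∈ n.divisorsAntidiagonal, c p.1 * Λ p.2)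
    {s : ℂ} (hΛ : LSeriesSummable (fun n ↦ (Λ n : ℂ)) s) (hs : 1 < s.re) :
    deriv (continuedNumerator c κ) s =
      continuedNumerator c κ s * (1 / (s - 1) - LSeries (fun n ↦ (Λ n : ℂ)) s) := by
  have hs1 : s - 1 ≠ 0 := fun h ↦ by simp [sub_eq_zero.1 h] at hs
  have hcont : continuedNumerator c κ =ᶠ[𝓝 s]
      fun s ↦ (s - 1) * LSeries (fun n ↦ (c n : ℂ)) s := by
    filter_upwards [(isOpen_lt continuous_const Complex.continuous_re).mem_nhds hs] with z hz
    exact (sub_one_mul_LSeries_eq_continuedNumerator hc hδ1 hC hδ hz).symm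
  have hderiv := ((hasDerivAt_id s).sub_const 1).mul (LSeries_hasDerivAt_of_mul_log_eq hconv
    (abscissaOfAbsConv_lt_of_isBigO_sum hc (isBigO_sum_of_abs_sum_sub_le hc hδ hC) hs) hΛ)
  rw [hcont.deriv_eq, hcont.eq_of_nhds]
  refine hderiv.deriv.trans ?_
  simp only [id]
  field_simp
  ring

/-- **Beurling's prime number theorem** for a system of generalised integers whose counting function
has a power saving error term: `c n` is the number of generalised integers of norm `n`, and `Λ` is
the generalised von Mangoldt function. -/
theorem tendsto_sum_div_of_mul_log_eq {c Λ : ℕ → ℝ} {κ δ C C' : ℝ} (hc : ∀ n, 0 ≤ c n)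
    (hΛ : ∀ n, 0 ≤ Λ n) (hδ : 0 < δ) (hδ1 : δ ≤ 1) (hκ : κ ≠ 0)
    (hC : ∀ N : ℕ, 1 ≤ N → |∑ k ∈ Finset.Icc 1 N, c k - κ * N| ≤ C * (N : ℝ) ^ (1 - δ))
    (hC' : ∀ N : ℕ, ∑ k ∈ Finset.Icc 1 N, Λ k ≤ C' * N)
    (hconv : ∀ n : ℕ, c n * Real.log n = ∑ p ∈ n.divisorsAntidiagonal, c p.1 * Λ p.2) :
    Tendsto (fun N : ℕ ↦ (∑ k ∈ Finset.Icc 1 N, Λ k) / N) atTop (𝓝 1) := by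
  set W := continuedNumerator c κ
  set L := LSeries fun n ↦ (Λ n : ℂ)
  have hOΛ := isBigO_sum_of_sum_le hΛ hC'
  have hWan : AnalyticOnNhd ℂ W {s | 1 - δ < s.re} :=
    (differentiableOn_continuedNumerator hc hδ1 hC).analyticOnNhd
      (isOpen_lt continuous_const Complex.continuous_re)
  have hsub {s : ℂ} (hs : 1 ≤ s.re) : s ∈ {s : ℂ | 1 - δ < s.re} := by
    rw [Set.mem_ofPred]
    linarith
  have hW (s : ℂ) (hs : 1 ≤ s.re) : AnalyticAt ℂ W s := hWan s (hsub hs)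
  have hW1 : W 1 ≠ 0 := by simpa [W] using hκ
  have hord (s : ℂ) (hs : 1 ≤ s.re) : analyticOrderAt W s ≠ ⊤ := fun h ↦ hW1 <|
    hWan.eqOn_zero_of_preconnected_of_eventuallyEq_zero (convex_halfSpace_re_gt _).isPreconnected
      (hsub hs) (analyticOrderAt_eq_top.1 h) (hsub le_rfl)
  have hWL (s : ℂ) (hs : 1 < s.re) : deriv W s = W s * (1 / (s - 1) - L s) :=
    deriv_continuedNumerator hc hδ.le hδ1 hC hconv (LSeriesSummable_of_isBigO_sum hΛ hOΛ hs) hs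
  have hL (s : ℂ) (hs : 1 < s.re) : ContinuousAt L s :=
    (LSeries_analyticOnNhd _ s (abscissaOfAbsConv_lt_of_isBigO_sum hΛ hOΛ hs)).continuousAt
  have hWne (s : ℂ) (hs : 1 ≤ s.re) : W s ≠ 0 :=
    ne_zero_of_three_add_four_mul_add_nonneg hW hord hWL hL hW1 (fun σ t hσ ↦
      three_add_four_mul_add_LSeries_re_nonneg hΛ σ t fun s hs ↦
        LSeriesSummable_of_isBigO_sum hΛ hOΛ (hs ▸ hσ)) hs
  refine tendsto_sum_div_of_LSeries_continuousOn hΛ hC' (G := fun s ↦ -logDeriv W s)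
    (fun s hs ↦ ((hW s hs).deriv.continuousAt.div (hW s hs).continuousAt
      (hWne s hs)).neg.continuousWithinAt) fun s hs ↦ ?_
  rw [logDeriv_apply, hWL s hs, mul_div_cancel_left₀ _ (hWne s hs.le)]
  ring

end BeurlingPrimeNumberTheorem

section LatticePoints

open MeasureTheory Metric Pointwise

/-- The points at distance less than `R` from both `S` and its complement. Its volume controls the
error made when the lattice points of `S` are counted by volume. -/
def boundaryCollar {E : Type*} [PseudoMetricSpace E] (R : ℝ) (S : Set E) : Set E :=
  thickening R S ∩ thickening R Sᶜ

theorem boundaryCollar_mono {E : Type*} [PseudoMetricSpace E] {R R' : ℝ} (h : R ≤ R') (S : Set E) :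
    boundaryCollar R S ⊆ boundaryCollar R' S :=
  Set.inter_subset_inter (thickening_mono h S) (thickening_mono h Sᶜ)

theorem isBounded_boundaryCollar {E : Type*} [PseudoMetricSpace E] {S : Set E}
    (hS : Bornology.IsBounded S) (R : ℝ) : Bornology.IsBounded (boundaryCollar R S) :=
  hS.thickening.subset Set.inter_subset_left

theorem smul_thickening_of_pos {E : Type*} [SeminormedAddCommGroup E] [NormedSpace ℝ E] {t : ℝ}
    (ht : 0 < t) (δ : ℝ) (S : Set E) : t • thickening δ S = thickening (t * δ) (t • S) := by
  have hball (x : E) : t • ball x δ = ball (t • x) (t * δ) := by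
    rw [_root_.smul_ball ht.ne', Real.norm_of_nonneg ht.le]
  simp_rw [thickening_eq_biUnion_ball, Set.smul_set_iUnion₂, hball]
  exact (Set.biUnion_image (s := S) (f := (t • ·)) (g := fun x ↦ ball x (t * δ))).symm

theorem smul_boundaryCollar {E : Type*} [SeminormedAddCommGroup E] [NormedSpace ℝ E] {t : ℝ}
    (ht : 0 < t) (R : ℝ) (S : Set E) :
    t • boundaryCollar R S = boundaryCollar (t * R) (t • S) := by
  rw [boundaryCollar, boundaryCollar, Set.smul_set_inter₀ ht.ne', smul_thickening_of_pos ht,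
    smul_thickening_of_pos ht, ← Set.image_smul (t := Sᶜ),
    Set.image_compl_eq (MulAction.bijective₀ ht.ne'), Set.image_smul]

theorem abs_measureReal_sub_le_of_sdiff_subset {α : Type*} [MeasurableSpace α] {μ : Measure α}
    {s t u : Set α} (hst : s \ t ⊆ u) (hts : t \ s ⊆ u) (hs : μ s ≠ ⊤) (ht : μ t ≠ ⊤)
    (hu : μ u ≠ ⊤) : |μ.real s - μ.real t| ≤ μ.real u :=
  abs_sub_le_iff.2 ⟨(le_measureReal_sdiff ht).trans (measureReal_mono hst hu),
    (le_measureReal_sdiff hs).trans (measureReal_mono hts hu)⟩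

theorem measureReal_biUnion_vadd_of_isAddFundamentalDomain {G α : Type*} [AddGroup G] [Countable G]
    [AddAction G α] [MeasurableSpace α] {μ : Measure α} [MeasurableConstVAdd G α]
    [VAddInvariantMeasure G α μ] {F : Set α} (hF : IsAddFundamentalDomain G F μ) (I : Set G) :
    μ.real (⋃ g ∈ I, g +ᵥ F) = I.ncard * μ.real F := by
  have hcard (n : ℕ∞) : (n : ENNReal).toReal = n.toNat := by cases n <;> simp
  rw [Measure.real, measure_biUnion₀ I.to_countable (hF.aedisjoint.set_pairwise I)
    fun g _ ↦ hF.nullMeasurableSet_vadd g]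
  simp_rw [measure_vadd, ENNReal.tsum_const, ENat.card_coe_set_eq, ENNReal.toReal_mul, hcard]
  rfl

theorem exists_abs_natCard_inter_mul_sub_le {E : Type*} [NormedAddCommGroup E] [NormedSpace ℝ E]
    [FiniteDimensional ℝ E] [MeasurableSpace E] [BorelSpace E] (μ : Measure E)
    [μ.IsAddHaarMeasure] (L : Submodule ℤ E) [DiscreteTopology L] [IsZLattice ℝ L] :
    ∃ R V : ℝ, 0 < R ∧ 0 < V ∧ ∀ S : Set E, Bornology.IsBounded S →
      |(Nat.card (S ∩ L : Set E) : ℝ) * V - μ.real S| ≤ μ.real (boundaryCollar R S) := by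
  have : Module.Free ℤ L := ZLattice.module_free ℝ L
  have : VAddInvariantMeasure L E μ :=
    inferInstanceAs (VAddInvariantMeasure L.toAddSubgroup E μ)
  have : MeasurableConstVAdd L E := inferInstanceAs (MeasurableConstVAdd L.toAddSubgroup E)
  let b := Module.Free.chooseBasis ℤ L
  let B := b.ofZLatticeBasis ℝ L
  set F := ZSpan.fundamentalDomain B
  have hF : IsAddFundamentalDomain L F μ := ZLattice.isAddFundamentalDomain b μ
  have hFb : Bornology.IsBounded F := ZSpan.fundamentalDomain_isBounded B
  obtain ⟨R, hR, hFR⟩ := hFb.exists_pos_norm_lt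
  have hV : 0 < μ.real F :=
    ENNReal.toReal_pos (ZSpan.measure_fundamentalDomain_ne_zero B) hFb.measure_lt_top.ne
  refine ⟨R, μ.real F, hR, hV, fun S hS ↦ ?_⟩
  set U : Set E := ⋃ l ∈ ((↑) : L → E) ⁻¹' S, l +ᵥ F
  have hU : U ⊆ thickening R S := Set.iUnion₂_subset fun l hl ↦ by
    rintro _ ⟨y, hy, rfl⟩
    exact mem_thickening_iff.2 ⟨l, hl, by simpa [Submodule.vadd_def] using hFR y hy⟩
  have hμU : μ.real U = Nat.card (S ∩ L : Set E) * μ.real F := by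
    rw [measureReal_biUnion_vadd_of_isAddFundamentalDomain hF, Set.inter_comm,
      ← Subtype.image_preimage_coe, Nat.card_coe_set_eq,
      Set.ncard_image_of_injective _ Subtype.val_injective]
    rfl
  rw [← hμU]
  refine abs_measureReal_sub_le_of_sdiff_subset (fun x hx ↦ ⟨hU hx.1, ?_⟩) (fun x hx ↦ ⟨?_, ?_⟩)
    (hS.thickening.subset hU).measure_lt_top.ne hS.measure_lt_top.ne
    (isBounded_boundaryCollar hS R).measure_lt_top.ne
  · exact self_subset_thickening hR _ hx.2
  · exact self_subset_thickening hR _ hx.1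
  · have hfloor : (ZSpan.floor B x : E) ∈ L :=
      (b.ofZLatticeBasis_span ℝ).le (ZSpan.floor B x).2
    have hfract := ZSpan.fract_mem_fundamentalDomain B x
    refine mem_thickening_iff.2 ⟨ZSpan.floor B x, fun h ↦ hx.2 ?_, ?_⟩
    · exact Set.mem_biUnion (x := ⟨_, hfloor⟩) h ⟨_, hfract, by simp [ZSpan.fract]⟩
    · exact (dist_eq_norm x _).trans_lt (hFR _ hfract)

end LatticePoints

section SlabVolume

open MeasureTheory NumberField NumberField.InfinitePlace NumberField.mixedEmbedding
  NumberField.Units NumberField.Units.dirichletUnitTheorem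
  NumberField.mixedEmbedding.fundamentalCone ENNReal
open scoped NNReal

theorem setLIntegral_univ_pi_comp_apply {ι : Type*} [Fintype ι] [DecidableEq ι] (i : ι)
    {g : ℝ → ℝ≥0∞} (hg : Measurable g) (J : ι → Set ℝ) :
    ∫⁻ x in Set.univ.pi J, g (x i) = ∏ j, ∫⁻ y in J j, if j = i then g y else 1 := by
  rw [volume_pi, Measure.restrict_pi_pi, lintegral_eq_lmarginal_univ 0,
    lmarginal_erase' _ (by fun_prop) (Finset.mem_univ i),
    ← Finset.mul_prod_erase _ _ (Finset.mem_univ i)]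
  simp_rw [if_true, Function.update_self, lmarginal, lintegral_const, Measure.pi_univ,
    Measure.restrict_apply_univ]
  congr 1
  rw [Finset.prod_coe_sort (Finset.univ.erase i) fun j ↦ volume (J j)]
  refine Finset.prod_congr rfl fun j hj ↦ ?_
  simp only [if_neg (Finset.ne_of_mem_erase hj), setLIntegral_one]

theorem setLIntegral_pi_update_inter_closedBall_le {ι : Type*} [Fintype ι] [DecidableEq ι]
    (i w : ι) {g : ℝ → ℝ≥0∞} (hg : Measurable g) {s : ι → Set ℝ} (hs : ∀ j, MeasurableSet (s j))
    {E : ℝ≥0∞} (hE : 1 ≤ E) (hgE : ∀ y ∈ s i, g y ≤ E) (a τ : ℝ) :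
    ∫⁻ x in Set.univ.pi (Function.update s w (s w ∩ Metric.closedBall a τ)), g (x i) ≤
      E * (2 * ENNReal.ofReal τ) *
        ∏ j ∈ Finset.univ.erase w, ∫⁻ y in s j, if j = i then g y else 1 := by
  rw [setLIntegral_univ_pi_comp_apply i hg, ← Finset.mul_prod_erase _ _ (Finset.mem_univ w),
    Function.update_self]
  refine mul_le_mul' ?_ (Finset.prod_le_prod' fun j hj ↦ ?_)
  · calc
      _ ≤ ∫⁻ _ in s w ∩ Metric.closedBall a τ, E := by
        refine setLIntegral_mono' ((hs w).inter measurableSet_closedBall) fun y hy ↦ ?_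
        split_ifs with hw
        exacts [hgE y (hw ▸ hy.1), hE]
      _ ≤ E * volume (Metric.closedBall a τ) := by
        rw [setLIntegral_const]
        gcongr
        exact Set.inter_subset_right
      _ = E * (2 * ENNReal.ofReal τ) := by
        rw [Real.volume_closedBall, ENNReal.ofReal_mul zero_le_two, ENNReal.ofReal_ofNat]
  · rw [Function.update_of_ne (Finset.ne_of_mem_erase hj)]

variable (K : Type*) [Field K] [NumberField K]

open scoped Classical in
/-- The preimage in the mixed space of the part of the box `(-∞, 1] × [-1, 2] ^ r` (the unbounded
factor at `w₀`) on which the coordinate at `w` is within `τ` of `a`, in the coordinates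
`expMapBasis`. As `normLeOne K` is the preimage of `(-∞, 0] × [0, 1) ^ r`, its boundary is covered
by such slabs with `a = 0` or `a = 1`. -/
noncomputable def boundarySlab (w : InfinitePlace K) (a τ : ℝ) : Set (mixedSpace K) :=
  normAtAllPlaces ⁻¹' (expMapBasis '' Set.univ.pi (Function.update
    (fun v ↦ if v = w₀ then Set.Iic 1 else Set.Icc (-1) 2) w
    ((if w = w₀ then Set.Iic 1 else Set.Icc (-1) 2) ∩ Metric.closedBall a τ)))

open scoped Classical in
theorem exists_volume_preimage_expMapBasis_image_eq :
    ∃ C : ℝ≥0, ∀ T : Set (realSpace K), MeasurableSet T →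
      volume (normAtAllPlaces ⁻¹' (expMapBasis '' T)) =
        C * ∫⁻ x in T, ENNReal.ofReal (Real.exp (x w₀ * Module.finrank ℚ K)) := by
  refine ⟨2 ^ nrRealPlaces K * (2 * Real.pi).toNNReal ^ nrComplexPlaces K *
    (2⁻¹ ^ nrComplexPlaces K * (regulator K).toNNReal * Module.finrank ℚ K), fun T hT ↦ ?_⟩
  have hm : MeasurableSet (normAtAllPlaces ⁻¹' (expMapBasis '' T) : Set (mixedSpace K)) :=
    (hT.image_of_continuousOn_injOn (continuous_expMapBasis K).continuousOn
      (injective_expMapBasis K).injOn).preimage (continuous_normAtAllPlaces K).measurable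
  rw [volume_eq_two_pow_mul_two_pi_pow_mul_integral Set.preimage_image_preimage hm,
    normAtAllPlaces_image_preimage_expMapBasis, setLIntegral_expMapBasis_image hT (by fun_prop)]
  simp_rw [ENNReal.inv_mul_cancel_right
    (Finset.prod_ne_zero_iff.mpr fun _ _ ↦ ofReal_ne_zero_iff.mpr (expMapBasis_pos _ _))
    (prod_ne_top fun _ _ ↦ ofReal_ne_top)]
  rw [← mul_assoc]
  push_cast [ENNReal.coe_inv two_ne_zero]
  rfl

open scoped Classical in
theorem exists_volume_boundarySlab_le (w : InfinitePlace K) (a : ℝ) :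
    ∃ C : ℝ≥0, ∀ τ : ℝ, volume (boundarySlab K w a τ) ≤ C * ENNReal.ofReal τ := by
  obtain ⟨C, hC⟩ := exists_volume_preimage_expMapBasis_image_eq K
  set n := Module.finrank ℚ K
  have hn : (0 : ℝ) < n := Nat.cast_pos.2 Module.finrank_pos
  set box : InfinitePlace K → Set ℝ := fun v ↦ if v = w₀ then Set.Iic 1 else Set.Icc (-1) 2
  have hbox (v : InfinitePlace K) : MeasurableSet (box v) := by
    unfold box
    split_ifs
    exacts [measurableSet_Iic, measurableSet_Icc]
  set g : ℝ → ℝ≥0∞ := fun y ↦ ENNReal.ofReal (Real.exp (y * n))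
  have hg : Measurable g := by fun_prop
  have hgE : ∀ y ∈ box w₀, g y ≤ ENNReal.ofReal (Real.exp n) := fun y hy ↦
    ENNReal.ofReal_le_ofReal (Real.exp_le_exp.2
      (mul_le_of_le_one_left hn.le (by simpa [box] using hy)))
  have hfin (v : InfinitePlace K) : (∫⁻ y in box v, if v = w₀ then g y else 1) ≠ ⊤ := by
    by_cases hv : v = w₀
    · have := (integrableOn_exp_mul_Iic hn 1).lintegral_lt_top.ne
      simpa [g, box, hv, mul_comm] using this
    · simp [box, hv]
  set P : ℝ≥0∞ := ∏ v ∈ Finset.univ.erase w, ∫⁻ y in box v, if v = w₀ then g y else 1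
  have hP : P ≠ ⊤ := prod_ne_top fun v _ ↦ hfin v
  have hmeas (τ : ℝ) : MeasurableSet (Set.univ.pi
      (Function.update box w (box w ∩ Metric.closedBall a τ))) := by
    refine MeasurableSet.univ_pi fun v ↦ ?_
    obtain rfl | hv := eq_or_ne v w
    · simpa using (hbox v).inter measurableSet_closedBall
    · simpa [hv] using hbox v
  refine ⟨C * (Real.exp n).toNNReal * 2 * P.toNNReal, fun τ ↦ ?_⟩
  calc volume (boundarySlab K w a τ)
    _ ≤ C * (ENNReal.ofReal (Real.exp n) * (2 * ENNReal.ofReal τ) * P) := by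
      rw [boundarySlab, hC _ (hmeas τ)]
      gcongr
      exact setLIntegral_pi_update_inter_closedBall_le w₀ w hg hbox
        (ENNReal.one_le_ofReal.2 (Real.one_le_exp hn.le)) hgE a τ
    _ = _ := by
      push_cast [coe_toNNReal hP]
      rw [ENNReal.ofReal]
      ring

end SlabVolume

section NormLeOneBoundary

open NumberField NumberField.InfinitePlace NumberField.mixedEmbedding
  NumberField.Units.dirichletUnitTheorem NumberField.mixedEmbedding.fundamentalCone

theorem abs_log_sub_log_le {a b m : ℝ} (hm : 0 < m) (ha : m ≤ a) (hb : m ≤ b) :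
    |Real.log a - Real.log b| ≤ |a - b| / m := by
  wlog h : b ≤ a generalizing a b
  · rw [abs_sub_comm, abs_sub_comm a b]
    exact this hb ha (le_of_not_ge h)
  have hb0 : 0 < b := hm.trans_le hb
  have ha0 : 0 < a := hm.trans_le ha
  rw [abs_of_nonneg (sub_nonneg.2 (Real.log_le_log hb0 h)), abs_of_nonneg (sub_nonneg.2 h),
    ← Real.log_div ha0.ne' hb0.ne']
  calc Real.log (a / b)
    _ ≤ a / b - 1 := Real.log_le_sub_one_of_pos (div_pos ha0 hb0)
    _ = (a - b) / b := div_sub_one hb0.ne'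
    _ ≤ (a - b) / m := div_le_div_of_nonneg_left (sub_nonneg.2 h) hm hb

theorem abs_normAtPlace_sub_le {K : Type*} [Field K] (w : InfinitePlace K)
    (x y : mixedSpace K) : |normAtPlace w x - normAtPlace w y| ≤ normAtPlace w (x - y) := by
  have h1 := normAtPlace_add_le w (x - y) y
  have h2 := normAtPlace_add_le w (y - x) x
  rw [sub_add_cancel] at h1 h2
  rw [← neg_sub x y, normAtPlace_neg] at h2
  exact abs_sub_le_iff.2 ⟨by linarith, by linarith⟩

variable {K : Type*} [Field K] [NumberField K]

open scoped Classical in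
theorem norm_normAtAllPlaces_eq_norm (x : mixedSpace K) : ‖normAtAllPlaces x‖ = ‖x‖ := by
  refine le_antisymm ((pi_norm_le_iff_of_nonneg (norm_nonneg x)).2 fun w ↦ ?_) ?_
  · rw [normAtAllPlaces_apply, Real.norm_of_nonneg (normAtPlace_nonneg w x),
      norm_eq_sup'_normAtPlace]
    exact Finset.le_sup' (fun w ↦ normAtPlace w x) (Finset.mem_univ w)
  · rw [norm_eq_sup'_normAtPlace]
    exact Finset.sup'_le _ _ fun w _ ↦ (le_abs_self _).trans (norm_le_pi_norm (normAtAllPlaces x) w)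

open scoped Classical in
theorem norm_normAtAllPlaces_sub_le (x y : mixedSpace K) :
    ‖normAtAllPlaces x - normAtAllPlaces y‖ ≤ ‖x - y‖ := by
  rw [← norm_normAtAllPlaces_eq_norm (x - y)]
  exact (pi_norm_le_iff_of_nonneg (norm_nonneg _)).2 fun w ↦ (abs_normAtPlace_sub_le w x y).trans
    ((le_abs_self _).trans (norm_le_pi_norm (normAtAllPlaces (x - y)) w))

variable (K)

theorem exists_expMapBasis_bounds : ∃ C : ℝ, 1 ≤ C ∧ ∀ p ∈ paramSet K, ∀ w,
    Real.exp (p w₀) ≤ C * expMapBasis p w ∧ expMapBasis p w ≤ C * Real.exp (p w₀) := by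
  classical
  have hcont (w : InfinitePlace K) : Continuous fun q : realSpace K ↦ expMapBasis q w :=
    (continuous_apply w).comp (continuous_expMapBasis K)
  obtain ⟨C, hC⟩ := (isCompact_univ_pi fun _ : InfinitePlace K ↦
    isCompact_Icc (a := (0 : ℝ)) (b := 1)).exists_bound_of_continuousOn
    (f := fun q : realSpace K ↦ (expMapBasis q, fun w ↦ (expMapBasis q w)⁻¹))
    ((continuous_expMapBasis K).prodMk
      (continuous_pi fun w ↦ (hcont w).inv₀ fun q ↦ (expMapBasis_pos q w).ne')).continuousOn
  refine ⟨max C 1, le_max_right _ _, fun p hp w ↦ ?_⟩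
  set q : realSpace K := fun i ↦ if i = w₀ then 0 else p i
  have hq : q ∈ Set.univ.pi fun _ : InfinitePlace K ↦ Set.Icc (0 : ℝ) 1 := fun v _ ↦ by
    have := hp v (Set.mem_univ v)
    by_cases hv : v = w₀
    · simp [q, hv]
    · simp only [if_neg hv] at this
      simpa [q, hv] using Set.Ico_subset_Icc_self this
  have hq0 := expMapBasis_pos q w
  have hle : expMapBasis q w ≤ max C 1 := (le_abs_self _).trans <|
    (norm_le_pi_norm (expMapBasis q) w).trans <| (norm_fst_le _).trans <|
      (hC q hq).trans (le_max_left _ _)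
  have hinv : (expMapBasis q w)⁻¹ ≤ max C 1 := (le_abs_self _).trans <|
    (norm_le_pi_norm (fun w ↦ (expMapBasis q w)⁻¹) w).trans <| (norm_snd_le _).trans <|
      (hC q hq).trans (le_max_left _ _)
  have hp : expMapBasis p w = Real.exp (p w₀) * expMapBasis q w :=
    congrFun (expMapBasis_apply'' p) w
  rw [hp]
  constructor
  · have : 1 ≤ max C 1 * expMapBasis q w := (inv_le_iff_one_le_mul₀ hq0).1 hinv
    nlinarith [Real.exp_pos (p w₀)]
  · rw [mul_comm]
    gcongr

theorem exists_abs_expMapBasis_symm_sub_le : ∃ B : ℝ, 0 ≤ B ∧ ∀ (a b : realSpace K) (m : ℝ),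
    0 < m → (∀ w, m ≤ a w) → (∀ w, m ≤ b w) →
      ∀ v, |expMapBasis.symm a v - expMapBasis.symm b v| ≤ B * (‖a - b‖ / m) := by
  set T : realSpace K →L[ℝ] realSpace K := (completeBasis K).equivFunL.toContinuousLinearMap
  refine ⟨‖T‖ * 2, by positivity, fun a b m hm ha hb v ↦ ?_⟩
  have hlog : ‖expMap.symm a - expMap.symm b‖ ≤ 2 * (‖a - b‖ / m) := by
    refine (pi_norm_le_iff_of_nonneg (by positivity)).2 fun w ↦ ?_
    rw [Pi.sub_apply, expMap_symm_apply, expMap_symm_apply, ← mul_sub, norm_mul,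
      Real.norm_of_nonneg (Nat.cast_nonneg _)]
    have hmult : (w.mult : ℝ) ≤ 2 := by
      rw [InfinitePlace.mult]
      split_ifs <;> norm_num
    refine mul_le_mul hmult ((abs_log_sub_log_le hm (ha w) (hb w)).trans ?_) (norm_nonneg _)
      zero_le_two
    gcongr
    exact norm_le_pi_norm (a - b) w
  calc |expMapBasis.symm a v - expMapBasis.symm b v|
    _ ≤ ‖T (expMap.symm a) - T (expMap.symm b)‖ :=
      norm_le_pi_norm (T (expMap.symm a) - T (expMap.symm b)) v
    _ ≤ ‖T‖ * ‖expMap.symm a - expMap.symm b‖ := by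
      rw [← map_sub]
      exact T.le_opNorm _
    _ ≤ ‖T‖ * 2 * (‖a - b‖ / m) := by
      rw [mul_assoc]
      gcongr

variable {K}

theorem mem_boundarySlab_of_abs_sub_le {p q r : realSpace K} {τ : ℝ} (hτ : τ ≤ 1)
    (hp : p ∈ paramSet K) (hr : r ∉ paramSet K) (hqp : ∀ v, |q v - p v| ≤ τ)
    (hqr : ∀ v, |q v - r v| ≤ τ) {x : mixedSpace K} (hx : expMapBasis q = normAtAllPlaces x) :
    ∃ w, x ∈ boundarySlab K w 0 τ ∪ boundarySlab K w 1 τ := by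
  classical
  set box : InfinitePlace K → Set ℝ := fun v ↦ if v = w₀ then Set.Iic 1 else Set.Icc (-1) 2
  have hbox (v : InfinitePlace K) : q v ∈ box v := by
    have h1 := abs_le.1 (hqp v)
    have h2 := hp v (Set.mem_univ v)
    by_cases hv : v = w₀
    · simp only [box, if_pos hv, Set.mem_Iic] at h2 ⊢
      linarith
    · simp only [box, if_neg hv, Set.mem_Ico, Set.mem_Icc] at h2 ⊢
      constructor <;> linarith
  have hslab {w : InfinitePlace K} {a : ℝ} (h : |q w - a| ≤ τ) : x ∈ boundarySlab K w a τ := by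
    refine ⟨q, fun v _ ↦ ?_, hx⟩
    obtain rfl | hv := eq_or_ne v w
    · rw [Function.update_self]
      exact ⟨hbox v, Metric.mem_closedBall.2 h⟩
    · rw [Function.update_of_ne hv]
      exact hbox v
  simp only [paramSet, Set.mem_univ_pi, not_forall] at hr
  obtain ⟨w, hw⟩ := hr
  have h1 := abs_le.1 (hqp w)
  have h2 := hp w (Set.mem_univ w)
  have h3 := abs_le.1 (hqr w)
  have key : |q w - 0| ≤ τ ∨ |q w - 1| ≤ τ := by
    simp only [abs_le]
    by_cases hw₀ : w = w₀
    · simp only [if_pos hw₀, Set.mem_Iic, not_le] at h2 hw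
      exact .inl (by constructor <;> linarith)
    · simp only [if_neg hw₀, Set.mem_Ico, not_and_or, not_le, not_lt] at h2 hw
      rcases hw with hw | hw
      · exact .inl (by constructor <;> linarith)
      · exact .inr (by constructor <;> linarith)
  exact ⟨w, key.imp hslab hslab⟩

end NormLeOneBoundary

section CollarVolume

open MeasureTheory NumberField NumberField.InfinitePlace NumberField.mixedEmbedding
  NumberField.Units.dirichletUnitTheorem NumberField.mixedEmbedding.fundamentalCone
open scoped NNReal

variable (K : Type*) [Field K] [NumberField K]

open scoped Classical in
-- All the norms at places are at least `η` near `x`, so that a displacement by `η ^ 2` moves the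
-- coordinates of `expMapBasis` by `O(η)`.
theorem exists_mem_iUnion_boundarySlab : ∃ B : ℝ, 0 < B ∧ ∀ η τ : ℝ, 0 < η → B * η ≤ τ → τ ≤ 1 →
    ∀ x y z : mixedSpace K, y ∈ normLeOne K → z ∉ normLeOne K → dist x y < η ^ 2 →
      dist x z < η ^ 2 → (∀ w, 3 * η ≤ normAtAllPlaces y w) →
      x ∈ ⋃ w, (boundarySlab K w 0 τ ∪ boundarySlab K w 1 τ) := by
  obtain ⟨B, hB0, hB⟩ := exists_abs_expMapBasis_symm_sub_le K
  refine ⟨B + 1, by positivity, fun η τ hη hητ hτ1 x y z hyS hzS hxy hxz hy ↦ ?_⟩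
  have hη1 : η ≤ 1 := by nlinarith
  rw [normLeOne_eq_preimage] at hyS hzS
  obtain ⟨p, hp, hpy⟩ := hyS
  have hdist {u : mixedSpace K} (hu : dist x u < η ^ 2) :
      ‖normAtAllPlaces x - normAtAllPlaces u‖ ≤ η ^ 2 :=
    (norm_normAtAllPlaces_sub_le x u).trans ((dist_eq_norm x u).symm.trans_le hu.le)
  have happly {u : mixedSpace K} (hu : dist x u < η ^ 2) (w : InfinitePlace K) :
      |normAtAllPlaces x w - normAtAllPlaces u w| ≤ η :=
    (norm_le_pi_norm (normAtAllPlaces x - normAtAllPlaces u) w).trans <|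
      (hdist hu).trans (by nlinarith)
  have hx (w : InfinitePlace K) : 2 * η ≤ normAtAllPlaces x w := by
    linarith [hy w, (abs_le.1 (happly hxy w)).1]
  have hz (w : InfinitePlace K) : η ≤ normAtAllPlaces z w := by
    linarith [hx w, (abs_le.1 (happly hxz w)).2]
  have hright {u : mixedSpace K} (hu : ∀ w, η ≤ normAtAllPlaces u w) :
      expMapBasis (expMapBasis.symm (normAtAllPlaces u)) = normAtAllPlaces u :=
    expMapBasis.right_inv (Set.mem_univ_pi.2 fun w ↦ hη.trans_le (hu w))
  have hclose {u : mixedSpace K} (hu : ∀ w, η ≤ normAtAllPlaces u w) (hxu : dist x u < η ^ 2)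
      (v : InfinitePlace K) : |expMapBasis.symm (normAtAllPlaces x) v -
        expMapBasis.symm (normAtAllPlaces u) v| ≤ τ := by
    refine (hB _ _ η hη (fun w ↦ by linarith [hx w]) hu v).trans ?_
    have : ‖normAtAllPlaces x - normAtAllPlaces u‖ / η ≤ η := by
      rw [div_le_iff₀ hη, ← sq]
      exact hdist hxu
    nlinarith
  have hy' (w : InfinitePlace K) : η ≤ normAtAllPlaces y w := by linarith [hy w]
  have hpsymm : expMapBasis.symm (normAtAllPlaces y) = p :=
    injective_expMapBasis K (by rw [hright hy', hpy])
  exact Set.mem_iUnion.2 <| mem_boundarySlab_of_abs_sub_le hτ1 hp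
    (fun h ↦ hzS ⟨_, h, hright hz⟩) (hpsymm ▸ hclose hy' hxy) (hclose hz hxz)
    (hright fun w ↦ by linarith [hx w])

open scoped Classical in
theorem exists_boundaryCollar_normLeOne_subset : ∃ B : ℝ, 0 < B ∧ ∀ η : ℝ, 0 < η → B * η ≤ 1 →
    boundaryCollar (η ^ 2) (normLeOne K) ⊆ Metric.closedBall 0 (B * η) ∪
      ⋃ w, (boundarySlab K w 0 (B * η) ∪ boundarySlab K w 1 (B * η)) := by
  obtain ⟨C, hC1, hC⟩ := exists_expMapBasis_bounds K
  obtain ⟨B, hB0, hB⟩ := exists_mem_iUnion_boundarySlab K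
  refine ⟨B + 3 * C ^ 2 + 1, by positivity, fun η hη hη1 x ⟨hxS, hxS'⟩ ↦ ?_⟩
  obtain ⟨y, hy, hxy⟩ := Metric.mem_thickening_iff.1 hxS
  obtain ⟨z, hz, hxz⟩ := Metric.mem_thickening_iff.1 hxS'
  obtain ⟨p, hp, hpy⟩ := normLeOne_eq_preimage K ▸ hy
  have hC2 : 0 ≤ C ^ 2 * η := by positivity
  by_cases hsmall : Real.exp (p w₀) ≤ 3 * C * η
  · left
    have hy : ‖normAtAllPlaces y‖ ≤ 3 * C ^ 2 * η :=
      (pi_norm_le_iff_of_nonneg (by positivity)).2 fun w ↦ by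
        rw [← hpy, Real.norm_of_nonneg (expMapBasis_nonneg p w)]
        nlinarith [(hC p hp w).2]
    have hdist := (norm_normAtAllPlaces_sub_le x y).trans_lt ((dist_eq_norm x y).symm.trans_lt hxy)
    rw [mem_closedBall_zero_iff, ← norm_normAtAllPlaces_eq_norm]
    have := norm_le_norm_add_norm_sub (normAtAllPlaces y) (normAtAllPlaces x)
    nlinarith [norm_sub_rev (normAtAllPlaces y) (normAtAllPlaces x)]
  · refine Or.inr (hB η _ hη (by nlinarith) hη1 x y z hy hz hxy hxz fun w ↦ ?_)
    rw [← hpy]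
    nlinarith [(hC p hp w).1]

open scoped Classical in
theorem exists_volume_boundaryCollar_normLeOne_le_of_mul_le_one : ∃ B : ℝ, 0 < B ∧ ∃ C : ℝ≥0,
    ∀ η : ℝ, 0 < η → B * η ≤ 1 →
      volume (boundaryCollar (η ^ 2) (normLeOne K)) ≤ C * ENNReal.ofReal (B * η) := by
  obtain ⟨B, hB, hcover⟩ := exists_boundaryCollar_normLeOne_subset K
  choose C hC using fun w a ↦ exists_volume_boundarySlab_le K w a
  have hball : volume (Metric.ball (0 : mixedSpace K) 1) ≠ ⊤ := measure_ball_lt_top.ne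
  refine ⟨B, hB, (volume (Metric.ball (0 : mixedSpace K) 1)).toNNReal + ∑ w, (C w 0 + C w 1),
    fun η hη hη1 ↦ (measure_mono (hcover η hη hη1)).trans ((measure_union_le _ _).trans ?_)⟩
  rw [ENNReal.coe_add, ENNReal.coe_toNNReal hball, ENNReal.ofNNReal_finsetSum, add_mul,
    Finset.sum_mul]
  gcongr ?_ + ?_
  · rw [Measure.addHaar_closedBall _ _ (by positivity), mul_comm]
    gcongr
    exact pow_le_of_le_one (by positivity) hη1 Module.finrank_pos.ne'
  · refine (measure_iUnion_fintype_le _ _).trans (Finset.sum_le_sum fun w _ ↦ ?_)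
    rw [ENNReal.coe_add, add_mul]
    exact (measure_union_le _ _).trans (add_le_add (hC w 0 _) (hC w 1 _))

open scoped Classical in
theorem exists_measureReal_boundaryCollar_normLeOne_le (r : ℝ) : ∃ C : ℝ, ∀ η : ℝ, 0 < η → η ≤ r →
    volume.real (boundaryCollar (η ^ 2) (normLeOne K)) ≤ C * η := by
  obtain ⟨B, hB, C, hC⟩ := exists_volume_boundaryCollar_normLeOne_le_of_mul_le_one K
  set D := volume.real (boundaryCollar (r ^ 2) (normLeOne K))
  have hD : 0 ≤ D := measureReal_nonneg
  refine ⟨C * B + D * B, fun η hη hr ↦ ?_⟩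
  have hCη : 0 ≤ C * B * η := by positivity
  have hDη : 0 ≤ D * B * η := by positivity
  rcases le_total (B * η) 1 with hη1 | hη1
  · have := ENNReal.toReal_mono (by finiteness) (hC η hη hη1)
    rw [ENNReal.toReal_mul, ENNReal.coe_toReal, ENNReal.toReal_ofReal (by positivity)] at this
    rw [measureReal_def]
    linarith
  · have : volume.real (boundaryCollar (η ^ 2) (normLeOne K)) ≤ D :=
      measureReal_mono (boundaryCollar_mono (by gcongr) _)
        (isBounded_boundaryCollar (isBounded_normLeOne K) _).measure_lt_top.ne
    nlinarith

end CollarVolume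

section IdealCount

open Ideal (absNorm absNorm_pos_of_nonZeroDivisors)
open Module (finrank finrank_pos)
open MeasureTheory NumberField NumberField.InfinitePlace NumberField.mixedEmbedding
  NumberField.Units NumberField.mixedEmbedding.fundamentalCone
open scoped nonZeroDivisors Pointwise Topology

variable (K : Type*) [Field K] [NumberField K]

theorem smul_normLeOne {t : ℝ} (ht : 0 < t) :
    t • normLeOne K = {x | x ∈ fundamentalCone K ∧ mixedEmbedding.norm x ≤ t ^ finrank ℚ K} := by
  ext x
  rw [Set.mem_smul_set_iff_inv_smul_mem₀ ht.ne']
  simp only [Set.mem_ofPred_eq, mem_normLeOne, smul_mem_iff_mem (inv_ne_zero ht.ne'),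
    mixedEmbedding.norm_smul, and_congr_right_iff]
  intro _
  rw [abs_of_pos (by positivity), inv_pow, inv_mul_le_iff₀ (by positivity), mul_one]

open scoped Classical in
theorem exists_abs_natCard_smul_normLeOne_inter_sub_le (L : Submodule ℤ (mixedSpace K))
    [DiscreteTopology L] [IsZLattice ℝ L] : ∃ κ D : ℝ, ∀ t : ℝ, 1 ≤ t →
      |(Nat.card (t • normLeOne K ∩ L : Set (mixedSpace K)) : ℝ) - κ * t ^ finrank ℚ K| ≤
        D * t ^ ((finrank ℚ K : ℝ) - 1 / 2) := by
  obtain ⟨R, V, hR, hV, hcount⟩ := exists_abs_natCard_inter_mul_sub_le volume L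
  obtain ⟨C, hC⟩ := exists_measureReal_boundaryCollar_normLeOne_le K √R
  refine ⟨volume.real (normLeOne K) / V, C * √R / V, fun t ht ↦ ?_⟩
  have ht0 : 0 < t := one_pos.trans_le ht
  have hscale (S : Set (mixedSpace K)) : volume.real (t • S) = t ^ finrank ℚ K * volume.real S := by
    rw [measureReal_def, Measure.addHaar_smul, mixedEmbedding.finrank, abs_of_pos (by positivity),
      ENNReal.toReal_mul, ENNReal.toReal_ofReal (by positivity), measureReal_def]
  have hcollar : volume.real (boundaryCollar R (t • normLeOne K)) ≤
      t ^ finrank ℚ K * (C * (√R / √t)) := by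
    have hsq : (√R / √t) ^ 2 = R / t := by rw [div_pow, Real.sq_sqrt hR.le, Real.sq_sqrt ht0.le]
    have : boundaryCollar R (t • normLeOne K) =
        t • boundaryCollar ((√R / √t) ^ 2) (normLeOne K) := by
      rw [smul_boundaryCollar ht0, hsq, mul_div_cancel₀ _ ht0.ne']
    rw [this, hscale]
    gcongr
    exact hC _ (by positivity) (div_le_self (by positivity) (Real.one_le_sqrt.2 ht))
  have hmain := (hcount _ ((isBounded_normLeOne K).smul₀ t)).trans hcollar
  have hpow : t ^ ((finrank ℚ K : ℝ) - 1 / 2) = t ^ finrank ℚ K / √t := by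
    rw [Real.rpow_sub ht0, Real.rpow_natCast, Real.sqrt_eq_rpow]
  rw [hscale] at hmain
  refine le_of_mul_le_mul_right ?_ hV
  rw [← abs_of_pos hV, ← abs_mul, abs_of_pos hV]
  calc _ = |_ * V - t ^ finrank ℚ K * volume.real (normLeOne K)| := by congr 1; field_simp
    _ ≤ _ := hmain
    _ = _ := by rw [hpow]; field_simp

variable {K} in
theorem natCard_absNorm_le_mk0_eq {C : ClassGroup (𝓞 K)} {J : (Ideal (𝓞 K))⁰}
    (hJ : ClassGroup.mk0 J = C⁻¹) (s : ℝ) :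
    Nat.card {I : (Ideal (𝓞 K))⁰ // absNorm (I : Ideal (𝓞 K)) ≤ s ∧ ClassGroup.mk0 I = C} =
      Nat.card {I : (Ideal (𝓞 K))⁰ // (J : Ideal (𝓞 K)) ∣ I ∧
        (I : Ideal (𝓞 K)).IsPrincipal ∧ absNorm (I : Ideal (𝓞 K)) ≤ s * absNorm J.1} := by
  simp_rw [← nonZeroDivisors_dvd_iff_dvd_coe]
  refine Nat.card_congr <| ((Equiv.dvd J).subtypeEquiv fun I ↦ ?_).trans
    (Equiv.subtypeSubtypeEquivSubtypeInter (fun I : (Ideal (𝓞 K))⁰ ↦ J ∣ I) _)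
  rw [← ClassGroup.mk0_eq_one_iff (SetLike.coe_mem _)]
  simp_rw [Equiv.dvd_apply, Submonoid.coe_mul, ← Submonoid.mul_def, map_mul, hJ,
    inv_mul_eq_one, Nat.cast_mul, mul_comm s, eq_comm, and_comm, and_congr_left_iff]
  exact fun _ ↦
    (mul_le_mul_iff_of_pos_left (Nat.cast_pos.mpr (absNorm_pos_of_nonZeroDivisors J))).symm

theorem natCard_inter_idealLattice (J : (Ideal (𝓞 K))⁰) (s : ℝ) :
    Nat.card ({x | x ∈ fundamentalCone K ∧ mixedEmbedding.norm x ≤ s} ∩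
      (idealLattice K (FractionalIdeal.mk0 K J)) : Set (mixedSpace K)) =
    Nat.card {a : idealSet K J // mixedEmbedding.norm (a : mixedSpace K) ≤ s} := by
  refine Nat.card_congr ((Equiv.subtypeEquivProp ?_).trans
    (Equiv.subtypeSubtypeEquivSubtypeInter _ (mixedEmbedding.norm · ≤ s)).symm)
  ext x
  simp only [Set.mem_inter_iff, Set.mem_ofPred_eq, SetLike.mem_coe, mem_idealLattice, mem_idealSet]
  constructor
  · rintro ⟨⟨hx, hxs⟩, _, ⟨y, hy, rfl⟩, hyx⟩
    exact ⟨⟨hx, y, hy, hyx⟩, hxs⟩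
  · rintro ⟨⟨hx, y, hy, rfl⟩, hxs⟩
    exact ⟨⟨hx, hxs⟩, (y : K), by simp [hy], rfl⟩

variable {K} in
theorem natCard_smul_normLeOne_inter_idealLattice {C : ClassGroup (𝓞 K)} {J : (Ideal (𝓞 K))⁰}
    (hJ : ClassGroup.mk0 J = C⁻¹) {s t : ℝ} (ht : 0 < t) (hst : t ^ finrank ℚ K = s * absNorm J.1) :
    Nat.card (t • normLeOne K ∩ (idealLattice K (FractionalIdeal.mk0 K J)) :
        Set (mixedSpace K)) =
      Nat.card {I : (Ideal (𝓞 K))⁰ // absNorm (I : Ideal (𝓞 K)) ≤ s ∧ ClassGroup.mk0 I = C} *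
        torsionOrder K := by
  rw [smul_normLeOne K ht, natCard_inter_idealLattice, hst, ← card_isPrincipal_dvd_norm_le,
    natCard_absNorm_le_mk0_eq hJ]

theorem exists_abs_natCard_absNorm_le_mk0_eq_sub_le (C : ClassGroup (𝓞 K)) :
    ∃ κ D : ℝ, ∀ s : ℝ, 1 ≤ s → |(Nat.card {I : (Ideal (𝓞 K))⁰ //
      absNorm (I : Ideal (𝓞 K)) ≤ s ∧ ClassGroup.mk0 I = C} : ℝ) - κ * s| ≤
        D * s ^ (1 - 1 / (2 * finrank ℚ K : ℝ)) := by
  classical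
  obtain ⟨J, hJ⟩ := ClassGroup.mk0_surjective C⁻¹
  obtain ⟨κ, D, hcount⟩ := exists_abs_natCard_smul_normLeOne_inter_sub_le K
    (idealLattice K (FractionalIdeal.mk0 K J))
  set q : ℝ := (absNorm (J : Ideal (𝓞 K)) : ℝ)
  have hq : 1 ≤ q := Nat.one_le_cast.2 (absNorm_pos_of_nonZeroDivisors J)
  set w : ℝ := (torsionOrder K : ℝ)
  have hw : 0 < w := Nat.cast_pos.2 (torsionOrder_pos K)
  have hn : (finrank ℚ K : ℝ) ≠ 0 := Nat.cast_ne_zero.2 finrank_pos.ne'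
  refine ⟨κ * q / w, D * q ^ (1 - 1 / (2 * finrank ℚ K : ℝ)) / w, fun s hs ↦ ?_⟩
  have hs0 : 0 < s := one_pos.trans_le hs
  have hsq : 0 ≤ s * q := by positivity
  have ht : 1 ≤ (s * q) ^ (1 / finrank ℚ K : ℝ) :=
    Real.one_le_rpow (one_le_mul_of_one_le_of_one_le hs hq) (by positivity)
  have htn : ((s * q) ^ (1 / finrank ℚ K : ℝ)) ^ finrank ℚ K = s * q := by
    rw [one_div, Real.rpow_inv_natCast_pow hsq (finrank_pos.ne')]
  have hmain := hcount _ ht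
  rw [natCard_smul_normLeOne_inter_idealLattice hJ (one_pos.trans_le ht) htn, htn,
    ← Real.rpow_mul hsq, Nat.cast_mul, Real.mul_rpow hs0.le (by positivity)] at hmain
  refine le_of_mul_le_mul_right ?_ hw
  rw [← abs_of_pos hw, ← abs_mul, abs_of_pos hw]
  have hexp : 1 / finrank ℚ K * ((finrank ℚ K : ℝ) - 1 / 2) = 1 - 1 / (2 * finrank ℚ K : ℝ) := by
    field_simp
  rw [hexp] at hmain
  calc _ = |_ * w - κ * (s * q)| := by congr 1; field_simp
    _ ≤ _ := hmain
    _ = _ := by field_simp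

theorem natCard_absNorm_le_eq_sum (N : ℕ) :
    Nat.card {I : (Ideal (𝓞 K))⁰ // absNorm (I : Ideal (𝓞 K)) ≤ N} =
      ∑ C : ClassGroup (𝓞 K), Nat.card {I : (Ideal (𝓞 K))⁰ //
        absNorm (I : Ideal (𝓞 K)) ≤ N ∧ ClassGroup.mk0 I = C} := by
  classical
  have : Fintype {I : (Ideal (𝓞 K))⁰ // absNorm (I : Ideal (𝓞 K)) ≤ N} :=
    @Fintype.ofFinite _ (Ideal.finite_setOfPred_absNorm_le₀ (S := 𝓞 K) N)
  let e (C : ClassGroup (𝓞 K)) := Equiv.subtypeSubtypeEquivSubtypeInter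
    (fun I : (Ideal (𝓞 K))⁰ ↦ absNorm I.1 ≤ N) (fun I ↦ ClassGroup.mk0 I = C)
  simp_rw [← Nat.card_congr (e _), Nat.card_eq_fintype_card, Fintype.subtype_card]
  exact Finset.card_eq_sum_card_fiberwise fun _ _ ↦ Finset.mem_univ _

-- The constant is not computed along the way but read off from the known asymptotics.
theorem exists_abs_natCard_absNorm_le_sub_le : ∃ D : ℝ, ∀ N : ℕ, 1 ≤ N →
    |(Nat.card {I : (Ideal (𝓞 K))⁰ // absNorm (I : Ideal (𝓞 K)) ≤ N} : ℝ) -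
      dedekindZeta_residue K * N| ≤ D * (N : ℝ) ^ (1 - 1 / (2 * finrank ℚ K : ℝ)) := by
  choose κ D h using exists_abs_natCard_absNorm_le_mk0_eq_sub_le K
  have hmain (N : ℕ) (hN : 1 ≤ N) :
      |(Nat.card {I : (Ideal (𝓞 K))⁰ // absNorm (I : Ideal (𝓞 K)) ≤ N} : ℝ) - (∑ C, κ C) * N| ≤
        (∑ C, D C) * (N : ℝ) ^ (1 - 1 / (2 * finrank ℚ K : ℝ)) := by
    rw [natCard_absNorm_le_eq_sum, Nat.cast_sum, Finset.sum_mul, ← Finset.sum_sub_distrib,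
      Finset.sum_mul]
    refine (Finset.abs_sum_le_sum_abs _ _).trans (Finset.sum_le_sum fun C _ ↦ ?_)
    exact_mod_cast h C N (Nat.one_le_cast.2 hN)
  suffices hκ : ∑ C, κ C = dedekindZeta_residue K from ⟨∑ C, D C, hκ ▸ hmain⟩
  have hlim := (NumberField.Ideal.tendsto_norm_le_div_atTop₀ K).comp
    (tendsto_natCast_atTop_atTop (R := ℝ))
  refine tendsto_nhds_unique (tendsto_iff_norm_sub_tendsto_zero.2 ?_) hlim
  have hn : (0 : ℝ) < finrank ℚ K := Nat.cast_pos.2 finrank_pos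
  have hzero := ((tendsto_rpow_neg_atTop (y := 1 / (2 * finrank ℚ K : ℝ)) (by positivity)).comp
    (tendsto_natCast_atTop_atTop (R := ℝ))).const_mul (∑ C, D C)
  rw [mul_zero] at hzero
  refine squeeze_zero' (Eventually.of_forall fun _ ↦ norm_nonneg _) ?_ hzero
  filter_upwards [eventually_ge_atTop 1] with N hN
  have hN0 : (0 : ℝ) < N := Nat.cast_pos.2 hN
  simp only [Function.comp_apply, Nat.cast_le]
  rw [Real.norm_eq_abs, div_sub' hN0.ne', abs_div, abs_of_pos hN0, div_le_iff₀ hN0,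
    mul_comm (N : ℝ), mul_assoc, ← Real.rpow_add_one hN0.ne', neg_add_eq_sub]
  exact hmain N hN

end IdealCount

section IdealVonMangoldt

open ArithmeticFunction Ideal Module
open UniqueFactorizationMonoid (normalizedFactors prime_of_normalized_factor
  prod_normalizedFactors emultiplicity_eq_count_normalizedFactors)

variable {R : Type*} [CommRing R] [IsDedekindDomain R] [Module.Free ℤ R]

open scoped Classical in
/-- The von Mangoldt function on ideals: `Λ(P ^ k) = log N(P)` for `P` prime and `k ≥ 1`, and
`Λ(I) = 0` if `I` is not a prime power. The prime `P` is recovered as the radical of `P ^ k`. -/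
noncomputable def idealVonMangoldt (I : Ideal R) : ℝ :=
  if IsPrimePow I then Real.log (absNorm I.radical) else 0

theorem idealVonMangoldt_nonneg (I : Ideal R) : 0 ≤ idealVonMangoldt I := by
  rw [idealVonMangoldt]
  split_ifs
  · exact Real.log_natCast_nonneg _
  · exact le_rfl

theorem idealVonMangoldt_pow {P : Ideal R} (hP : Prime P) {k : ℕ} (hk : 0 < k) :
    idealVonMangoldt (P ^ k) = Real.log (absNorm P) := by
  rw [idealVonMangoldt, if_pos ⟨P, k, hP, hk, rfl⟩, Ideal.radical_pow _ hk.ne',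
    (isPrime_of_prime hP).radical]

variable [Module.Finite ℤ R]

theorem two_le_absNorm_of_prime {P : Ideal R} (hP : Prime P) : 2 ≤ absNorm P := by
  have hP0 : absNorm P ≠ 0 := absNorm_eq_zero_iff.not.2 hP.ne_zero
  have hP1 : absNorm P ≠ 1 := absNorm_eq_one_iff.not.2 (isPrime_of_prime hP).ne_top
  lia

theorem absNorm_pow_injective {P : Ideal R} (hP : Prime P) :
    Function.Injective fun k ↦ absNorm P ^ k :=
  Nat.pow_right_injective (two_le_absNorm_of_prime hP)

theorem pow_injOn_prime :
    Set.InjOn (fun x : (_ : Ideal R) × ℕ ↦ x.1 ^ x.2) {x | Prime x.1 ∧ 0 < x.2} := by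
  rintro ⟨P, k⟩ ⟨hP, hk⟩ ⟨Q, j⟩ ⟨hQ, -⟩ (heq : P ^ k = Q ^ j)
  obtain rfl : P = Q := eq_of_prime_pow_eq hP hQ hk heq
  exact congrArg _ (absNorm_pow_injective hP (by simp only [← map_pow, heq]))

theorem log_absNorm_eq_sum {I : Ideal R} (hI : I ≠ 0) : Real.log (absNorm I) =
    ∑ P ∈ (normalizedFactors I).toFinset, (normalizedFactors I).count P • Real.log (absNorm P) := by
  have hprod : (normalizedFactors I).prod = I :=
    associated_iff_eq.1 (prod_normalizedFactors hI)
  rw [← Finset.sum_multiset_map_count]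
  conv_lhs => rw [← hprod, map_multiset_prod]
  rw [Nat.cast_multiset_prod, Multiset.map_map, Real.log_multiset_prod, Multiset.map_map]
  · rfl
  · intro x hx
    obtain ⟨P, hP, rfl⟩ := Multiset.mem_map.1 hx
    exact Nat.cast_ne_zero.2
      (absNorm_eq_zero_iff.not.2 (prime_of_normalized_factor P hP).ne_zero)

theorem sum_idealVonMangoldt_of_mem_iff_dvd {I : Ideal R} (hI : I ≠ 0) {s : Finset (Ideal R)}
    (hs : ∀ J, J ∈ s ↔ J ∣ I) : ∑ J ∈ s, idealVonMangoldt J = Real.log (absNorm I) := by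
  classical
  have hprime {x : (_ : Ideal R) × ℕ} (hx : x ∈ (normalizedFactors I).toFinset.sigma
      fun P ↦ Finset.Icc 1 ((normalizedFactors I).count P)) :
      Prime x.1 ∧ 0 < x.2 ∧ x.2 ≤ (normalizedFactors I).count x.1 := by
    simp only [Finset.mem_sigma, Multiset.mem_toFinset, Finset.mem_Icc] at hx
    exact ⟨prime_of_normalized_factor _ hx.1, hx.2⟩
  have hdvd {P : Ideal R} (hP : Prime P) (k : ℕ) :
      P ^ k ∣ I ↔ k ≤ (normalizedFactors I).count P := by
    rw [pow_dvd_iff_le_emultiplicity, emultiplicity_eq_count_normalizedFactors hP.irreducible hI,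
      normalize_eq, Nat.cast_le]
  rw [log_absNorm_eq_sum hI]
  calc _ = ∑ x ∈ (normalizedFactors I).toFinset.sigma
        fun P ↦ Finset.Icc 1 ((normalizedFactors I).count P), Real.log (absNorm x.1) := ?_
    _ = _ := by simp [Finset.sum_sigma]
  symm
  refine Finset.sum_of_injOn (fun x ↦ x.1 ^ x.2)
    (pow_injOn_prime.mono fun x hx ↦ show _ ∧ _ from ⟨(hprime hx).1, (hprime hx).2.1⟩)
    (fun x hx ↦ (hs _).2 ((hdvd (hprime hx).1 _).2 (hprime hx).2.2)) (fun J hJ hJ' ↦ ?_)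
    fun x hx ↦ (idealVonMangoldt_pow (hprime hx).1 (hprime hx).2.1).symm
  refine if_neg ?_
  rintro ⟨P, k, hP, hk, rfl⟩
  have hcount := (hdvd hP k).1 ((hs _).1 hJ)
  refine hJ' ⟨⟨P, k⟩, ?_, rfl⟩
  simp only [Finset.mem_coe, Finset.mem_sigma, Multiset.mem_toFinset, Finset.mem_Icc]
  exact ⟨Multiset.count_pos.1 (hk.trans_le hcount), hk, hcount⟩

theorem sum_log_absNorm_le {p : ℕ} (hp : p.Prime) {s : Finset (Ideal R)}
    (hs : ∀ P ∈ s, Prime P ∧ (p : R) ∈ P) :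
    ∑ P ∈ s, Real.log (absNorm P) ≤ finrank ℤ R * Real.log p := by
  have hpos {P : Ideal R} (hP : P ∈ s) : 0 < absNorm P :=
    two_pos.trans_le (two_le_absNorm_of_prime (hs P hP).1)
  have hdvd : ∏ P ∈ s, P ∣ span {(p : R)} :=
    Finset.prod_primes_dvd _ (fun P hP ↦ (hs P hP).1) fun P hP ↦
      dvd_span_singleton.2 (hs P hP).2
  have hle := Nat.le_of_dvd (pow_pos hp.pos _)
    (absNorm_span_natCast (S := R) p ▸ map_dvd absNorm hdvd)
  rw [map_prod] at hle
  rw [← Real.log_prod fun P hP ↦ Nat.cast_ne_zero.2 (hpos hP).ne', ← Real.log_pow]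
  exact Real.log_le_log (Finset.prod_pos fun P hP ↦ Nat.cast_pos.2 (hpos hP)) (mod_cast hle)

variable [CharZero R]

variable (R) in
/-- The finite set of ideals of absolute norm `m`. -/
noncomputable def idealsOfNorm (m : ℕ) : Finset (Ideal R) :=
  (finite_setOfPred_absNorm_eq (S := R) m).toFinset

@[simp]
theorem mem_idealsOfNorm {m : ℕ} {I : Ideal R} : I ∈ idealsOfNorm R m ↔ absNorm I = m :=
  Set.Finite.mem_toFinset _

theorem card_filter_dvd_idealsOfNorm {m b : ℕ} (hb : b ∣ m) (hb0 : b ≠ 0) {J : Ideal R}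
    (hJ : absNorm J = b) [DecidablePred fun I ↦ J ∣ I] :
    {I ∈ idealsOfNorm R m | J ∣ I}.card = (idealsOfNorm R (m / b)).card := by
  have hJ0 : J ≠ 0 := by
    rintro rfl
    exact hb0 (hJ.symm.trans (map_zero _))
  refine (Finset.card_bij (fun A _ ↦ J * A) ?_ (fun A _ B _ h ↦ mul_left_cancel₀ hJ0 h) ?_).symm
  · simp only [mem_idealsOfNorm, Finset.mem_filter, map_mul]
    intro A hA
    rw [hJ, hA, Nat.mul_div_cancel' hb]
    exact ⟨rfl, dvd_mul_right _ _⟩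
  · simp only [mem_idealsOfNorm, Finset.mem_filter]
    rintro _ ⟨hI, A, rfl⟩
    rw [map_mul, hJ] at hI
    exact ⟨A, by rw [← hI, Nat.mul_div_cancel_left _ (Nat.pos_of_ne_zero hb0)], rfl⟩

variable (R) in
/-- The coefficients `∑_{N(I) = m} Λ(I)` of the Dirichlet series `-ζ'/ζ` of `R`. -/
noncomputable def idealVonMangoldtSum (m : ℕ) : ℝ :=
  ∑ I ∈ idealsOfNorm R m, idealVonMangoldt I

theorem idealVonMangoldtSum_nonneg (m : ℕ) : 0 ≤ idealVonMangoldtSum R m :=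
  Finset.sum_nonneg fun I _ ↦ idealVonMangoldt_nonneg I

theorem card_idealsOfNorm_mul_log (m : ℕ) : ((idealsOfNorm R m).card : ℝ) * Real.log m =
    ∑ x ∈ m.divisorsAntidiagonal, ((idealsOfNorm R x.1).card : ℝ) * idealVonMangoldtSum R x.2 := by
  classical
  rcases eq_or_ne m 0 with rfl | hm
  · simp
  have hdivisors {I : Ideal R} (hI : absNorm I = m) :
      ∑ b ∈ m.divisors, ∑ J ∈ idealsOfNorm R b, (if J ∣ I then idealVonMangoldt J else 0) =
        Real.log m := by
    have hI0 : I ≠ 0 := by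
      rintro rfl
      exact hm (hI.symm.trans (map_zero _))
    rw [← Finset.sum_biUnion, ← Finset.sum_filter,
      sum_idealVonMangoldt_of_mem_iff_dvd hI0 fun J ↦ ?_, hI]
    · simp only [Finset.mem_filter, Finset.mem_biUnion, Nat.mem_divisors, mem_idealsOfNorm,
        and_iff_right_iff_imp]
      exact fun h ↦ ⟨_, ⟨hI ▸ map_dvd absNorm h, hm⟩, rfl⟩
    · refine fun a _ b _ hab ↦ Finset.disjoint_left.2 fun J ha hb ↦ hab ?_
      rw [← mem_idealsOfNorm.1 ha, mem_idealsOfNorm.1 hb]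
  rw [Nat.sum_divisorsAntidiagonal'
      (f := fun a b ↦ ((idealsOfNorm R a).card : ℝ) * idealVonMangoldtSum R b),
    ← nsmul_eq_mul, ← Finset.sum_const,
    ← Finset.sum_congr rfl fun I hI ↦ hdivisors (mem_idealsOfNorm.1 hI), Finset.sum_comm]
  refine Finset.sum_congr rfl fun b hb ↦ ?_
  obtain ⟨hbm, -⟩ := Nat.mem_divisors.1 hb
  rw [Finset.sum_comm, idealVonMangoldtSum, Finset.mul_sum]
  refine Finset.sum_congr rfl fun J hJ ↦ ?_
  rw [← Finset.sum_filter, Finset.sum_const, nsmul_eq_mul,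
    card_filter_dvd_idealsOfNorm hbm (ne_zero_of_dvd_ne_zero hm hbm) (mem_idealsOfNorm.1 hJ)]

theorem idealVonMangoldtSum_le (m : ℕ) :
    idealVonMangoldtSum R m ≤ finrank ℤ R * vonMangoldt m := by
  classical
  set s := {I ∈ idealsOfNorm R m | IsPrimePow I}
  have hsum : idealVonMangoldtSum R m = ∑ I ∈ s, Real.log (absNorm I.radical) :=
    (Finset.sum_filter _ _).symm
  have hmem {I : Ideal R} (hI : I ∈ s) :
      ∃ P k, Prime P ∧ 0 < k ∧ absNorm P ^ k = m ∧ P ^ k = I ∧ I.radical = P := by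
    obtain ⟨hIm, P, k, hP, hk, rfl⟩ := Finset.mem_filter.1 hI
    rw [mem_idealsOfNorm, map_pow] at hIm
    exact ⟨P, k, hP, hk, hIm, rfl,
      (Ideal.radical_pow _ hk.ne').trans (isPrime_of_prime hP).radical⟩
  rcases s.eq_empty_or_nonempty with he | ⟨I, hI⟩
  · rw [hsum, he, Finset.sum_empty]
    exact mul_nonneg (Nat.cast_nonneg _) vonMangoldt_nonneg
  obtain ⟨P, k, hP, hk, hPm, -⟩ := hmem hI
  have : P.IsMaximal := (isPrime_of_prime hP).isMaximal hP.ne_zero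
  obtain ⟨p, f, hf, -, hp, hPf⟩ := exists_prime_and_absNorm_eq_pow P
  have hm : m = p ^ (f * k) := by rw [← hPm, hPf, pow_mul]
  have hinj : Set.InjOn Ideal.radical (s : Set (Ideal R)) := by
    intro I hI J hJ hIJ
    obtain ⟨P, k, hP, -, hPm, rfl, hPr⟩ := hmem hI
    obtain ⟨Q, j, hQ, -, hQm, rfl, hQr⟩ := hmem hJ
    obtain rfl : P = Q := hPr.symm.trans (hIJ.trans hQr)
    rw [absNorm_pow_injective hP (hPm.trans hQm.symm)]
  rw [hsum, ← Finset.sum_image (f := fun P ↦ Real.log (absNorm P)) hinj, hm,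
    vonMangoldt_apply_pow (by positivity), vonMangoldt_apply_prime hp]
  refine sum_log_absNorm_le hp fun Q hQ ↦ ?_
  obtain ⟨J, hJ, rfl⟩ := Finset.mem_image.1 hQ
  obtain ⟨Q, j, hQ, hj, hQm, -, hQr⟩ := hmem hJ
  have hmQ : (m : R) ∈ Q := by
    rw [← hQm, Nat.cast_pow]
    exact pow_mem_of_mem _ (absNorm_mem Q) _ hj
  rw [hm, Nat.cast_pow] at hmQ
  rw [hQr]
  exact ⟨hQ, (isPrime_of_prime hQ).mem_of_pow_mem _ hmQ⟩

theorem idealVonMangoldtSum_of_prime {p : ℕ} (hp : p.Prime) :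
    idealVonMangoldtSum R p = (idealsOfNorm R p).card * Real.log p := by
  rw [idealVonMangoldtSum, ← nsmul_eq_mul, ← Finset.sum_const]
  refine Finset.sum_congr rfl fun P hP ↦ ?_
  rw [mem_idealsOfNorm] at hP
  have hprime : Prime P := by
    refine prime_of_isPrime ?_ (isPrime_of_irreducible_absNorm (hP ▸ hp.prime.irreducible))
    rintro rfl
    exact hp.ne_zero (hP.symm.trans (map_zero _))
  rw [← pow_one P, idealVonMangoldt_pow hprime one_pos, hP]

theorem card_idealsOfNorm_prime_le {p : ℕ} (hp : p.Prime) :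
    ((idealsOfNorm R p).card : ℝ) ≤ finrank ℤ R := by
  have h := idealVonMangoldtSum_le (R := R) p
  rw [idealVonMangoldtSum_of_prime hp, vonMangoldt_apply_prime hp] at h
  exact le_of_mul_le_mul_right h (Real.log_pos (Nat.one_lt_cast.2 hp.one_lt))

end IdealVonMangoldt

section PrimeMeans

open Topology
open ArithmeticFunction (vonMangoldt vonMangoldt_nonneg vonMangoldt_sum)

theorem sum_vonMangoldt_le (N : ℕ) :
    ∑ k ∈ Finset.Icc 1 N, vonMangoldt k ≤ (Real.log 4 + 4) * N := by
  have h := Chebyshev.psi_le_const_mul_self (x := N) N.cast_nonneg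
  rwa [Chebyshev.psi, Nat.floor_natCast] at h

theorem tendsto_psi_div : Tendsto (fun N : ℕ ↦ Chebyshev.psi N / N) atTop (𝓝 1) := by
  simp_rw [Chebyshev.psi, Nat.floor_natCast]
  refine tendsto_sum_div_of_mul_log_eq (c := fun _ ↦ 1) (κ := 1) (C := 0) (fun _ ↦ zero_le_one)
    (fun _ ↦ vonMangoldt_nonneg) one_pos le_rfl one_ne_zero (fun N _ ↦ by simp) sum_vonMangoldt_le
    fun n ↦ ?_
  simp_rw [one_mul]
  rw [Nat.sum_divisorsAntidiagonal' (f := fun _ b ↦ vonMangoldt b), vonMangoldt_sum]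

theorem tendsto_psi_sub_theta_div :
    Tendsto (fun N : ℕ ↦ (Chebyshev.psi N - Chebyshev.theta N) / N) atTop (𝓝 0) := by
  obtain ⟨C, hC⟩ := Chebyshev.psi_sub_theta_le_mul_sqrt
  have hlim : Tendsto (fun N : ℕ ↦ C * (√(N : ℝ))⁻¹) atTop (𝓝 0) := by
    simpa using (tendsto_inv_atTop_zero.comp
      (Real.tendsto_sqrt_atTop.comp tendsto_natCast_atTop_atTop)).const_mul C
  refine squeeze_zero (fun N ↦ ?_) (fun N ↦ ?_) hlim
  · exact div_nonneg (sub_nonneg.2 (Chebyshev.theta_le_psi N)) N.cast_nonneg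
  · calc _ ≤ C * √N / N := by gcongr; exact hC N
      _ = C * (√(N : ℝ))⁻¹ := by rw [mul_div_assoc, Real.sqrt_div_self]

theorem tendsto_theta_div : Tendsto (fun N : ℕ ↦ Chebyshev.theta N / N) atTop (𝓝 1) := by
  have h := tendsto_psi_div.sub tendsto_psi_sub_theta_div
  rw [sub_zero] at h
  exact h.congr fun N ↦ by ring

theorem tendsto_primesLE_card_mul_log_div :
    Tendsto (fun N : ℕ ↦ (Nat.primesLE N).card * Real.log N / N) atTop (𝓝 1) := by
  have hlog : Tendsto (fun N : ℕ ↦ (Real.log N)⁻¹) atTop (𝓝 0) :=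
    tendsto_inv_atTop_zero.comp (Real.tendsto_log_atTop.comp tendsto_natCast_atTop_atTop)
  have hbigO := (Chebyshev.primeCounting_sub_theta_div_log_isBigO.comp_tendsto
    tendsto_natCast_atTop_atTop).mul
      (Asymptotics.isBigO_refl (fun N : ℕ ↦ Real.log N / N) atTop)
  have hdiff := (hbigO.trans_tendsto (hlog.congr' ?_)).add tendsto_theta_div
  · rw [zero_add] at hdiff
    refine hdiff.congr' ?_
    filter_upwards [eventually_ge_atTop 2] with N hN
    have hlogN : 0 < Real.log N := Real.log_pos (Nat.one_lt_cast.2 hN)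
    simp only [Function.comp_apply, Nat.floor_natCast, Nat.primesLE_card_eq_primeCounting]
    field_simp
    ring
  · filter_upwards [eventually_ge_atTop 2] with N hN
    have hlogN : 0 < Real.log N := Real.log_pos (Nat.one_lt_cast.2 hN)
    simp only [Function.comp_apply]
    field_simp

theorem tendsto_primesLE_card : Tendsto (fun N ↦ ((Nat.primesLE N).card : ℝ)) atTop atTop := by
  simp_rw [Nat.primesLE_card_eq_primeCounting]
  exact tendsto_natCast_atTop_atTop.comp Nat.tendsto_primeCounting

/-- The sequence `a` has mean value `l` over the primes: the averages of `a p` over the primes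
`p ≤ N` tend to `l`. -/
def HasPrimeMean (a : ℕ → ℝ) (l : ℝ) : Prop :=
  Tendsto (fun N ↦ (∑ p ∈ Nat.primesLE N, a p) / (Nat.primesLE N).card) atTop (𝓝 l)

namespace HasPrimeMean

variable {a b : ℕ → ℝ} {l m : ℝ}

theorem add (ha : HasPrimeMean a l) (hb : HasPrimeMean b m) :
    HasPrimeMean (fun p ↦ a p + b p) (l + m) := by
  simpa only [HasPrimeMean, Finset.sum_add_distrib, add_div] using Tendsto.add ha hb

theorem sub (ha : HasPrimeMean a l) (hb : HasPrimeMean b m) :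
    HasPrimeMean (fun p ↦ a p - b p) (l - m) := by
  simpa only [HasPrimeMean, Finset.sum_sub_distrib, sub_div] using Tendsto.sub ha hb

theorem const_mul (c : ℝ) (ha : HasPrimeMean a l) : HasPrimeMean (fun p ↦ c * a p) (c * l) := by
  simpa only [HasPrimeMean, ← Finset.mul_sum, mul_div_assoc] using Tendsto.const_mul c ha

theorem sum {ι : Type*} {s : Finset ι} {a : ι → ℕ → ℝ} {l : ι → ℝ}
    (h : ∀ i ∈ s, HasPrimeMean (a i) (l i)) :
    HasPrimeMean (fun p ↦ ∑ i ∈ s, a i p) (∑ i ∈ s, l i) := by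
  refine (tendsto_finsetSum s h).congr fun N ↦ ?_
  rw [← Finset.sum_div, Finset.sum_comm]

theorem congr_of_not_dvd (hb : HasPrimeMean b l) {M : ℕ} (hM : M ≠ 0)
    (hab : ∀ p, p.Prime → ¬ p ∣ M → a p = b p) : HasPrimeMean a l := by
  have hdiff : HasPrimeMean (fun p ↦ a p - b p) 0 := by
    refine squeeze_zero_norm (fun N ↦ ?_)
      (tendsto_primesLE_card.const_div_atTop (∑ p ∈ M.divisors, |a p - b p|))
    rw [norm_div, Real.norm_natCast, Real.norm_eq_abs]
    gcongr
    refine (Finset.abs_sum_le_sum_abs _ _).trans ?_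
    rw [← Finset.sum_filter_ne_zero]
    refine Finset.sum_le_sum_of_subset_of_nonneg (fun p hp ↦ ?_) fun p _ _ ↦ abs_nonneg _
    obtain ⟨hp, hne⟩ := Finset.mem_filter.1 hp
    refine Nat.mem_divisors.2 ⟨not_imp_comm.1 (hab p (Nat.mem_primesLE.1 hp).2) ?_, hM⟩
    exact fun h ↦ hne (by rw [h, sub_self, abs_zero])
  simpa using hdiff.add hb

theorem abs_sum_mul_log_sub_le {D : ℝ} (ha : ∀ p, p.Prime → |a p| ≤ D) (N : ℕ) :
    |(∑ p ∈ Nat.primesLE N, a p) * Real.log N - ∑ p ∈ Nat.primesLE N, a p * Real.log p| ≤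
      D * ((Nat.primesLE N).card * Real.log N - Chebyshev.theta N) := by
  calc _ = |∑ p ∈ Nat.primesLE N, a p * (Real.log N - Real.log p)| := by
        simp_rw [Finset.sum_mul, mul_sub, Finset.sum_sub_distrib]
    _ ≤ ∑ p ∈ Nat.primesLE N, D * (Real.log N - Real.log p) := by
        refine (Finset.abs_sum_le_sum_abs _ _).trans (Finset.sum_le_sum fun p hp ↦ ?_)
        obtain ⟨hpN, hp⟩ := Nat.mem_primesLE.1 hp
        have hlog : 0 ≤ Real.log N - Real.log p :=
          sub_nonneg.2 (Real.log_le_log (Nat.cast_pos.2 hp.pos) (Nat.cast_le.2 hpN))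
        rw [abs_mul, abs_of_nonneg hlog]
        gcongr
        exact ha p hp
    _ = _ := by
        rw [← Finset.mul_sum, Finset.sum_sub_distrib, Chebyshev.theta_eq_sum_primesLE_log,
          Finset.sum_const, nsmul_eq_mul]

theorem of_tendsto_sum_mul_log_div {D : ℝ} (ha : ∀ p, p.Prime → |a p| ≤ D)
    (h : Tendsto (fun N : ℕ ↦ (∑ p ∈ Nat.primesLE N, a p * Real.log p) / N) atTop (𝓝 l)) :
    HasPrimeMean a l := by
  have herr : Tendsto (fun N : ℕ ↦ ((∑ p ∈ Nat.primesLE N, a p) * Real.log N -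
      ∑ p ∈ Nat.primesLE N, a p * Real.log p) / N) atTop (𝓝 0) := by
    have hlim := (tendsto_primesLE_card_mul_log_div.sub tendsto_theta_div).const_mul D
    rw [sub_self, mul_zero] at hlim
    refine squeeze_zero_norm (fun N ↦ ?_) hlim
    rw [norm_div, Real.norm_natCast, Real.norm_eq_abs, ← sub_div, ← mul_div_assoc]
    gcongr
    exact abs_sum_mul_log_sub_le ha N
  have hquot := (herr.add h).div tendsto_primesLE_card_mul_log_div one_ne_zero
  rw [zero_add, div_one] at hquot
  refine hquot.congr' ?_
  filter_upwards [eventually_ge_atTop 2] with N hN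
  have hlog : Real.log N ≠ 0 := (Real.log_pos (Nat.one_lt_cast.2 hN)).ne'
  have hN0 : (N : ℝ) ≠ 0 := by positivity
  rw [Pi.div_apply, ← add_div, sub_add_cancel, div_div_div_cancel_right₀ hN0,
    mul_div_mul_right _ _ hlog]

end HasPrimeMean

end PrimeMeans

section PrimeIdealTheorem

open Ideal Topology
open Module (finrank)
open ArithmeticFunction (vonMangoldt)
open scoped nonZeroDivisors

theorem sum_card_idealsOfNorm (R : Type*) [CommRing R] [IsDedekindDomain R] [Module.Free ℤ R]
    [Module.Finite ℤ R] [CharZero R] (N : ℕ) : ∑ k ∈ Finset.Icc 1 N, (idealsOfNorm R k).card =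
      Nat.card {I : (Ideal R)⁰ // absNorm (I : Ideal R) ≤ N} := by
  classical
  have hmem (I : Ideal R) : I ∈ (Finset.Icc 1 N).biUnion (idealsOfNorm R) ↔
      I ∈ (Ideal R)⁰ ∧ absNorm I ≤ N := by
    rw [mem_nonZeroDivisors_iff_ne_zero, Ne, zero_eq_bot, ← absNorm_eq_zero_iff]
    simp [Nat.one_le_iff_ne_zero]
  rw [← Finset.card_biUnion fun i _ j _ hij ↦ Finset.disjoint_left.2 fun I hi hj ↦ hij ?_,
    ← Nat.card_eq_finsetCard]
  · exact Nat.card_congr ((Equiv.subtypeEquivRight hmem).trans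
      (Equiv.subtypeSubtypeEquivSubtypeInter (· ∈ (Ideal R)⁰) (absNorm · ≤ N)).symm)
  · rw [← mem_idealsOfNorm.1 hi, mem_idealsOfNorm.1 hj]

variable (K : Type*) [Field K] [NumberField K]

open scoped NumberField
open NumberField (dedekindZeta_residue dedekindZeta_residue_ne_zero)

theorem tendsto_sum_idealVonMangoldtSum_div :
    Tendsto (fun N : ℕ ↦ (∑ k ∈ Finset.Icc 1 N, idealVonMangoldtSum (𝓞 K) k) / N) atTop (𝓝 1) := by
  obtain ⟨D, hD⟩ := exists_abs_natCard_absNorm_le_sub_le K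
  have hrank : (1 : ℝ) ≤ finrank ℚ K := Nat.one_le_cast.2 Module.finrank_pos
  refine tendsto_sum_div_of_mul_log_eq (c := fun k ↦ ((idealsOfNorm (𝓞 K) k).card : ℝ))
    (κ := dedekindZeta_residue K) (δ := 1 / (2 * finrank ℚ K)) (C := D)
    (C' := finrank ℤ (𝓞 K) * (Real.log 4 + 4))
    (fun _ ↦ Nat.cast_nonneg _) idealVonMangoldtSum_nonneg (by positivity) ?_
    (dedekindZeta_residue_ne_zero K) (fun N hN ↦ ?_) (fun N ↦ ?_) card_idealsOfNorm_mul_log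
  · rw [div_le_one (by positivity)]
    linarith
  · rw [← Nat.cast_sum, sum_card_idealsOfNorm]
    exact hD N hN
  · calc _ ≤ ∑ k ∈ Finset.Icc 1 N, finrank ℤ (𝓞 K) * vonMangoldt k :=
          Finset.sum_le_sum fun k _ ↦ idealVonMangoldtSum_le k
      _ ≤ _ := by
          rw [← Finset.mul_sum, mul_assoc]
          gcongr
          exact sum_vonMangoldt_le N

theorem tendsto_sum_card_idealsOfNorm_mul_log_div : Tendsto (fun N : ℕ ↦
    (∑ p ∈ Nat.primesLE N, ((idealsOfNorm (𝓞 K) p).card : ℝ) * Real.log p) / N) atTop (𝓝 1) := by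
  have hnonprime : Tendsto (fun N : ℕ ↦
      (∑ k ∈ Finset.Icc 1 N with ¬ k.Prime, idealVonMangoldtSum (𝓞 K) k) / N) atTop (𝓝 0) := by
    have hlim := tendsto_psi_sub_theta_div.const_mul (finrank ℤ (𝓞 K) : ℝ)
    rw [mul_zero] at hlim
    refine squeeze_zero (fun N ↦ ?_) (fun N ↦ ?_) hlim
    · exact div_nonneg (Finset.sum_nonneg fun k _ ↦ idealVonMangoldtSum_nonneg k) N.cast_nonneg
    · rw [← mul_div_assoc, Chebyshev.psi_sub_theta_eq_sum_not_prime, Nat.floor_natCast,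
        Finset.mul_sum]
      exact div_le_div_of_nonneg_right
        (Finset.sum_le_sum fun k _ ↦ idealVonMangoldtSum_le k) N.cast_nonneg
  have hlim := (tendsto_sum_idealVonMangoldtSum_div K).sub hnonprime
  rw [sub_zero] at hlim
  refine hlim.congr fun N ↦ ?_
  rw [← sub_div, ← Finset.sum_filter_add_sum_filter_not (Finset.Icc 1 N) Nat.Prime,
    add_sub_cancel_right, Nat.primesLE_eq_filter_Icc_one]
  exact congrArg (· / _) (Finset.sum_congr rfl fun p hp ↦
    idealVonMangoldtSum_of_prime (Finset.mem_filter.1 hp).2)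

theorem hasPrimeMean_card_idealsOfNorm :
    HasPrimeMean (fun p ↦ ((idealsOfNorm (𝓞 K) p).card : ℝ)) 1 := by
  refine .of_tendsto_sum_mul_log_div (D := finrank ℤ (𝓞 K)) (fun p hp ↦ ?_)
    (tendsto_sum_card_idealsOfNorm_mul_log_div K)
  rw [Nat.abs_cast]
  exact card_idealsOfNorm_prime_le hp

end PrimeIdealTheorem

section EquidistributionAlongPrimes

variable {G : Type*} [Fintype G]

/-- The sequence `σ` of elements of a finite set, sampled at the primes, is equidistributed as
far as the test function `φ` can tell: the mean of `φ (σ p)` over the primes `p` is the mean of `φ`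
over the set. -/
def IsEquidistributedFor (σ : ℕ → G) (φ : G → ℝ) : Prop :=
  HasPrimeMean (fun p ↦ φ (σ p)) ((∑ s, φ s) / Fintype.card G)

namespace IsEquidistributedFor

variable {σ : ℕ → G} {φ ψ : G → ℝ}

theorem sub (hφ : IsEquidistributedFor σ φ) (hψ : IsEquidistributedFor σ ψ) :
    IsEquidistributedFor σ fun s ↦ φ s - ψ s := by
  simpa only [IsEquidistributedFor, Finset.sum_sub_distrib, sub_div] using HasPrimeMean.sub hφ hψ

theorem const_mul (c : ℝ) (hφ : IsEquidistributedFor σ φ) :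
    IsEquidistributedFor σ fun s ↦ c * φ s := by
  simpa only [IsEquidistributedFor, ← Finset.mul_sum, mul_div_assoc] using
    HasPrimeMean.const_mul c hφ

theorem sum {ι : Type*} {t : Finset ι} {φ : ι → G → ℝ}
    (h : ∀ i ∈ t, IsEquidistributedFor σ (φ i)) :
    IsEquidistributedFor σ fun s ↦ ∑ i ∈ t, φ i s := by
  rw [IsEquidistributedFor, Finset.sum_comm, Finset.sum_div]
  exact HasPrimeMean.sum h

end IsEquidistributedFor

end EquidistributionAlongPrimes

section ConjugationSums

variable {G : Type*} [Group G]

/-- The indicator function of the set of generators of the subgroup `C`. -/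
noncomputable def generatorIndicator (C : Subgroup G) : G → ℝ :=
  {s | Subgroup.zpowers s = C}.indicator 1

theorem sum_generatorIndicator (t : Finset (Subgroup G)) (s : G) :
    ∑ C ∈ t, generatorIndicator C s = {s | Subgroup.zpowers s ∈ t}.indicator 1 s := by
  classical
  simp [generatorIndicator, Set.indicator_apply]

variable [Fintype G]

/-- The sum of `φ` over the conjugates of `s`, each counted with the order of its centralizer. -/
def conjSum (φ : G → ℝ) (s : G) : ℝ := ∑ g, φ (g⁻¹ * s * g)

theorem sum_conjSum (φ : G → ℝ) : ∑ s, conjSum φ s = Fintype.card G * ∑ s, φ s := by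
  have hconj (g : G) : ∑ s, φ (g⁻¹ * s * g) = ∑ s, φ s :=
    Fintype.sum_equiv (MulAut.conj g⁻¹).toEquiv _ _ fun s ↦ by simp
  simp_rw [conjSum]
  rw [Finset.sum_comm, Finset.sum_congr rfl fun g _ ↦ hconj g, Finset.sum_const, nsmul_eq_mul,
    Finset.card_univ]

theorem conjSum_finset_sum {ι : Type*} (t : Finset ι) (φ : ι → G → ℝ) (s : G) :
    conjSum (fun x ↦ ∑ i ∈ t, φ i x) s = ∑ i ∈ t, conjSum (φ i) s :=
  Finset.sum_comm

theorem conjSum_eq_of_conj_invariant {φ : G → ℝ} (hφ : ∀ g s, φ (g⁻¹ * s * g) = φ s) (s : G) :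
    conjSum φ s = Fintype.card G * φ s := by
  rw [conjSum, Finset.sum_congr rfl fun g _ ↦ hφ g s, Finset.sum_const, nsmul_eq_mul,
    Finset.card_univ]

namespace IsEquidistributedFor

variable {σ : ℕ → G}
  (h : ∀ H : Subgroup G, IsEquidistributedFor σ (conjSum ((H : Set G).indicator 1)))
include h

theorem conjSum_generatorIndicator (H : Subgroup G) :
    IsEquidistributedFor σ (conjSum (generatorIndicator H)) := by
  classical
  have := Fintype.ofFinite (Subgroup G)
  induction H using WellFoundedLT.induction with
  | ind H ih =>
    have hsum : (H : Set G).indicator 1 =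
        fun s ↦ ∑ C ∈ insert H (Finset.univ.filter (· < H)), generatorIndicator C s := by
      ext s
      rw [sum_generatorIndicator]
      simp [Set.indicator_apply, ← le_iff_eq_or_lt]
    have hdiff := (h H).sub (.sum (t := Finset.univ.filter (· < H)) fun C hC ↦
      ih C (Finset.mem_filter_univ C |>.1 hC))
    convert hdiff using 2 with s
    rw [hsum, conjSum_finset_sum, Finset.sum_insert (by simp), add_sub_cancel_right]

theorem indicator {S : Set G} (hconj : ∀ g s, g⁻¹ * s * g ∈ S ↔ s ∈ S)
    (hgen : ∀ s ∈ S, ∀ t, Subgroup.zpowers s = Subgroup.zpowers t → t ∈ S) :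
    IsEquidistributedFor σ (S.indicator 1) := by
  classical
  have hsum : S.indicator 1 = fun s ↦ ∑ C ∈ S.toFinset.image Subgroup.zpowers,
      generatorIndicator C s := by
    ext s
    rw [sum_generatorIndicator]
    congr 1
    ext t
    simp only [Finset.mem_image, Set.mem_toFinset, Set.mem_ofPred]
    exact ⟨fun ht ↦ ⟨t, ht, rfl⟩, fun ⟨s, hs, hst⟩ ↦ hgen s hs t hst⟩
  have hmean := (IsEquidistributedFor.sum (t := S.toFinset.image Subgroup.zpowers) fun C _ ↦
    conjSum_generatorIndicator h C).const_mul (Fintype.card G : ℝ)⁻¹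
  convert hmean using 2 with s
  rw [← conjSum_finset_sum, ← hsum, conjSum_eq_of_conj_invariant, inv_mul_cancel_left₀]
  · exact Nat.cast_ne_zero.2 Fintype.card_ne_zero
  · exact fun g s ↦ by simp only [Set.indicator_apply, hconj, Pi.one_apply]

end IsEquidistributedFor

end ConjugationSums

section FrobeniusAndRoots

open Ideal

theorem charP_quotient_of_liesOver {S : Type*} [CommRing S] (p : ℕ) (P : Ideal S)
    [P.LiesOver (span {(p : ℤ)})] : CharP (S ⧸ P) p := by
  refine ⟨fun n ↦ ?_⟩
  rw [← map_natCast (Ideal.Quotient.mk P), Ideal.Quotient.eq_zero_iff_mem,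
    ← Int.natCast_dvd_natCast, ← mem_span_singleton, mem_of_liesOver P (span {(p : ℤ)}),
    algebraMap_int_eq, map_natCast]

theorem pow_char_eq_self_iff_exists_intCast {D : Type*} [CommRing D] [IsDomain D] (p : ℕ)
    [Fact p.Prime] [CharP D p] {x : D} : x ^ p = x ↔ ∃ n : ℤ, n = x := by
  have := charP_of_injective_algebraMap' (A := FractionRing D) D p
  have hinj := IsFractionRing.injective D (FractionRing D)
  rw [← hinj.eq_iff, map_pow, ← Subfield.mem_bot_iff_pow_eq_self, mem_bot_iff_intCast p]
  exact exists_congr fun n ↦ by rw [← hinj.eq_iff, map_intCast]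

theorem image_castHom_rootSet {D : Type*} [CommRing D] [IsDomain D] [Algebra ℤ D] (p : ℕ)
    [Fact p.Prime] [CharP D p] {m : ℤ[X]} (hm : m.Monic) :
    ZMod.castHom dvd_rfl D '' m.rootSet (ZMod p) = {x ∈ m.rootSet D | x ^ p = x} := by
  have hroot (n : ℤ) : (n : D) ∈ m.rootSet D ↔ (n : ZMod p) ∈ m.rootSet (ZMod p) := by
    let ι : ZMod p →ₐ[ℤ] D :=
      { ZMod.castHom dvd_rfl D with commutes' := fun n ↦ by simp }
    have hι : Function.Injective ι := (ZMod.castHom dvd_rfl D).injective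
    rw [mem_rootSet', mem_rootSet', and_iff_right (hm.map _).ne_zero,
      and_iff_right (hm.map _).ne_zero, ← map_intCast ι, aeval_algHom_apply,
      map_eq_zero_iff ι hι]
  ext x
  rw [Set.mem_image, ZMod.intCast_surjective.exists, Set.mem_sep_iff,
    pow_char_eq_self_iff_exists_intCast, ← exists_and_left]
  refine exists_congr fun n ↦ ?_
  rw [map_intCast]
  exact and_congr_left fun h ↦ by rw [← h, hroot]

variable {S G : Type*} [CommRing S] [IsDomain S] [Group G] [MulSemiringAction G S]

theorem card_rootSet_zmod_eq_card_fixed {p : ℕ} [Fact p.Prime] {P : Ideal S} [P.IsPrime]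
    [P.LiesOver (span {(p : ℤ)})] {σ : G} (hσ : IsArithFrobAt ℤ σ P) {m : ℤ[X]} (hm : m.Monic)
    (hsplit : (m.map (algebraMap ℤ S)).Splits)
    (hinj : Set.InjOn (Ideal.Quotient.mk P) (m.rootSet S)) :
    (m.rootSet (ZMod p)).ncard = {x ∈ m.rootSet S | σ • x = x}.ncard := by
  have := charP_quotient_of_liesOver p P
  have hfrob (x : S) : Ideal.Quotient.mk P (σ • x) = Ideal.Quotient.mk P x ^ p := by
    have hcard : Nat.card (ℤ ⧸ P.under ℤ) = p := by
      rw [← P.over_def (span {(p : ℤ)}), Nat.card_congr (Int.quotientSpanNatEquivZMod p).toEquiv,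
        Nat.card_zmod]
    rw [← hcard]
    exact hσ.mk_apply x
  have hroots : Ideal.Quotient.mk P '' m.rootSet S = m.rootSet (S ⧸ P) :=
    hsplit.image_rootSet_of_map_ne_zero (Ideal.Quotient.mkₐ ℤ P) (hm.map _).ne_zero
  have himage : Ideal.Quotient.mk P '' {x ∈ m.rootSet S | σ • x = x} =
      {y ∈ m.rootSet (S ⧸ P) | y ^ p = y} := by
    rw [← hroots]
    ext y
    constructor
    · rintro ⟨x, ⟨hx, hfix⟩, rfl⟩
      exact ⟨⟨x, hx, rfl⟩, by rw [← hfrob, hfix]⟩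
    · rintro ⟨⟨x, hx, rfl⟩, hfix⟩
      exact ⟨x, ⟨hx, hinj (smul_mem_rootSet σ hx) hx (by rw [hfrob, hfix])⟩, rfl⟩
  rw [← (hinj.mono (Set.sep_subset _ _)).ncard_image, himage,
    ← image_castHom_rootSet (D := S ⧸ P) p hm, Set.ncard_image_of_injective _ (RingHom.injective _)]

theorem exists_forall_not_dvd_injOn_mk [Algebra.IsIntegral ℤ S] (Z : Set S) (hZ : Z.Finite) :
    ∃ N : ℕ, N ≠ 0 ∧ ∀ (p : ℕ) (P : Ideal S) [P.LiesOver (span {(p : ℤ)})], ¬ p ∣ N →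
      Set.InjOn (Ideal.Quotient.mk P) Z := by
  classical
  set D : S := ∏ z ∈ hZ.toFinset.offDiag, (z.1 - z.2)
  have hD0 : D ≠ 0 := Finset.prod_ne_zero_iff.2 fun z hz ↦
    sub_ne_zero.2 (Finset.mem_offDiag.1 hz).2.2
  obtain ⟨N, hN, hN0⟩ := (Submodule.ne_bot_iff _).1 <| comap_ne_bot_of_integral_mem (R := ℤ) hD0
    (mem_span_singleton_self D) (Algebra.IsIntegral.isIntegral D)
  refine ⟨N.natAbs, Int.natAbs_ne_zero.2 hN0, fun p P _ hpN x hx y hy hxy ↦ ?_⟩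
  by_contra hne
  have hdvd : x - y ∣ D := Finset.dvd_prod_of_mem (fun z : S × S ↦ z.1 - z.2)
    (a := (x, y)) (by simp [hx, hy, hne])
  have hDP : D ∈ P := mem_of_dvd P hdvd (Ideal.Quotient.eq.1 hxy)
  have hNP : algebraMap ℤ S N ∈ P := (span_singleton_le_iff_mem P).2 hDP hN
  rw [← mem_of_liesOver P (span {(p : ℤ)}), mem_span_singleton] at hNP
  exact hpN (Int.natCast_dvd.1 hNP)

end FrobeniusAndRoots

section FrobeniusOver

open Ideal NumberField

/-- `σ` is an arithmetic Frobenius element at some prime ideal of `S` above `p`. -/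
def IsFrobeniusOver (S : Type*) {G : Type*} [CommRing S] [Group G] [MulSemiringAction G S]
    (p : ℕ) (σ : G) : Prop :=
  ∃ P : Ideal S, P.IsPrime ∧ P.LiesOver (span {(p : ℤ)}) ∧ IsArithFrobAt ℤ σ P

theorem exists_isFrobeniusOver (L : Type*) [Field L] [NumberField L] [IsGalois ℚ L] {p : ℕ}
    (hp : p.Prime) : ∃ σ : L ≃ₐ[ℚ] L, IsFrobeniusOver (𝓞 L) p σ := by
  have : (span {(p : ℤ)}).IsPrime :=
    (span_singleton_prime (mod_cast hp.ne_zero)).2 (Nat.prime_iff_prime_int.1 hp)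
  obtain ⟨⟨P, hP, hPp⟩⟩ := (span {(p : ℤ)}).nonempty_primesOver (S := 𝓞 L)
  have hP0 : P ≠ ⊥ := ne_bot_of_liesOver_of_ne_bot (p := span {(p : ℤ)})
    (by simpa using hp.ne_zero) P
  have := finiteQuotientOfFreeOfNeBot P hP0
  obtain ⟨σ, hσ⟩ := IsArithFrobAt.exists_of_isInvariant ℤ (L ≃ₐ[ℚ] L) P
  exact ⟨σ, P, hP, hPp, hσ⟩

theorem exists_card_rootSet_zmod_eq_card_fixed {S G : Type*} [CommRing S] [IsDomain S] [Group G]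
    [MulSemiringAction G S] [Algebra.IsIntegral ℤ S] {m : ℤ[X]} (hm : m.Monic)
    (hsplit : (m.map (algebraMap ℤ S)).Splits) :
    ∃ N ≠ 0, ∀ (p : ℕ) [Fact p.Prime] (σ : G), ¬ p ∣ N → IsFrobeniusOver S p σ →
      (m.rootSet (ZMod p)).ncard = {x ∈ m.rootSet S | σ • x = x}.ncard := by
  obtain ⟨N, hN, hinj⟩ := exists_forall_not_dvd_injOn_mk (m.rootSet S) (m.rootSet_finite S)
  exact ⟨N, hN, fun p _ σ hpN ⟨P, _, _, hσ⟩ ↦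
    card_rootSet_zmod_eq_card_fixed hσ hm hsplit (hinj p P hpN)⟩

theorem splits_map_of_isIntegralClosure {R S K : Type*} [CommRing R] [CommRing S] [IsDomain S]
    [Field K] [Algebra R S] [Algebra S K] [Algebra R K] [IsScalarTower R S K]
    [IsIntegralClosure S R K] {m : R[X]} (hm : m.Monic) (h : (m.map (algebraMap R K)).Splits) :
    (m.map (algebraMap R S)).Splits := by
  rw [IsScalarTower.algebraMap_eq R S K, ← Polynomial.map_map] at h
  refine h.of_splits_map_of_injective (IsIntegralClosure.algebraMap_injective S R K) fun a ha ↦ ?_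
  refine (IsIntegralClosure.isIntegral_iff (R := R)).1 ⟨m, hm, ?_⟩
  rw [Polynomial.map_map, ← IsScalarTower.algebraMap_eq, mem_roots', IsRoot, eval_map] at ha
  exact ha.2

theorem splits_integralNormalization {K : Type*} [Field K] {q : K[X]} (hq : q.Splits) :
    q.integralNormalization.Splits := by
  obtain rfl | hq0 := eq_or_ne q 0
  · simp
  refine (hq.scaleRoots q.leadingCoeff).of_dvd ?_
    ⟨_, (integralNormalization_mul_C_leadingCoeff q).symm⟩
  exact scaleRoots_ne_zero hq0 _

theorem exists_fixed_root_of_dvd_eval {L : Type*} [Field L] [CharZero L] {h : ℤ[X]}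
    (hsplit : (h.map (algebraMap ℤ L)).Splits) :
    ∃ M ≠ 0, ∀ p : ℕ, p.Prime → ¬ p ∣ M → ∀ σ : L ≃ₐ[ℚ] L, IsFrobeniusOver (𝓞 L) p σ →
      ∀ b : ℤ, (p : ℤ) ∣ h.eval b → ∃ α : L, aeval α h = 0 ∧ σ α = α := by
  obtain rfl | h0 := eq_or_ne h 0
  · exact ⟨1, one_ne_zero, fun _ _ _ _ _ _ _ ↦ ⟨0, by simp⟩⟩
  obtain ⟨c, rfl⟩ | hdeg := (Nat.eq_zero_or_pos h.natDegree).imp_left natDegree_eq_zero.1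
  · refine ⟨c.natAbs, by simpa using h0, fun p _ hpc _ _ b hb ↦ absurd ?_ hpc⟩
    rwa [eval_C, Int.natCast_dvd] at hb
  set m := h.integralNormalization
  have hm : m.Monic := monic_integralNormalization h0
  have hc : (algebraMap ℤ L) h.leadingCoeff ≠ 0 := by simpa
  have hmsplit : (m.map (algebraMap ℤ (𝓞 L))).Splits :=
    splits_map_of_isIntegralClosure (K := L) hm <| by
      rw [← integralNormalization_map _ _ hc]
      exact splits_integralNormalization hsplit
  obtain ⟨M, hM, hcard⟩ := exists_card_rootSet_zmod_eq_card_fixed (G := L ≃ₐ[ℚ] L) hm hmsplit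
  refine ⟨M, hM, fun p hp hpM σ hσ b hb ↦ ?_⟩
  have := Fact.mk hp
  have hb0 : aeval (algebraMap ℤ (ZMod p) b) h = 0 := by
    rw [aeval_algebraMap_apply_eq_algebraMap_eval]
    exact (ZMod.intCast_zmod_eq_zero_iff_dvd _ _).2 hb
  have hroot : algebraMap ℤ (ZMod p) h.leadingCoeff * algebraMap ℤ (ZMod p) b ∈
      m.rootSet (ZMod p) := by
    rw [mem_rootSet', and_iff_right (hm.map _).ne_zero, aeval_def,
      integralNormalization_eval₂_leadingCoeff_mul hdeg, ← aeval_def, hb0, mul_zero]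
  have hpos : 0 < {x ∈ m.rootSet (𝓞 L) | σ • x = x}.ncard :=
    hcard p σ hpM hσ ▸ (Set.ncard_pos (m.rootSet_finite _)).2 ⟨_, hroot⟩
  obtain ⟨x, hx, hfix⟩ := (Set.ncard_pos ((m.rootSet_finite _).subset (Set.sep_subset _ _))).1 hpos
  have hfixL : σ x = x := congrArg (algebraMap (𝓞 L) L) hfix
  refine ⟨x / algebraMap ℤ L h.leadingCoeff, ?_, by simp [hfixL]⟩
  have hxL : aeval (algebraMap (𝓞 L) L x) m = 0 := by
    rw [aeval_algebraMap_apply, aeval_eq_zero_of_mem_rootSet hx, map_zero]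
  rw [← mul_div_cancel₀ (algebraMap (𝓞 L) L x) hc, aeval_def,
    integralNormalization_eval₂_leadingCoeff_mul hdeg] at hxL
  exact (mul_eq_zero.1 hxL).resolve_left (pow_ne_zero _ hc)

end FrobeniusOver

section PrimeIdealsAndRoots

open Ideal NumberField UniqueFactorizationMonoid

theorem absNorm_eq_prime_iff {R : Type*} [CommRing R] [IsDedekindDomain R] [Module.Free ℤ R]
    [Module.Finite ℤ R] {p : ℕ} (hp : p.Prime) {I : Ideal R} :
    absNorm I = p ↔ I ∈ primesOver (span {(p : ℤ)}) R ∧ I.inertiaDeg ℤ = 1 := by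
  have hdeg (hI : I ∈ primesOver (span {(p : ℤ)}) R) : absNorm I = p ↔ I.inertiaDeg ℤ = 1 := by
    obtain ⟨_, _⟩ := hI
    rw [← pow_inertiaDeg p I, Nat.pow_eq_self_iff hp.one_lt]
  refine ⟨fun h ↦ ?_, fun ⟨hI, h⟩ ↦ (hdeg hI).2 h⟩
  have hprime : (absNorm I).Prime := h ▸ hp
  have hI : I ∈ primesOver (span {(p : ℤ)}) R :=
    ⟨isPrime_of_irreducible_absNorm hprime, ⟨h ▸ span_singleton_absNorm hprime⟩⟩
  exact ⟨hI, (hdeg hI).1 h⟩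

theorem setOf_normalizedFactors_natDegree_eq_one {F : Type*} [Field F] [DecidableEq F] {q : F[X]}
    (hq : q ≠ 0) :
    {Q | Q ∈ normalizedFactors q ∧ Q.natDegree = 1} = (fun a ↦ X - C a) '' q.rootSet F := by
  ext Q
  simp only [Set.mem_ofPred_eq, Set.mem_image, mem_rootSet, Polynomial.mem_normalizedFactors_iff hq]
  constructor
  · rintro ⟨⟨-, hmonic, hdvd⟩, hdeg⟩
    have hQ : Q = X - C (-Q.coeff 0) := by
      rw [map_neg, sub_neg_eq_add]
      exact hmonic.eq_X_add_C hdeg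
    refine ⟨-Q.coeff 0, ⟨hq, ?_⟩, hQ.symm⟩
    rwa [hQ, dvd_iff_isRoot, IsRoot, ← coe_aeval_eq_eval] at hdvd
  · rintro ⟨a, ⟨-, ha⟩, rfl⟩
    refine ⟨⟨irreducible_X_sub_C a, monic_X_sub_C a, dvd_iff_isRoot.2 ?_⟩, natDegree_X_sub_C a⟩
    rwa [IsRoot, ← coe_aeval_eq_eval]

variable {K : Type*} [Field K] [NumberField K]

theorem card_idealsOfNorm_eq_card_rootSet {θ : 𝓞 K} {p : ℕ} [hp : Fact p.Prime]
    (hθ : ¬ p ∣ RingOfIntegers.exponent θ) :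
    (idealsOfNorm (𝓞 K) p).card = ((minpoly ℤ θ).rootSet (ZMod p)).ncard := by
  classical
  set q := (minpoly ℤ θ).map (algebraMap ℤ (ZMod p))
  let e := NumberField.Ideal.primesOverSpanEquivMonicFactorsMod hθ
  have hroots : (minpoly ℤ θ).rootSet (ZMod p) = q.rootSet (ZMod p) := by
    simp [q, rootSet_def, aroots_def]
  rw [hroots, ← Set.ncard_image_of_injective (f := fun a ↦ X - C a) _ fun a b h ↦ by simpa using h,
    ← setOf_normalizedFactors_natDegree_eq_one ((minpoly.monic θ.isIntegral).map _).ne_zero,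
    ← Set.ncard_coe_finset]
  have hmem {Q} (hQ : Q ∈ normalizedFactors q) : Q ∈ RingOfIntegers.monicFactorsMod θ p :=
    Multiset.mem_toFinset.2 hQ
  have hdeg (P : primesOver (span {(p : ℤ)}) (𝓞 K)) :
      P.1.inertiaDeg ℤ = (e P : (ZMod p)[X]).natDegree := by
    rw [← NumberField.Ideal.inertiaDeg_primesOverSpanEquivMonicFactorsMod_symm_apply' hθ (e P).2,
      Subtype.coe_eta, e.symm_apply_apply]
  have hprimes (I : Ideal (𝓞 K)) (hI : I ∈ (idealsOfNorm (𝓞 K) p : Set (Ideal (𝓞 K)))) :=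
    (absNorm_eq_prime_iff hp.out).1 (mem_idealsOfNorm.1 hI)
  refine Set.ncard_congr (fun I hI ↦ (e ⟨I, (hprimes I hI).1⟩ : (ZMod p)[X])) (fun I hI ↦ ?_)
    (fun I J hI hJ h ↦ ?_) fun Q hQ ↦ ?_
  · exact ⟨Multiset.mem_toFinset.1 (e _).2, (hdeg _).symm.trans (hprimes I hI).2⟩
  · exact congrArg Subtype.val (e.injective (Subtype.ext h))
  · refine ⟨e.symm ⟨Q, hmem hQ.1⟩, ?_, by simp⟩
    rw [Finset.mem_coe, mem_idealsOfNorm, absNorm_eq_prime_iff hp.out, hdeg]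
    exact ⟨Subtype.prop _, by simpa using hQ.2⟩

theorem exponent_ne_zero_of_adjoin_eq_top {θ : 𝓞 K}
    (hθ : Algebra.adjoin ℚ {algebraMap (𝓞 K) K θ} = ⊤) : RingOfIntegers.exponent θ ≠ 0 := by
  have hderiv : aeval θ (minpoly ℤ θ).derivative ≠ 0 := fun h ↦
    (minpoly.IsIntegrallyClosed.degree_le_of_ne_zero
      (derivative_ne_zero.2 (minpoly.natDegree_pos θ.isIntegral).ne') h).not_gt
      (degree_derivative_lt (minpoly.ne_zero θ.isIntegral))
  have hcond : conductor ℤ θ ≠ ⊥ := by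
    intro h
    have := conductor_mul_differentIdeal ℤ ℚ K θ hθ
    rw [h, Ideal.bot_mul, eq_comm, span_singleton_eq_bot] at this
    exact hderiv this
  rw [RingOfIntegers.exponent, Ne, absNorm_eq_zero_iff]
  exact mt eq_bot_of_comap_eq_bot hcond

theorem exists_adjoin_ringOfIntegers_eq_top (K : Type*) [Field K] [NumberField K] :
    ∃ θ : 𝓞 K, Algebra.adjoin ℚ {algebraMap (𝓞 K) K θ} = ⊤ := by
  obtain ⟨α, hα⟩ := Field.exists_primitive_element ℚ K
  have halg : IsAlgebraic ℤ α :=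
    (IsFractionRing.isAlgebraic_iff ℤ ℚ K).2 (Algebra.IsAlgebraic.isAlgebraic α)
  obtain ⟨y, hy, hyα⟩ := halg.exists_integral_multiple
  refine ⟨⟨y • α, hyα⟩, ?_⟩
  rw [eq_top_iff, ← Algebra.adjoin_eq_top_of_primitive_element
    (Algebra.IsAlgebraic.isAlgebraic α) hα]
  refine Algebra.adjoin_singleton_le ?_
  have hα_eq : α = (y : ℚ)⁻¹ • (y • α) := by
    rw [← Int.cast_smul_eq_zsmul ℚ, inv_smul_smul₀ (mod_cast hy)]
  nth_rw 2 [hα_eq]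
  exact Subalgebra.smul_mem _ (Algebra.self_mem_adjoin_singleton ℚ (y • α)) _

end PrimeIdealsAndRoots

section OrbitCounting

open MulAction
open scoped Pointwise

variable {G X : Type*} [Group G] [MulAction G X]

theorem ncard_setOf_smul_eq_smul (g : G) (x : X) :
    {a : G | a • x = g • x}.ncard = Nat.card (stabilizer G x) := by
  have hcoset : {a : G | a • x = g • x} = g • (stabilizer G x : Set G) := by
    ext a
    rw [Set.mem_smul_set_iff_inv_smul_mem, SetLike.mem_coe, mem_stabilizer_iff, smul_eq_mul,
      mul_smul, inv_smul_eq_iff, Set.mem_ofPred]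
  rw [hcoset, Set.ncard_smul_set]
  rfl

theorem conjSum_indicator_stabilizer [Fintype G] (x : X) (s : G) :
    conjSum ((stabilizer G x : Set G).indicator 1) s =
      Nat.card (stabilizer G x) * {y ∈ orbit G x | s • y = y}.ncard := by
  classical
  have hmem (a : G) : a⁻¹ * s * a ∈ stabilizer G x ↔ s • a • x = a • x := by
    rw [mem_stabilizer_iff, mul_smul, mul_smul, inv_smul_eq_iff]
  have hfin : {y ∈ orbit G x | s • y = y}.Finite := (Set.finite_range _).subset (Set.sep_subset _ _)
  have hfiber : ∀ y ∈ hfin.toFinset, {a ∈ {a : G | s • a • x = a • x}.toFinset | a • x = y}.card =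
      Nat.card (stabilizer G x) := by
    intro y hy
    obtain ⟨⟨g, rfl⟩, hg⟩ := hfin.mem_toFinset.1 hy
    rw [← ncard_setOf_smul_eq_smul g x, ← Set.ncard_coe_finset]
    congr 1
    ext a
    simp only [Finset.coe_filter, Set.mem_toFinset, Set.mem_ofPred_eq, and_iff_right_iff_imp]
    exact fun ha ↦ ha ▸ hg
  have hcard : {a : G | s • a • x = a • x}.toFinset.card =
      {y ∈ orbit G x | s • y = y}.ncard * Nat.card (stabilizer G x) := by
    rw [Finset.card_eq_sum_card_fiberwise (f := (· • x)) (t := hfin.toFinset) fun a ha ↦ ?_,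
      Finset.sum_const_nat hfiber, Set.ncard_eq_toFinset_card _ hfin]
    exact hfin.mem_toFinset.2 ⟨mem_orbit x a, by simpa using ha⟩
  rw [mul_comm, ← Nat.cast_mul, ← hcard, conjSum]
  simp only [Set.indicator_apply, SetLike.mem_coe, hmem, Pi.one_apply, Finset.sum_boole]
  congr 2
  ext
  simp

end OrbitCounting

section FixedFieldFrobenius

open NumberField

variable {L : Type*} [Field L] [NumberField L]

theorem rootSet_minpoly_eq_orbit [IsGalois ℚ L] (β : 𝓞 L) :
    (minpoly ℤ β).rootSet (𝓞 L) = MulAction.orbit (L ≃ₐ[ℚ] L) β := by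
  ext x
  have hβ : IsIntegral ℚ (β : L) := Algebra.IsIntegral.isIntegral _
  have hroot : x ∈ (minpoly ℤ β).rootSet (𝓞 L) ↔ (x : L) ∈ (minpoly ℚ (β : L)).rootSet L := by
    rw [mem_rootSet, mem_rootSet, and_iff_right (minpoly.ne_zero β.isIntegral),
      and_iff_right (minpoly.ne_zero hβ),
      minpoly.isIntegrallyClosed_eq_field_fractions ℚ L β.isIntegral, aeval_map_algebraMap,
      aeval_algebraMap_apply, map_eq_zero_iff _ RingOfIntegers.coe_injective]
  rw [hroot, ← isConjRoot_iff_mem_minpoly_rootSet hβ, IsConjRoot.comm, isConjRoot_iff_orbitRel,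
    MulAction.orbitRel_apply]
  exact exists_congr fun g ↦ (RingOfIntegers.ext_iff (x := g • β)).symm

theorem stabilizer_eq_fixingSubgroup_of_adjoin_eq_top {K : IntermediateField ℚ L} {θ : 𝓞 K}
    (hθ : Algebra.adjoin ℚ {algebraMap (𝓞 K) K θ} = ⊤) :
    MulAction.stabilizer (L ≃ₐ[ℚ] L) (algebraMap (𝓞 K) (𝓞 L) θ) = K.fixingSubgroup := by
  ext g
  rw [MulAction.mem_stabilizer_iff, IntermediateField.mem_fixingSubgroup_iff]
  refine ⟨fun h ↦ ?_, fun h ↦ RingOfIntegers.ext (h _ (θ : K).2)⟩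
  have hg : g.toAlgHom.comp K.val = K.val := by
    refine AlgHom.ext_of_adjoin_eq_top hθ ?_
    rintro _ rfl
    exact congrArg (algebraMap (𝓞 L) L) h
  exact fun x hx ↦ DFunLike.congr_fun hg ⟨x, hx⟩

variable [IsGalois ℚ L]

theorem splits_minpoly_ringOfIntegers (β : 𝓞 L) :
    ((minpoly ℤ β).map (algebraMap ℤ (𝓞 L))).Splits := by
  refine splits_map_of_isIntegralClosure (K := L) (minpoly.monic β.isIntegral) ?_
  rw [IsScalarTower.algebraMap_eq ℤ ℚ L, ← Polynomial.map_map,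
    ← minpoly.isIntegrallyClosed_eq_field_fractions ℚ L β.isIntegral]
  exact Normal.splits inferInstance _

theorem exists_conjSum_indicator_eq_card_idealsOfNorm (H : Subgroup (L ≃ₐ[ℚ] L)) :
    ∃ N ≠ 0, ∀ p : ℕ, p.Prime → ¬ p ∣ N → ∀ σ : L ≃ₐ[ℚ] L, IsFrobeniusOver (𝓞 L) p σ →
      conjSum ((H : Set (L ≃ₐ[ℚ] L)).indicator 1) σ =
        Nat.card H * (idealsOfNorm (𝓞 (IntermediateField.fixedField H)) p).card := by
  obtain ⟨θ, hθ⟩ := exists_adjoin_ringOfIntegers_eq_top (IntermediateField.fixedField H)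
  set β := algebraMap _ (𝓞 L) θ
  have hβ : minpoly ℤ β = minpoly ℤ θ :=
    minpoly.algebraMap_eq (FaithfulSMul.algebraMap_injective _ (𝓞 L)) θ
  have hstab : MulAction.stabilizer (L ≃ₐ[ℚ] L) β = H := by
    rw [stabilizer_eq_fixingSubgroup_of_adjoin_eq_top hθ,
      IntermediateField.fixingSubgroup_fixedField]
  obtain ⟨N, hN, hcard⟩ := exists_card_rootSet_zmod_eq_card_fixed (G := L ≃ₐ[ℚ] L)
    (minpoly.monic β.isIntegral) (splits_minpoly_ringOfIntegers β)
  refine ⟨N * RingOfIntegers.exponent θ,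
    mul_ne_zero hN (exponent_ne_zero_of_adjoin_eq_top hθ), fun p hp hpN σ hσ ↦ ?_⟩
  have := Fact.mk hp
  rw [card_idealsOfNorm_eq_card_rootSet fun h ↦ hpN (h.mul_left _), ← hβ,
    hcard p σ (fun h ↦ hpN (h.mul_right _)) hσ, rootSet_minpoly_eq_orbit, ← hstab,
    conjSum_indicator_stabilizer]

theorem isEquidistributedFor_conjSum_subgroup {σ : ℕ → L ≃ₐ[ℚ] L}
    (hσ : ∀ p, p.Prime → IsFrobeniusOver (𝓞 L) p (σ p)) (H : Subgroup (L ≃ₐ[ℚ] L)) :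
    IsEquidistributedFor σ (conjSum ((H : Set (L ≃ₐ[ℚ] L)).indicator 1)) := by
  classical
  obtain ⟨N, hN, hcard⟩ := exists_conjSum_indicator_eq_card_idealsOfNorm H
  have hmean := ((hasPrimeMean_card_idealsOfNorm (IntermediateField.fixedField H)).const_mul
    (Nat.card H : ℝ)).congr_of_not_dvd hN fun p hp hpN ↦ hcard p hp hpN (σ p) (hσ p hp)
  have hsum : ∑ s, (H : Set (L ≃ₐ[ℚ] L)).indicator (1 : (L ≃ₐ[ℚ] L) → ℝ) s = Nat.card H := by
    simp [Set.indicator_apply, Fintype.card_subtype]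
  rwa [IsEquidistributedFor, sum_conjSum, hsum,
    mul_div_cancel_left₀ _ (Nat.cast_ne_zero.2 Fintype.card_ne_zero), ← mul_one (Nat.card H : ℝ)]

theorem isEquidistributedFor_indicator_exists_fixed_root {σ : ℕ → L ≃ₐ[ℚ] L}
    (hσ : ∀ p, p.Prime → IsFrobeniusOver (𝓞 L) p (σ p)) (h : ℤ[X]) :
    IsEquidistributedFor σ ({s | ∃ α : L, aeval α h = 0 ∧ s α = α}.indicator 1) := by
  refine .indicator (isEquidistributedFor_conjSum_subgroup hσ) (fun g s ↦ ?_) ?_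
  · refine Equiv.exists_congr g.toEquiv fun α ↦ and_congr ?_ ?_
    · exact (aeval_algHom_apply (g.toAlgHom.restrictScalars ℤ) α h ▸ map_eq_zero g).symm
    · exact inv_smul_eq_iff (g := g) (a := s (g α)) (b := α)
  · rintro s ⟨α, hα, hs⟩ t hst
    have hle : Subgroup.zpowers s ≤ MulAction.stabilizer (L ≃ₐ[ℚ] L) α := Subgroup.zpowers_le.2 hs
    exact ⟨α, hα, hle (hst ▸ Subgroup.mem_zpowers t)⟩

end FixedFieldFrobenius

section RootDensity

open NumberField

theorem HasPrimeMean.indicator_union_setOf_dvd {T : Set ℕ} {l : ℝ}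
    (hT : HasPrimeMean (T.indicator 1) l) {M : ℕ} (hM : M ≠ 0) :
    HasPrimeMean ((T ∪ {p | p ∣ M}).indicator 1) l := by
  classical
  refine hT.congr_of_not_dvd hM fun p _ hpM ↦ ?_
  simp [Set.indicator_apply, hpM]

theorem exists_hasPrimeMean_forall_dvd_eval_mem {L : Type*} [Field L] [NumberField L] [IsGalois ℚ L]
    {h : ℤ[X]} (hsplit : (h.map (algebraMap ℤ L)).Splits) :
    ∃ T : Set ℕ, (∀ p : ℕ, p.Prime → ∀ b : ℤ, (p : ℤ) ∣ h.eval b → p ∈ T) ∧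
      HasPrimeMean (T.indicator 1) (Nat.card {s : L ≃ₐ[ℚ] L // ∃ α : L, aeval α h = 0 ∧ s α = α} /
        Nat.card (L ≃ₐ[ℚ] L)) := by
  classical
  obtain ⟨M, hM, hfixed⟩ := exists_fixed_root_of_dvd_eval hsplit
  have hfrob (p : ℕ) : ∃ s : L ≃ₐ[ℚ] L, p.Prime → IsFrobeniusOver (𝓞 L) p s := by
    by_cases hp : p.Prime
    · exact (exists_isFrobeniusOver L hp).imp fun _ hs _ ↦ hs
    · exact ⟨1, fun h ↦ absurd h hp⟩
  choose σ hσ using hfrob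
  set S : Set (L ≃ₐ[ℚ] L) := {s | ∃ α : L, aeval α h = 0 ∧ s α = α}
  have hmean := isEquidistributedFor_indicator_exists_fixed_root hσ h
  have hsum : ∑ s, S.indicator (1 : (L ≃ₐ[ℚ] L) → ℝ) s = Nat.card S := by
    simp [Set.indicator_apply, Fintype.card_subtype]
  rw [IsEquidistributedFor, hsum, ← Nat.card_eq_fintype_card] at hmean
  refine ⟨σ ⁻¹' S ∪ {p | p ∣ M}, fun p hp b hb ↦ ?_, .indicator_union_setOf_dvd hmean hM⟩
  exact or_iff_not_imp_right.2 fun hpM ↦ hfixed p hp hpM (σ p) (hσ p hp) b hb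

theorem exists_hasPrimeMean_forall_dvd_eval_mem_of_isSplittingField (L : Type*) [Field L]
    [iA : Algebra ℚ L] {h : ℤ[X]} [IsSplittingField ℚ L (h.map (Int.castRingHom ℚ))] :
    ∃ T : Set ℕ, (∀ p : ℕ, p.Prime → ∀ b : ℤ, (p : ℤ) ∣ h.eval b → p ∈ T) ∧
      HasPrimeMean (T.indicator 1)
        (Nat.card {s : L ≃ₐ[ℚ] L // ∃ α : L, aeval α (h.map (Int.castRingHom ℚ)) = 0 ∧ s α = α} /
          Nat.card (L ≃ₐ[ℚ] L)) := by
  have : CharZero L := algebraRat.charZero L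
  obtain rfl : iA = DivisionRing.toRatAlgebra := Subsingleton.elim _ _
  have : FiniteDimensional ℚ L := IsSplittingField.finiteDimensional L (h.map (Int.castRingHom ℚ))
  have : NumberField L := ⟨⟩
  have : Normal ℚ L := Normal.of_isSplittingField (h.map (Int.castRingHom ℚ))
  have : IsGalois ℚ L := ⟨⟩
  have hsplit : (h.map (algebraMap ℤ L)).Splits := by
    rw [IsScalarTower.algebraMap_eq ℤ ℚ L, ← Polynomial.map_map]
    exact IsSplittingField.splits L (h.map (Int.castRingHom ℚ))
  have haeval (α : L) : aeval α (h.map (Int.castRingHom ℚ)) = aeval α h :=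
    aeval_map_algebraMap (A := ℚ) α h
  simp_rw [haeval]
  exact exists_hasPrimeMean_forall_dvd_eval_mem hsplit

end RootDensity

section OrbitPrimes

theorem eval_polyIter (f : ℤ[X]) (N : ℕ) (a : ℤ) :
    (polyIter f N).eval a = (fun x ↦ eval x f)^[N] a := by
  induction N with
  | zero => simp [polyIter]
  | succ n ih => rw [polyIter, eval_comp, ih, Function.iterate_succ_apply']

theorem primeCount_setOf_prime (x : ℕ) : primeCount {p | p.Prime} x = (Nat.primesLE x).card := by
  rw [primeCount, Nat.primesLE_eq_filter_range]
  congr!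

theorem limsup_primeCount_div_le {A T : Set ℕ} {l : ℝ} (hA : A ⊆ {p ∈ T | p.Prime})
    (hT : HasPrimeMean (T.indicator 1) l) :
    limsup (fun x ↦ (primeCount A x : ℝ) / primeCount {p | p.Prime} x) atTop ≤ l := by
  classical
  have hcount (x : ℕ) : (primeCount A x : ℝ) ≤ ∑ p ∈ Nat.primesLE x, T.indicator 1 p := by
    simp only [Set.indicator_apply, Pi.one_apply, Finset.sum_boole, Nat.cast_le, primeCount]
    refine Finset.card_le_card fun p hp ↦ ?_
    rw [Finset.mem_filter, Finset.mem_range_succ_iff] at hp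
    exact Finset.mem_filter.2 ⟨Nat.mem_primesLE.2 ⟨hp.1, (hA hp.2).2⟩, (hA hp.2).1⟩
  rw [← Tendsto.limsup_eq hT]
  refine limsup_le_limsup (.of_forall fun x ↦ ?_) ?_ (Tendsto.isBoundedUnder_le hT)
  · simp only [primeCount_setOf_prime]
    gcongr
    exact hcount x
  · exact (isBoundedUnder_of ⟨0, fun x ↦ by positivity⟩).isCoboundedUnder_le

instance (f g : ℤ[X]) (N : ℕ) : IsSplittingField ℚ (splittingFieldIter f g N)
    ((g.comp (polyIter f N)).map (Int.castRingHom ℚ)) :=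
  IsSplittingField.splittingField _

theorem limsup_primeCount_transOrbitPrimes_div_le_fixedRootProportion (f g : ℤ[X]) (a₀ : ℤ)
    (N : ℕ) :
    limsup (fun x ↦ (primeCount (transOrbitPrimes g f a₀) x : ℝ) / primeCount {p | p.Prime} x)
      atTop ≤ fixedRootProportion f g N := by
  obtain ⟨T, hT, hmean⟩ := exists_hasPrimeMean_forall_dvd_eval_mem_of_isSplittingField
    (splittingFieldIter f g N) (h := g.comp (polyIter f N))
  set v : ℕ → ℤ := fun n ↦ eval ((fun x ↦ eval x f)^[n] a₀) g
  have hM : ∏ n ∈ Finset.range N with v n ≠ 0, (v n).natAbs ≠ 0 :=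
    Finset.prod_ne_zero_iff.2 fun n hn ↦ Int.natAbs_ne_zero.2 (Finset.mem_filter.1 hn).2
  refine limsup_primeCount_div_le ?_ (hmean.indicator_union_setOf_dvd hM)
  rintro p ⟨hp, n, hn0, hn⟩
  refine ⟨?_, hp⟩
  obtain hnN | hNn := lt_or_ge n N
  · exact .inr ((Int.natCast_dvd.1 hn).trans (Finset.dvd_prod_of_mem (fun n ↦ (v n).natAbs)
      (Finset.mem_filter.2 ⟨Finset.mem_range.2 hnN, hn0⟩)))
  · refine .inl (hT p hp ((fun x ↦ eval x f)^[n - N] a₀) ?_)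
    rwa [eval_comp, eval_polyIter, ← Function.iterate_add_apply, Nat.add_sub_cancel' hNn]

theorem fixedRootProportion_le_one (f g : ℤ[X]) (N : ℕ) : fixedRootProportion f g N ≤ 1 := by
  have : FiniteDimensional ℚ (splittingFieldIter f g N) :=
    IsSplittingField.finiteDimensional _ ((g.comp (polyIter f N)).map (Int.castRingHom ℚ))
  exact div_le_one_of_le₀ (mod_cast Finite.card_subtype_le _) (Nat.cast_nonneg _)

theorem upper_density_le_liminf_fixedRootProportion_general (f g : ℤ[X]) (a₀ : ℤ) :
    limsup (fun x : ℕ ↦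
        (primeCount (transOrbitPrimes g f a₀) x : ℝ) / (primeCount {p | p.Prime} x : ℝ))
      atTop ≤ liminf (fun N : ℕ ↦ fixedRootProportion f g N) atTop :=
  le_liminf_of_le
    (isBoundedUnder_of ⟨1, fixedRootProportion_le_one f g⟩).isCoboundedUnder_ge
    (.of_forall (limsup_primeCount_transOrbitPrimes_div_le_fixedRootProportion f g a₀))

end OrbitPrimes

theorem upper_density_le_liminf_fixedRootProportion
    (f g : Polynomial ℤ) (hf : 0 < f.natDegree) (hg : 0 < g.natDegree)
    (hsep : ∀ n : ℕ, ((g.comp (polyIter f n)).map (Int.castRingHom ℚ)).Separable)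
    (a₀ : ℤ) :
    limsup (fun x : ℕ =>
        (primeCount (transOrbitPrimes g f a₀) x : ℝ) / (primeCount {p | p.Prime} x : ℝ))
      atTop ≤ liminf (fun N : ℕ => fixedRootProportion f g N) atTop :=
  upper_density_le_liminf_fixedRootProportion_general f g a₀
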